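/- arXiv:2006.15944 — 8 statements merged into one kernel-verified Lean document; each statement's English description precedes it below -/
import Mathlib

section
/- Let N ≥ 3 be an integer, let 0 < α < 4/(N−2), and set α₀ = 4/(N−4+2√(N−1)), β = (2/α)(N−2−2/α), and Λ = (1/α − (N−2)/4)² − ((N−2)/2 − 1/α). Then the following three conditions are equivalent: (1) α < α₀; (2) Λ > 0; (3) β(α+1) < (N−2)²/4. -/
theorem stmt_5 (N : ℕ) (hN : 3 ≤ N) (α : ℝ) (hα : 0 < α) (hα4 : α < 4 / ((N : ℝ) - 2))
    (α₀ β Λ : ℝ)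
    (hα₀ : α₀ = 4 / ((N : ℝ) - 4 + 2 * Real.sqrt ((N : ℝ) - 1)))
    (hβ : β = 2 / α * ((N : ℝ) - 2 - 2 / α))
    (hΛ : Λ = (1 / α - ((N : ℝ) - 2) / 4) ^ 2 - (((N : ℝ) - 2) / 2 - 1 / α)) :
    (α < α₀ ↔ 0 < Λ) ∧ (0 < Λ ↔ β * (α + 1) < ((N : ℝ) - 2) ^ 2 / 4) := by
  have hN' : (3 : ℝ) ≤ N := by exact_mod_cast hN
  set n : ℝ := (N : ℝ) with hn
  have hs2 : Real.sqrt (n - 1) ^ 2 = n - 1 := Real.sq_sqrt (by linarith)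
  have hs1 : 1 ≤ Real.sqrt (n - 1) := Real.one_le_sqrt.mpr (by linarith)
  set s := Real.sqrt (n - 1) with hs
  have hden : 0 < n - 4 + 2 * s := by linarith
  have hxα : 1 / α * α = 1 := by field_simp
  have hx0 : 0 < 1 / α := by positivity
  have h2 : 2 / α = 2 * (1 / α) := by ring
  rw [lt_div_iff₀ (by linarith)] at hα4
  rw [h2] at hβ
  have hα0 : α < α₀ ↔ n - 4 + 2 * s < 4 * (1 / α) := by
    rw [hα₀, lt_div_iff₀ hden, mul_one_div, lt_div_iff₀ hα, mul_comm]
  have hxm : n - 2 < 4 * (1 / α) := by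
    rw [mul_one_div, lt_div_iff₀ hα]; linarith
  generalize 1 / α = x at *
  have hfac : Λ = (x - (n - 4 + 2 * s) / 4) * (x - (n - 2) / 4 + (s + 1) / 2) := by
    rw [hΛ]; linear_combination (1 / 4) * hs2
  have hb : (n - 2) ^ 2 / 4 - β * (α + 1) = 4 * Λ := by
    rw [hβ, hΛ]; linear_combination (-2 * (n - 2 - 2 * x)) * hxα
  refine ⟨?_, ?_⟩
  · rw [hα0, hfac, mul_pos_iff_of_pos_right (by linarith)]
    constructor <;> intro h <;> linarith
  · constructor <;> intro h <;> linarith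
end

section
/- Suppose K : (0,∞)×ℝ^N×ℝ^N → ℝ is measurable and there exist constants A, a > 0 such that 0 < K(τ,x,y) ≤ A τ^{−N/2} exp(−|x−y|²/(aτ)) h(τ,x) h(τ,y) for all τ>0 and x,y≠0. Let c ≥ 1, 0 ≤ b ≤ 2, and κ ≥ 0 (with κ > 0 if b = 2) satisfy b + (c−1)η − κ < 2. Then b + (c+1)η − κ < N (since 2η < N−2), so one may fix ε with 0 ≤ ε < min{1/4, N − (b + (1+c)η − κ)}. Define Ψ(t,x) = h(t,x)^c |x|^{−b} (|x|/(|x|+√t))^κ for t>0, x≠0. Then for every real m > κ−2 there exists a constant B_m > 0 such that for every 0 < r < ∞, every t > 0 and every x ≠ 0, ∫₀^t ∫_{ℝ^N} K(t−s,x,y) 1_{{|y|<r}}(y) Ψ(s,y) s^{m/2} dy ds ≤ B_m r^ε t^{(m+2−b)/2} |x|^{−ε} h(t,x); moreover, when ε = 0 the same estimate holds with the factor 1_{{|y|<r}} omitted and r^ε replaced by 1, and B_m → 0 as m → ∞. -/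
open MeasureTheory Filter

noncomputable section

/-- `N`-dimensional Euclidean space. -/
abbrev Euc (N : ℕ) := EuclideanSpace ℝ (Fin N)

lemma exp_bd (a k : ℝ) (ha : 0 < a) : ∃ M : ℝ, 0 < M ∧ ∀ u : ℝ, 0 ≤ u →
    Real.exp (-u ^ 2 / a) ≤ M * (1 + u) ^ (-k) := by
  obtain ⟨n, hn⟩ := exists_nat_ge k
  refine ⟨n.factorial * Real.exp (1 + a / 4), by positivity, fun u hu => ?_⟩
  have h1 : (1 + u) ^ k ≤ (1 + u) ^ n := by
    rw [← Real.rpow_natCast]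
    exact Real.rpow_le_rpow_of_exponent_le (by linarith) hn
  have h2 : (1 + u) ^ n ≤ n.factorial * Real.exp (1 + u) := by
    have := Real.pow_div_factorial_le_exp (1 + u) (by linarith) n
    rw [div_le_iff₀ (by positivity)] at this
    linarith
  rw [Real.rpow_neg (by linarith), ← div_eq_mul_inv, le_div_iff₀ (by positivity)]
  have h3 : u - u ^ 2 / a ≤ a / 4 := by
    have : a / 4 - (u - u ^ 2 / a) = (u - a / 2) ^ 2 / a := by field_simp; ring
    have h : 0 ≤ (u - a / 2) ^ 2 / a := by positivity
    linarith
  calc Real.exp (-u ^ 2 / a) * (1 + u) ^ k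
      ≤ Real.exp (-u ^ 2 / a) * (n.factorial * Real.exp (1 + u)) := by
        gcongr; exact h1.trans h2
    _ = n.factorial * Real.exp (1 + u - u ^ 2 / a) := by
        rw [mul_left_comm, ← Real.exp_add]; congr 2; ring
    _ ≤ _ := by
        gcongr; linarith

lemma int_ball (N : ℕ) (hN : 3 ≤ N) (σ : ℝ) (hσ : σ < N) :
    IntegrableOn (fun z : Euc N => ‖z‖ ^ (-σ)) (Metric.ball 0 1) := by
  have : Nontrivial (Euc N) := by
    apply Module.nontrivial_of_finrank_pos (R := ℝ)
    simp; omega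
  have := integrableOn_fun_norm_addHaar (E := Euc N) (μ := volume) (f := fun u : ℝ => u ^ (-σ)) (r := 1)
  rw [this]
  have h : IntegrableOn (fun u : ℝ => u ^ ((N : ℝ) - 1 - σ)) (Set.Ioo 0 1) := by
    have := intervalIntegral.intervalIntegrable_rpow' (a := 0) (b := 1) (r := (N : ℝ) - 1 - σ) (by linarith)
    rw [intervalIntegrable_iff_integrableOn_Ioo_of_le (by norm_num)] at this
    exact this
  refine h.congr_fun (fun u hu => ?_) measurableSet_Ioo
  have hu0 : 0 < u := hu.1
  simp only [finrank_euclideanSpace, Fintype.card_fin, smul_eq_mul]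
  rw [← Real.rpow_natCast, ← Real.rpow_add hu0]
  congr 1
  rw [Nat.cast_sub (by omega)]; push_cast; ring

lemma add_rpow_bd (u v p : ℝ) (hu : 0 ≤ u) (hv : 0 ≤ v) (hp : 0 ≤ p) :
    (u + v) ^ p ≤ 2 ^ p * (u ^ p + v ^ p) := by
  have h : u + v ≤ 2 * max u v := by
    have := le_max_left u v
    have := le_max_right u v
    linarith
  calc (u + v) ^ p ≤ (2 * max u v) ^ p := by gcongr
    _ = 2 ^ p * (max u v) ^ p := by rw [Real.mul_rpow (by norm_num) (by positivity)]
    _ ≤ _ := by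
      gcongr
      have : 0 ≤ u ^ p := by positivity
      have : 0 ≤ v ^ p := by positivity
      rcases max_choice u v with h | h <;> rw [h] <;> linarith

lemma gauss1 (N : ℕ) (hN : 3 ≤ N) (a σ : ℝ) (ha : 0 < a) (hσ0 : 0 ≤ σ) (hσ : σ < N) :
    ∃ C : ℝ, 0 < C ∧ ∀ ξ : Euc N,
      Integrable (fun z : Euc N => Real.exp (-‖ξ - z‖ ^ 2 / a) * ‖z‖ ^ (-σ)) ∧
      ∫ z : Euc N, Real.exp (-‖ξ - z‖ ^ 2 / a) * ‖z‖ ^ (-σ) ≤ C * (1 + ‖ξ‖) ^ (-σ) := by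
  obtain ⟨M, hM, hexp⟩ := exp_bd a (σ + (N + 1)) ha
  set φ : Euc N → ℝ := fun w => (1 + ‖w‖) ^ (-((N : ℝ) + 1)) with hφ
  have hφi : Integrable φ := integrable_one_add_norm (by simp)
  set ψ : Euc N → ℝ := (Metric.ball 0 1).indicator (fun z => ‖z‖ ^ (-σ)) with hψ
  have hψi : Integrable ψ := (integrable_indicator_iff measurableSet_ball).2 (int_ball N hN σ hσ)
  have hψ0 : ∀ z, 0 ≤ ψ z := fun z => Set.indicator_nonneg (fun _ _ => by positivity) z
  have hφ0 : ∀ z, 0 ≤ φ z := fun z => by positivity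
  have hφ1 : ∀ z, φ z ≤ 1 := fun z =>
    Real.rpow_le_one_of_one_le_of_nonpos (by linarith [norm_nonneg z]) (by linarith [Nat.cast_nonneg (α := ℝ) N])
  have hG : ∀ ξ : Euc N, Integrable (fun z => 2 ^ σ * M * (2 * φ (ξ - z) + ψ z)) := fun ξ =>
    ((((hφi.comp_sub_left ξ).const_mul 2).add hψi).const_mul _)
  have key : ∀ ξ z : Euc N, z ≠ 0 → Real.exp (-‖ξ - z‖ ^ 2 / a) * ‖z‖ ^ (-σ) ≤
      (1 + ‖ξ‖) ^ (-σ) * (2 ^ σ * M * (2 * φ (ξ - z) + ψ z)) := by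
    intro ξ z hz
    have hz' : 0 < ‖z‖ := norm_pos_iff.2 hz
    have h1 : (1 + ‖ξ‖) ^ σ ≤ (1 + ‖ξ - z‖) ^ σ * (1 + ‖z‖) ^ σ := by
      rw [← Real.mul_rpow (by positivity) (by positivity)]
      gcongr
      have : ‖ξ‖ ≤ ‖ξ - z‖ + ‖z‖ := by
        simpa using norm_add_le (ξ - z) z
      nlinarith [norm_nonneg (ξ - z), norm_nonneg z, mul_nonneg (norm_nonneg (ξ - z)) (norm_nonneg z)]
    have h2 : (1 + ‖z‖) ^ σ * ‖z‖ ^ (-σ) ≤ 2 ^ σ * (1 + ‖z‖ ^ (-σ)) := by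
      calc (1 + ‖z‖) ^ σ * ‖z‖ ^ (-σ) ≤ (2 ^ σ * (1 ^ σ + ‖z‖ ^ σ)) * ‖z‖ ^ (-σ) := by
            gcongr; exact add_rpow_bd _ _ _ (by norm_num) (by positivity) hσ0
        _ = _ := by
            rw [Real.rpow_neg hz'.le, Real.one_rpow]
            have : ‖z‖ ^ σ ≠ 0 := by positivity
            field_simp
            ring
    have h3 : ‖z‖ ^ (-σ) ≤ 1 + ψ z := by
      by_cases hzb : z ∈ Metric.ball (0 : Euc N) 1
      · simp only [hψ, Set.indicator_of_mem hzb]; linarith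
      · simp only [hψ, Set.indicator_of_notMem hzb]
        have : 1 ≤ ‖z‖ := by simpa using hzb
        have := Real.rpow_le_one_of_one_le_of_nonpos this (neg_nonpos.2 hσ0)
        linarith
    have h4 := hexp ‖ξ - z‖ (norm_nonneg _)
    have h5 : (1 + ‖ξ - z‖) ^ (-(σ + (N + 1 : ℝ))) * (1 + ‖ξ - z‖) ^ σ = φ (ξ - z) := by
      rw [hφ, ← Real.rpow_add (by positivity)]; congr 1; ring
    rw [Real.rpow_neg (by positivity : 0 ≤ 1 + ‖ξ‖), inv_mul_eq_div, le_div_iff₀ (by positivity)]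
    calc Real.exp (-‖ξ - z‖ ^ 2 / a) * ‖z‖ ^ (-σ) * (1 + ‖ξ‖) ^ σ
        ≤ (M * (1 + ‖ξ - z‖) ^ (-(σ + (N + 1 : ℝ)))) * ‖z‖ ^ (-σ) *
            ((1 + ‖ξ - z‖) ^ σ * (1 + ‖z‖) ^ σ) := by gcongr
      _ = M * φ (ξ - z) * ((1 + ‖z‖) ^ σ * ‖z‖ ^ (-σ)) := by rw [← h5]; ring
      _ ≤ M * φ (ξ - z) * (2 ^ σ * (1 + (1 + ψ z))) := by
          refine mul_le_mul_of_nonneg_left (h2.trans ?_) (mul_nonneg hM.le (hφ0 _))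
          gcongr
      _ = 2 ^ σ * M * (2 * φ (ξ - z) + φ (ξ - z) * ψ z) := by ring
      _ ≤ _ := by
          gcongr
          exact mul_le_of_le_one_left (hψ0 _) (hφ1 _)
  have hae : ∀ ξ : Euc N, ∀ᵐ z : Euc N, Real.exp (-‖ξ - z‖ ^ 2 / a) * ‖z‖ ^ (-σ) ≤
      (1 + ‖ξ‖) ^ (-σ) * (2 ^ σ * M * (2 * φ (ξ - z) + ψ z)) := by
    intro ξ
    have : Nontrivial (Euc N) := by
      apply Module.nontrivial_of_finrank_pos (R := ℝ)
      simp; omega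
    filter_upwards [Measure.ae_ne volume (0 : Euc N)] with z hz using key ξ z hz
  refine ⟨2 ^ σ * M * (2 * (∫ z, φ z) + ∫ z, ψ z) + 1, ?_, fun ξ => ?_⟩
  · have : 0 ≤ ∫ z, φ z := integral_nonneg hφ0
    have : 0 ≤ ∫ z, ψ z := integral_nonneg hψ0
    positivity
  have hint : Integrable (fun z : Euc N => Real.exp (-‖ξ - z‖ ^ 2 / a) * ‖z‖ ^ (-σ)) := by
    refine ((hG ξ).const_mul ((1 + ‖ξ‖) ^ (-σ))).mono' ?_ ?_
    · exact Measurable.aestronglyMeasurable (by fun_prop)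
    · filter_upwards [hae ξ] with z hz
      rw [Real.norm_of_nonneg (by positivity)]
      exact hz
  refine ⟨hint, ?_⟩
  calc ∫ z : Euc N, Real.exp (-‖ξ - z‖ ^ 2 / a) * ‖z‖ ^ (-σ)
      ≤ ∫ z : Euc N, (1 + ‖ξ‖) ^ (-σ) * (2 ^ σ * M * (2 * φ (ξ - z) + ψ z)) :=
        integral_mono_ae hint ((hG ξ).const_mul _) (hae ξ)
    _ = (1 + ‖ξ‖) ^ (-σ) * (2 ^ σ * M * (2 * (∫ z, φ z) + ∫ z, ψ z)) := by
        rw [integral_const_mul, integral_const_mul, integral_add ((hφi.comp_sub_left ξ).const_mul 2) hψi,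
          integral_const_mul, integral_sub_left_eq_self (fun z => φ z) volume ξ]
    _ ≤ _ := by
        rw [mul_comm]
        gcongr
        linarith

lemma gauss2 (N : ℕ) (hN : 3 ≤ N) (a σ : ℝ) (ha : 0 < a) (hσ0 : 0 ≤ σ) (hσ : σ < N) :
    ∃ C : ℝ, 0 < C ∧ ∀ τ : ℝ, 0 < τ → ∀ x : Euc N,
      Integrable (fun y : Euc N => Real.exp (-‖x - y‖ ^ 2 / (a * τ)) * ‖y‖ ^ (-σ)) ∧
      τ ^ (-(N : ℝ) / 2) * ∫ y : Euc N, Real.exp (-‖x - y‖ ^ 2 / (a * τ)) * ‖y‖ ^ (-σ)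
        ≤ C * (Real.sqrt τ + ‖x‖) ^ (-σ) := by
  obtain ⟨C, hC, h⟩ := gauss1 N hN a σ ha hσ0 hσ
  refine ⟨C, hC, fun τ hτ x => ?_⟩
  set q := Real.sqrt τ with hq
  have hq0 : 0 < q := Real.sqrt_pos.2 hτ
  have hqq : q ^ 2 = τ := Real.sq_sqrt hτ.le
  obtain ⟨h1, h2⟩ := h (q⁻¹ • x)
  set F : Euc N → ℝ := fun y => Real.exp (-‖x - y‖ ^ 2 / (a * τ)) * ‖y‖ ^ (-σ) with hF
  have hs : ∀ z : Euc N, F (q • z) =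
      q ^ (-σ) * (Real.exp (-‖q⁻¹ • x - z‖ ^ 2 / a) * ‖z‖ ^ (-σ)) := by
    intro z
    have e1 : x - q • z = q • (q⁻¹ • x - z) := by
      rw [smul_sub, smul_smul, mul_inv_cancel₀ hq0.ne', one_smul]
    simp only [hF]
    rw [e1, norm_smul, norm_smul, Real.norm_of_nonneg hq0.le, Real.mul_rpow hq0.le (norm_nonneg _),
      ← hqq]
    have : -(q * ‖q⁻¹ • x - z‖) ^ 2 / (a * q ^ 2) = -‖q⁻¹ • x - z‖ ^ 2 / a := by
      field_simp
    rw [this]; ring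
  have hi : Integrable F := by
    rw [← integrable_comp_smul_iff volume F hq0.ne']
    simp_rw [hs]
    exact h1.const_mul _
  refine ⟨hi, ?_⟩
  have h3 := Measure.integral_comp_smul (volume : Measure (Euc N)) F q
  simp_rw [hs] at h3
  rw [integral_const_mul] at h3
  have e2 : τ ^ (-(N : ℝ) / 2) = |(q ^ Module.finrank ℝ (Euc N))⁻¹| := by
    rw [abs_of_pos (by positivity), finrank_euclideanSpace, Fintype.card_fin, ← hqq,
      ← Real.rpow_natCast, ← Real.rpow_natCast, ← Real.rpow_mul hq0.le, ← Real.rpow_neg hq0.le]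
    congr 1; push_cast; ring
  rw [e2, ← smul_eq_mul, ← h3]
  calc _ ≤ q ^ (-σ) * (C * (1 + ‖q⁻¹ • x‖) ^ (-σ)) := by gcongr
    _ = C * (q * (1 + ‖q⁻¹ • x‖)) ^ (-σ) := by
      rw [Real.mul_rpow hq0.le (by positivity)]; ring
    _ = _ := by
      rw [norm_smul, Real.norm_of_nonneg (by positivity : 0 ≤ q⁻¹)]
      congr 2; field_simp

lemma gauss3 (N : ℕ) (hN : 3 ≤ N) (a θ η p : ℝ) (ha : 0 < a) (hθ : 0 ≤ θ) (hη : 0 ≤ η)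
    (hp : 0 ≤ p) (hlt : θ + η + p < N) :
    ∃ C : ℝ, 0 < C ∧ ∀ τ : ℝ, 0 < τ → ∀ T : ℝ, 0 ≤ T → ∀ x : Euc N, ∃ G : Euc N → ℝ,
      Integrable G ∧ (∀ y, 0 ≤ G y) ∧
      (∀ y, y ≠ 0 → Real.exp (-‖x - y‖ ^ 2 / (a * τ)) * (1 + Real.sqrt τ / ‖y‖) ^ η * ‖y‖ ^ (-θ) *
        (1 + T / ‖y‖) ^ p ≤ G y) ∧
      τ ^ (-(N : ℝ) / 2) * ∫ y, G y ≤ C * ((Real.sqrt τ + ‖x‖) ^ (-θ) +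
        T ^ p * (Real.sqrt τ + ‖x‖) ^ (-(θ + p))) := by
  obtain ⟨C1, hC1, h1⟩ := gauss2 N hN a θ ha hθ (by linarith)
  obtain ⟨C2, hC2, h2⟩ := gauss2 N hN a (θ + η) ha (by linarith) (by linarith)
  obtain ⟨C3, hC3, h3⟩ := gauss2 N hN a (θ + p) ha (by linarith) (by linarith)
  obtain ⟨C4, hC4, h4⟩ := gauss2 N hN a (θ + η + p) ha (by linarith) (by linarith)
  refine ⟨2 ^ η * 2 ^ p * (C1 + C2 + C3 + C4), by positivity, fun τ hτ T hT x => ?_⟩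
  obtain ⟨i1, b1⟩ := h1 τ hτ x
  obtain ⟨i2, b2⟩ := h2 τ hτ x
  obtain ⟨i3, b3⟩ := h3 τ hτ x
  obtain ⟨i4, b4⟩ := h4 τ hτ x
  set q := Real.sqrt τ with hq
  have hq0 : 0 < q := Real.sqrt_pos.2 hτ
  set E : ℝ → Euc N → ℝ := fun σ y => Real.exp (-‖x - y‖ ^ 2 / (a * τ)) * ‖y‖ ^ (-σ) with hE
  have hE0 : ∀ σ y, 0 ≤ E σ y := fun σ y => by positivity
  have hGi := (((i1.add (i2.const_mul (q ^ η))).add (i3.const_mul (T ^ p))).add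
    (i4.const_mul (q ^ η * T ^ p))).const_mul (2 ^ η * 2 ^ p)
  refine ⟨fun y => 2 ^ η * 2 ^ p * (E θ y + q ^ η * E (θ + η) y + T ^ p * E (θ + p) y
    + q ^ η * T ^ p * E (θ + η + p) y), hGi, fun y => ?_, fun y hy => ?_, ?_⟩
  · have := hE0 θ y
    have := hE0 (θ + η) y
    have := hE0 (θ + p) y
    have := hE0 (θ + η + p) y
    positivity
  · have hy' : 0 < ‖y‖ := norm_pos_iff.2 hy
    have k1 := add_rpow_bd 1 (q / ‖y‖) η (by norm_num) (by positivity) hη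
    have k2 := add_rpow_bd 1 (T / ‖y‖) p (by norm_num) (by positivity) hp
    rw [Real.one_rpow, div_eq_mul_inv, Real.mul_rpow hq0.le (by positivity), Real.inv_rpow hy'.le,
      ← Real.rpow_neg hy'.le] at k1
    rw [Real.one_rpow, div_eq_mul_inv, Real.mul_rpow hT (by positivity), Real.inv_rpow hy'.le,
      ← Real.rpow_neg hy'.le] at k2
    rw [div_eq_mul_inv q, div_eq_mul_inv T]
    refine (mul_le_mul (mul_le_mul_of_nonneg_right (mul_le_mul_of_nonneg_left k1
      (Real.exp_nonneg _)) (by positivity)) k2 (by positivity) (by positivity)).trans (le_of_eq ?_)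
    have e1 : ‖y‖ ^ (-(θ + η)) = ‖y‖ ^ (-θ) * ‖y‖ ^ (-η) := by
      rw [← Real.rpow_add hy']; congr 1; ring
    have e2 : ‖y‖ ^ (-(θ + p)) = ‖y‖ ^ (-θ) * ‖y‖ ^ (-p) := by
      rw [← Real.rpow_add hy']; congr 1; ring
    have e3 : ‖y‖ ^ (-(θ + η + p)) = ‖y‖ ^ (-θ) * ‖y‖ ^ (-η) * ‖y‖ ^ (-p) := by
      rw [← Real.rpow_add hy', ← Real.rpow_add hy']; congr 1; ring
    simp only [hE, e1, e2, e3]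
    ring
  · have hX : 0 < q + ‖x‖ := by positivity
    have eI : ∫ y, 2 ^ η * 2 ^ p * (E θ y + q ^ η * E (θ + η) y + T ^ p * E (θ + p) y
        + q ^ η * T ^ p * E (θ + η + p) y) = 2 ^ η * 2 ^ p * ((∫ y, E θ y) +
          q ^ η * (∫ y, E (θ + η) y) + T ^ p * (∫ y, E (θ + p) y) +
          q ^ η * T ^ p * ∫ y, E (θ + η + p) y) := by
      rw [integral_const_mul, integral_add, integral_add, integral_add, integral_const_mul,
        integral_const_mul, integral_const_mul]
      · exact i1
      · exact i2.const_mul _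
      · exact i1.add (i2.const_mul _)
      · exact i3.const_mul _
      · exact (i1.add (i2.const_mul _)).add (i3.const_mul _)
      · exact i4.const_mul _
    rw [eI]
    have k : ∀ σ : ℝ, q ^ η * (q + ‖x‖) ^ (-(σ + η)) ≤ (q + ‖x‖) ^ (-σ) := by
      intro σ
      calc q ^ η * (q + ‖x‖) ^ (-(σ + η)) ≤ (q + ‖x‖) ^ η * (q + ‖x‖) ^ (-(σ + η)) := by
            gcongr; linarith [norm_nonneg x]
        _ = _ := by rw [← Real.rpow_add hX]; congr 1; ring
    have k1 := k θ
    have k2 := k (θ + p)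
    rw [show θ + p + η = θ + η + p by ring] at k2
    set W := τ ^ (-(N : ℝ) / 2)
    have c2 : q ^ η * (W * ∫ y, E (θ + η) y) ≤ C2 * (q + ‖x‖) ^ (-θ) := by
      calc _ ≤ q ^ η * (C2 * (q + ‖x‖) ^ (-(θ + η))) := by gcongr
        _ = C2 * (q ^ η * (q + ‖x‖) ^ (-(θ + η))) := by ring
        _ ≤ _ := by gcongr
    have c4 : q ^ η * (W * ∫ y, E (θ + η + p) y) ≤ C4 * (q + ‖x‖) ^ (-(θ + p)) := by
      calc _ ≤ q ^ η * (C4 * (q + ‖x‖) ^ (-(θ + η + p))) := by gcongr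
        _ = C4 * (q ^ η * (q + ‖x‖) ^ (-(θ + η + p))) := by ring
        _ ≤ _ := by gcongr
    set U := (q + ‖x‖) ^ (-θ)
    set V := (q + ‖x‖) ^ (-(θ + p))
    have hU : 0 < U := by positivity
    have hV : 0 < V := by positivity
    have hTp : 0 ≤ T ^ p := by positivity
    calc _ = 2 ^ η * 2 ^ p * ((W * ∫ y, E θ y) + q ^ η * (W * ∫ y, E (θ + η) y) +
          T ^ p * (W * (∫ y, E (θ + p) y)) + T ^ p * (q ^ η * (W * ∫ y, E (θ + η + p) y))) := by ring
      _ ≤ 2 ^ η * 2 ^ p * (C1 * U + C2 * U + T ^ p * (C3 * V) + T ^ p * (C4 * V)) := by gcongr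
      _ ≤ 2 ^ η * 2 ^ p * ((C1 + C2 + C3 + C4) * (U + T ^ p * V)) := by
        gcongr
        have : 0 ≤ (C3 + C4) * U := by positivity
        have : 0 ≤ (C1 + C2) * (T ^ p * V) := by positivity
        linarith
      _ = _ := by ring

lemma alg1 (q T X η θ μ : ℝ) (hq : 0 < q) (hqT : q ≤ T) (hX : 0 < X) (hη : 0 ≤ η) (hθ : 0 ≤ θ)
    (hμ : 0 ≤ μ) (hμ' : θ - η ≤ μ) :
    (q + X) ^ (η - θ) ≤ (T + X) ^ η * T ^ (-θ) * (q / T) ^ (-μ) := by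
  have hT : 0 < T := hq.trans_le hqT
  have hr0 : 0 < q / T := by positivity
  have hr1 : q / T ≤ 1 := (div_le_one hT).2 hqT
  rcases le_total θ η with h | h
  · calc (q + X) ^ (η - θ) ≤ (T + X) ^ (η - θ) :=
          Real.rpow_le_rpow (by positivity) (by linarith) (by linarith)
      _ = (T + X) ^ η * (T + X) ^ (-θ) := by
          rw [← Real.rpow_add (by positivity)]; congr 1
      _ ≤ (T + X) ^ η * T ^ (-θ) := by
          gcongr ?_ * ?_
          exact Real.rpow_le_rpow_of_nonpos hT (by linarith) (by linarith)
      _ ≤ _ := le_mul_of_one_le_right (by positivity)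
          (Real.one_le_rpow_of_pos_of_le_one_of_nonpos hr0 hr1 (by linarith))
  · calc (q + X) ^ (η - θ) ≤ q ^ (η - θ) :=
          Real.rpow_le_rpow_of_nonpos hq (by linarith) (by linarith)
      _ = T ^ η * T ^ (-θ) * (q / T) ^ (η - θ) := by
          rw [← Real.rpow_add hT, ← sub_eq_add_neg, ← Real.mul_rpow hT.le hr0.le]
          congr 1; field_simp
      _ ≤ _ := by
          have h1 : T ^ η ≤ (T + X) ^ η := Real.rpow_le_rpow hT.le (by linarith) hη
          have h2 : (q / T) ^ (η - θ) ≤ (q / T) ^ (-μ) :=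
            Real.rpow_le_rpow_of_exponent_ge hr0 hr1 (by linarith)
          gcongr

lemma alg2 (q T X η θ μ ε : ℝ) (hq : 0 < q) (hqT : q ≤ T) (hX : 0 < X) (hη : 0 ≤ η) (hθ : 0 ≤ θ)
    (hμ : 0 ≤ μ) (hμ' : θ - η ≤ μ) (hε : 0 ≤ ε) :
    (1 + q / X) ^ η * (q + X) ^ (-(θ + ε)) ≤
      X ^ (-ε) * (1 + T / X) ^ η * T ^ (-θ) * (q / T) ^ (-μ) := by
  have hT : 0 < T := hq.trans_le hqT
  have e : ∀ u : ℝ, 0 < u → (1 + u / X) ^ η = (u + X) ^ η * X ^ (-η) := by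
    intro u hu
    rw [Real.rpow_neg hX.le, ← Real.inv_rpow hX.le, ← Real.mul_rpow (by positivity) (by positivity)]
    congr 1; field_simp; ring
  rw [e q hq, e T hT]
  have h1 := alg1 q T X η θ μ hq hqT hX hη hθ hμ hμ'
  have h2 : (q + X) ^ (-ε) ≤ X ^ (-ε) := Real.rpow_le_rpow_of_nonpos hX (by linarith) (by linarith)
  calc (q + X) ^ η * X ^ (-η) * (q + X) ^ (-(θ + ε))
      = X ^ (-η) * ((q + X) ^ (η - θ) * (q + X) ^ (-ε)) := by
        have : (q + X) ^ η * (q + X) ^ (-(θ + ε)) = (q + X) ^ (η - θ) * (q + X) ^ (-ε) := by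
          rw [← Real.rpow_add (by positivity), ← Real.rpow_add (by positivity)]; congr 1; ring
        rw [← this]; ring
    _ ≤ X ^ (-η) * (((T + X) ^ η * T ^ (-θ) * (q / T) ^ (-μ)) * X ^ (-ε)) := by gcongr
    _ = _ := by ring

lemma beta_int (k ν : ℝ) (hk : -1 < k) (hν : ν < 1) :
    IntegrableOn (fun u : ℝ => u ^ k * (1 - u) ^ (-ν)) (Set.Ioo 0 1) := by
  have h := (Complex.betaIntegral_convergent (u := ((k + 1 : ℝ) : ℂ)) (v := ((1 - ν : ℝ) : ℂ))
    (by simp; linarith) (by simp; linarith)).norm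
  rw [intervalIntegrable_iff_integrableOn_Ioo_of_le (by norm_num)] at h
  refine h.congr_fun (fun u hu => ?_) measurableSet_Ioo
  have h0 : 0 < u := hu.1
  have h1 : 0 < 1 - u := by linarith [hu.2]
  simp only [norm_mul]
  rw [Complex.norm_cpow_eq_rpow_re_of_pos h0, show (1 : ℂ) - (u : ℂ) = ((1 - u : ℝ) : ℂ) by push_cast; rfl,
    Complex.norm_cpow_eq_rpow_re_of_pos h1]
  congr 2 <;> simp

lemma beta_tendsto (ν : ℝ) (hν : ν < 1) :
    Tendsto (fun m : ℝ => ∫ u in Set.Ioo (0 : ℝ) 1, u ^ (m / 2) * (1 - u) ^ (-ν)) atTop (nhds 0) := by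
  have h := tendsto_integral_filter_of_dominated_convergence (l := (atTop : Filter ℝ))
    (μ := volume.restrict (Set.Ioo (0 : ℝ) 1))
    (F := fun m u => u ^ (m / 2) * (1 - u) ^ (-ν)) (f := fun _ => (0 : ℝ))
    (fun u => u ^ (0 : ℝ) * (1 - u) ^ (-ν)) ?_ ?_ (beta_int 0 ν (by norm_num) hν) ?_
  · simpa using h
  · exact Eventually.of_forall fun m => Measurable.aestronglyMeasurable (by fun_prop)
  · filter_upwards [eventually_ge_atTop 0] with m hm
    refine ae_restrict_of_forall_mem measurableSet_Ioo fun u hu => ?_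
    have h0 : 0 < u := hu.1
    have h1 : 0 < 1 - u := by linarith [hu.2]
    rw [Real.norm_of_nonneg (by positivity)]
    have := Real.rpow_le_rpow_of_exponent_ge h0 hu.2.le (by positivity : 0 ≤ m / 2)
    gcongr
  · refine ae_restrict_of_forall_mem measurableSet_Ioo fun u hu => ?_
    have h1 := (tendsto_rpow_atTop_of_base_lt_one u (by linarith [hu.1]) hu.2).comp
      (tendsto_id.atTop_div_const (by norm_num : (0 : ℝ) < 2))
    simpa using h1.mul_const ((1 - u) ^ (-ν))

lemma beta_scale (f : ℝ → ℝ) (t : ℝ) (ht : 0 < t) (hf : IntegrableOn f (Set.Ioo 0 1)) :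
    IntegrableOn (fun s => f (s / t)) (Set.Ioo 0 t) ∧
    ∫ s in Set.Ioo 0 t, f (s / t) = t * ∫ u in Set.Ioo 0 1, f u := by
  constructor
  · rw [← intervalIntegrable_iff_integrableOn_Ioo_of_le ht.le]
    rw [← intervalIntegrable_iff_integrableOn_Ioo_of_le (by norm_num)] at hf
    have := hf.comp_mul_left (c := t⁻¹)
    simpa [div_eq_inv_mul] using this
  · rw [← integral_Ioc_eq_integral_Ioo, ← integral_Ioc_eq_integral_Ioo,
      ← intervalIntegral.integral_of_le ht.le, ← intervalIntegral.integral_of_le (by norm_num),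
      intervalIntegral.integral_comp_div _ ht.ne']
    simp [ht.ne']

theorem stmt_7 (N : ℕ) (hN : 3 ≤ N) (α α₀ β η : ℝ)
    (hα₀ : α₀ = 4 / ((N : ℝ) - 4 + 2 * Real.sqrt ((N : ℝ) - 1)))
    (hα1 : 2 / ((N : ℝ) - 2) < α) (hα2 : α < α₀)
    (hβ : β = 2 / α * ((N : ℝ) - 2 - 2 / α))
    (hη : η = ((N : ℝ) - 2) / 2 - Real.sqrt (((N : ℝ) - 2) ^ 2 / 4 - β * (α + 1)))
    -- the kernel K with its Gaussian-type upper bound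
    (K : ℝ → Euc N → Euc N → ℝ)
    (hKmeas : Measurable (fun p : ℝ × Euc N × Euc N => K p.1 p.2.1 p.2.2))
    (A a : ℝ) (hA : 0 < A) (ha : 0 < a)
    (hK : ∀ τ : ℝ, 0 < τ → ∀ x y : Euc N, x ≠ 0 → y ≠ 0 →
      0 < K τ x y ∧
      K τ x y ≤ A * τ ^ (-(N : ℝ) / 2) * Real.exp (-‖x - y‖ ^ 2 / (a * τ)) *
        (1 + Real.sqrt τ / ‖x‖) ^ η * (1 + Real.sqrt τ / ‖y‖) ^ η)
    -- the parameters b, c, κ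
    (b c κ : ℝ) (hc : 1 ≤ c) (hb0 : 0 ≤ b) (hb2 : b ≤ 2) (hκ0 : 0 ≤ κ)
    (hκb : b = 2 → 0 < κ) (hbcκ : b + (c - 1) * η - κ < 2)
    -- the parameter ε
    (ε : ℝ) (hε0 : 0 ≤ ε)
    (hεlt : ε < min (1 / 4) ((N : ℝ) - (b + (1 + c) * η - κ))) :
    -- b + (c+1)η − κ < N
    b + (c + 1) * η - κ < (N : ℝ) ∧
    -- the family of constants B_m, tending to 0 as m → ∞
    ∃ B : ℝ → ℝ, Tendsto B atTop (nhds 0) ∧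
      ∀ m : ℝ, κ - 2 < m → 0 < B m ∧
        (∀ r t : ℝ, 0 < r → 0 < t → ∀ x : Euc N, x ≠ 0 →
          (∫ s in Set.Ioo 0 t, ∫ y in Metric.ball (0 : Euc N) r,
              K (t - s) x y * ((1 + Real.sqrt s / ‖y‖) ^ η) ^ c * ‖y‖ ^ (-b) *
                (‖y‖ / (‖y‖ + Real.sqrt s)) ^ κ * s ^ (m / 2))
            ≤ B m * r ^ ε * t ^ ((m + 2 - b) / 2) * ‖x‖ ^ (-ε) *
                (1 + Real.sqrt t / ‖x‖) ^ η) ∧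
        -- the case ε = 0, with the indicator omitted (r = ∞)
        (ε = 0 → ∀ t : ℝ, 0 < t → ∀ x : Euc N, x ≠ 0 →
          (∫ s in Set.Ioo 0 t, ∫ y : Euc N,
              K (t - s) x y * ((1 + Real.sqrt s / ‖y‖) ^ η) ^ c * ‖y‖ ^ (-b) *
                (‖y‖ / (‖y‖ + Real.sqrt s)) ^ κ * s ^ (m / 2))
            ≤ B m * t ^ ((m + 2 - b) / 2) * ‖x‖ ^ (-ε) *
                (1 + Real.sqrt t / ‖x‖) ^ η) := by
  have hN3 : (3 : ℝ) ≤ N := by exact_mod_cast hN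
  have hα0 : 0 < α := lt_trans (div_pos (by norm_num) (by linarith)) hα1
  have hβ0 : 0 < β := by
    rw [hβ]
    have : 2 / α < N - 2 := by
      rw [div_lt_iff₀ (by linarith)] at hα1
      rw [div_lt_iff₀ hα0]; linarith
    have h2 : 0 < 2 / α := by positivity
    exact mul_pos h2 (by linarith)
  have hη0 : 0 < η := by
    rw [hη, sub_pos, Real.sqrt_lt' (by linarith)]
    have : 0 < β * (α + 1) := by positivity
    linarith
  have hη1 : 2 * η ≤ N - 2 := by
    rw [hη]
    have := Real.sqrt_nonneg (((N : ℝ) - 2) ^ 2 / 4 - β * (α + 1))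
    linarith
  refine ⟨by linarith, ?_⟩
  obtain ⟨hε1, hε2⟩ := lt_min_iff.1 hεlt
  obtain ⟨p, hpdef⟩ : ∃ p, p = max (c * η - κ) 0 := ⟨_, rfl⟩
  have hp0 : 0 ≤ p := hpdef ▸ le_max_right _ _
  have hpge : c * η - κ ≤ p := hpdef ▸ le_max_left _ _
  have hlt : b + ε + η + p < N := by
    rcases max_choice (c * η - κ) 0 with h | h <;> rw [hpdef, h] <;> linarith
  obtain ⟨μ, hμdef⟩ : ∃ μ, μ = max (b + p - η) 0 := ⟨_, rfl⟩
  have hμ0 : 0 ≤ μ := hμdef ▸ le_max_right _ _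
  have hμge : b + p - η ≤ μ := hμdef ▸ le_max_left _ _
  have hμ2 : μ < 2 := by
    rw [hμdef]
    refine max_lt ?_ (by norm_num)
    rcases max_choice (c * η - κ) 0 with h | h <;> rw [hpdef, h] <;> linarith
  obtain ⟨C, hC, hG⟩ := gauss3 N hN a (b + ε) η p ha (by linarith) hη0.le hp0 hlt
  set I : ℝ → ℝ := fun m => ∫ u in Set.Ioo (0 : ℝ) 1, u ^ (m / 2) * (1 - u) ^ (-(μ / 2)) with hI
  have hI0 : ∀ m, 0 ≤ I m := fun m => setIntegral_nonneg measurableSet_Ioo fun u hu => by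
    have h0 : 0 < u := hu.1
    have h1 : 0 < 1 - u := by linarith [hu.2]
    positivity
  have core : ∀ m : ℝ, κ - 2 < m → ∀ (S : Set (Euc N)) (R : ℝ), MeasurableSet S → 0 ≤ R →
      (∀ y ∈ S, y ≠ 0 → 1 ≤ R * ‖y‖ ^ (-ε)) → ∀ t : ℝ, 0 < t → ∀ x : Euc N, x ≠ 0 →
      (∫ s in Set.Ioo 0 t, ∫ y in S,
              K (t - s) x y * ((1 + Real.sqrt s / ‖y‖) ^ η) ^ c * ‖y‖ ^ (-b) *
                (‖y‖ / (‖y‖ + Real.sqrt s)) ^ κ * s ^ (m / 2))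
            ≤ (2 * A * C * I m) * R * t ^ ((m + 2 - b) / 2) * ‖x‖ ^ (-ε) *
                (1 + Real.sqrt t / ‖x‖) ^ η := by
    intro m hm S R hS hR hSR t ht x hx
    have hX : 0 < ‖x‖ := norm_pos_iff.2 hx
    have hT0 : 0 < Real.sqrt t := Real.sqrt_pos.2 ht
    have hne : ∀ᵐ y : Euc N ∂(volume.restrict S), y ≠ 0 := by
      have : Nontrivial (Euc N) := by
        apply Module.nontrivial_of_finrank_pos (R := ℝ)
        simp; omega
      exact ae_restrict_of_ae (Measure.ae_ne volume (0 : Euc N))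
    -- nonnegativity
    have hnn : ∀ s ∈ Set.Ioo 0 t, ∀ y : Euc N, y ≠ 0 →
        0 ≤ K (t - s) x y * ((1 + Real.sqrt s / ‖y‖) ^ η) ^ c * ‖y‖ ^ (-b) *
                (‖y‖ / (‖y‖ + Real.sqrt s)) ^ κ * s ^ (m / 2) := by
      intro s hs y hy
      have := (hK (t - s) (by linarith [hs.2]) x y hx hy).1
      have := hs.1
      positivity
    set D := 2 * A * C * R * t ^ (m / 2) * (Real.sqrt t) ^ (-b) * (‖x‖ ^ (-ε) * (1 + Real.sqrt t / ‖x‖) ^ η) with hD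
    have inner : ∀ s ∈ Set.Ioo 0 t, (∫ y in S,
              K (t - s) x y * ((1 + Real.sqrt s / ‖y‖) ^ η) ^ c * ‖y‖ ^ (-b) *
                (‖y‖ / (‖y‖ + Real.sqrt s)) ^ κ * s ^ (m / 2)) ≤
          D * ((s / t) ^ (m / 2) * (1 - s / t) ^ (-(μ / 2))) := by
      intro s hs
      have hs0 : 0 < s := hs.1
      have hτ : 0 < t - s := by linarith [hs.2]
      obtain ⟨G, hGi, hG0, hGb, hGI⟩ := hG (t - s) hτ (Real.sqrt t) hT0.le x
      set τ := t - s with hτdef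
      set q := Real.sqrt τ with hqdef
      have hq0 : 0 < q := Real.sqrt_pos.2 hτ
      set T := Real.sqrt t with hTdef
      have hqT : q ≤ T := Real.sqrt_le_sqrt (by linarith)
      set W := τ ^ (-(N : ℝ) / 2) with hW
      have hW0 : 0 < W := by positivity
      set L := A * W * (1 + q / ‖x‖) ^ η * s ^ (m / 2) * R with hL
      have hL0 : 0 ≤ L := by positivity
      have hpt : ∀ y ∈ S, y ≠ 0 → K τ x y * ((1 + Real.sqrt s / ‖y‖) ^ η) ^ c * ‖y‖ ^ (-b) *
                (‖y‖ / (‖y‖ + Real.sqrt s)) ^ κ * s ^ (m / 2) ≤ L * G y := by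
        intro y hyS hy
        have hy' : 0 < ‖y‖ := norm_pos_iff.2 hy
        have hw : 0 < 1 + Real.sqrt s / ‖y‖ := by positivity
        have e1 : ((1 + Real.sqrt s / ‖y‖) ^ η) ^ c * (‖y‖ / (‖y‖ + Real.sqrt s)) ^ κ =
            (1 + Real.sqrt s / ‖y‖) ^ (c * η - κ) := by
          have : ‖y‖ / (‖y‖ + Real.sqrt s) = (1 + Real.sqrt s / ‖y‖)⁻¹ := by
            field_simp
          rw [this, Real.inv_rpow hw.le, ← Real.rpow_mul hw.le, ← Real.rpow_neg hw.le,
            ← Real.rpow_add hw]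
          congr 1; ring
        have e2 : (1 + Real.sqrt s / ‖y‖) ^ (c * η - κ) ≤ (1 + T / ‖y‖) ^ p := by
          calc _ ≤ (1 + Real.sqrt s / ‖y‖) ^ p :=
                Real.rpow_le_rpow_of_exponent_le (by
                  have : 0 ≤ Real.sqrt s / ‖y‖ := by positivity
                  linarith) hpge
            _ ≤ _ := by
                have : Real.sqrt s ≤ T := Real.sqrt_le_sqrt hs.2.le
                gcongr
        have e3 : ‖y‖ ^ (-b) ≤ R * ‖y‖ ^ (-(b + ε)) := by
          have := hSR y hyS hy
          calc ‖y‖ ^ (-b) ≤ (R * ‖y‖ ^ (-ε)) * ‖y‖ ^ (-b) :=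
                le_mul_of_one_le_left (by positivity) this
            _ = _ := by
                rw [mul_assoc, ← Real.rpow_add hy']; congr 2; ring
        have e4 := (hK τ hτ x y hx hy).2
        have e5 := (hK τ hτ x y hx hy).1
        calc K τ x y * ((1 + Real.sqrt s / ‖y‖) ^ η) ^ c * ‖y‖ ^ (-b) *
                (‖y‖ / (‖y‖ + Real.sqrt s)) ^ κ * s ^ (m / 2)
            = K τ x y * (1 + Real.sqrt s / ‖y‖) ^ (c * η - κ) * ‖y‖ ^ (-b) * s ^ (m / 2) := by
              rw [← e1]; ring
          _ ≤ (A * W * Real.exp (-‖x - y‖ ^ 2 / (a * τ)) * (1 + q / ‖x‖) ^ η * (1 + q / ‖y‖) ^ η)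
              * (1 + T / ‖y‖) ^ p * (R * ‖y‖ ^ (-(b + ε))) * s ^ (m / 2) := by gcongr
          _ = L * (Real.exp (-‖x - y‖ ^ 2 / (a * τ)) * (1 + q / ‖y‖) ^ η * ‖y‖ ^ (-(b + ε)) *
                (1 + T / ‖y‖) ^ p) := by rw [hL]; ring
          _ ≤ L * G y := by gcongr; exact hGb y hy
      have step1 : (∫ y in S, K τ x y * ((1 + Real.sqrt s / ‖y‖) ^ η) ^ c * ‖y‖ ^ (-b) *
                (‖y‖ / (‖y‖ + Real.sqrt s)) ^ κ * s ^ (m / 2)) ≤ ∫ y in S, L * G y := by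
        refine integral_mono_of_nonneg ?_ (hGi.const_mul L).integrableOn ?_
        · filter_upwards [hne] with y hy using hnn s hs y hy
        · filter_upwards [hne, ae_restrict_mem hS] with y hy hyS using hpt y hyS hy
      have step2 : (∫ y in S, L * G y) ≤ L * ∫ y, G y := by
        rw [← integral_const_mul]
        exact setIntegral_le_integral (hGi.const_mul L)
          (Eventually.of_forall fun y => mul_nonneg hL0 (hG0 y))
      have a1 := alg2 q T ‖x‖ η b μ ε hq0 hqT hX hη0.le hb0 hμ0 (by linarith) hε0
      have a2 := alg2 q T ‖x‖ η (b + p) μ ε hq0 hqT hX hη0.le (by linarith) hμ0 (by linarith) hε0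
      set Z := ‖x‖ ^ (-ε) * (1 + T / ‖x‖) ^ η with hZ
      have a3 : T ^ p * T ^ (-(b + p)) = T ^ (-b) := by
        rw [← Real.rpow_add hT0]; congr 1; ring
      have a4 : (q / T) ^ (-μ) = (1 - s / t) ^ (-(μ / 2)) := by
        have : q / T = (1 - s / t) ^ (1 / 2 : ℝ) := by
          rw [hqdef, hTdef, ← Real.sqrt_div hτ.le, ← Real.sqrt_eq_rpow, hτdef]
          congr 1; field_simp
        rw [this, ← Real.rpow_mul]
        · congr 1; ring
        · rw [sub_nonneg, div_le_one ht]; exact hs.2.le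
      have a5 : s ^ (m / 2) = t ^ (m / 2) * (s / t) ^ (m / 2) := by
        rw [← Real.mul_rpow ht.le (by positivity)]; congr 1; field_simp
      rw [show b + p + ε = b + ε + p by ring] at a2
      set U := (q + ‖x‖) ^ (-(b + ε))
      set V := (q + ‖x‖) ^ (-(b + ε + p))
      set P := (q / T) ^ (-μ)
      refine (step1.trans step2).trans ?_
      calc L * ∫ y, G y = A * R * s ^ (m / 2) * ((1 + q / ‖x‖) ^ η * (W * ∫ y, G y)) := by
            rw [hL]; ring
        _ ≤ A * R * s ^ (m / 2) * ((1 + q / ‖x‖) ^ η * (C * (U + T ^ p * V))) := by gcongr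
        _ = A * R * s ^ (m / 2) * C * ((1 + q / ‖x‖) ^ η * U + T ^ p * ((1 + q / ‖x‖) ^ η * V)) := by
            ring
        _ ≤ A * R * s ^ (m / 2) * C * (Z * T ^ (-b) * P + T ^ p * (Z * T ^ (-(b + p)) * P)) := by
            gcongr
        _ = A * R * s ^ (m / 2) * C * (Z * T ^ (-b) * P + Z * (T ^ p * T ^ (-(b + p))) * P) := by
            ring
        _ = _ := by rw [a3, a4, a5, hD]; ring
    have hk : -1 < m / 2 := by linarith
    obtain ⟨j1, j2⟩ := beta_scale _ t ht (beta_int (m / 2) (μ / 2) hk (by linarith))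
    calc _ ≤ ∫ s in Set.Ioo 0 t, D * ((s / t) ^ (m / 2) * (1 - s / t) ^ (-(μ / 2))) := by
          refine integral_mono_of_nonneg ?_ (j1.const_mul D) ?_
          · refine ae_restrict_of_forall_mem measurableSet_Ioo fun s hs => ?_
            refine integral_nonneg_of_ae ?_
            filter_upwards [hne] with y hy using hnn s hs y hy
          · exact ae_restrict_of_forall_mem measurableSet_Ioo fun s hs => inner s hs
      _ = D * (t * I m) := by rw [integral_const_mul, j2]
      _ = _ := by
          have : t ^ ((m + 2 - b) / 2) = t ^ (m / 2) * Real.sqrt t ^ (-b) * t := by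
            rw [Real.sqrt_eq_rpow, ← Real.rpow_mul ht.le, ← Real.rpow_add ht, ← Real.rpow_add_one ht.ne']
            congr 1; ring
          rw [this, hD]; ring
  refine ⟨fun m => 2 * A * C * I m + Real.exp (-m), ?_, fun m hm => ⟨?_, ?_, ?_⟩⟩
  · have h1 := (beta_tendsto (μ / 2) (by linarith)).const_mul (2 * A * C)
    have h2 := h1.add Real.tendsto_exp_neg_atTop_nhds_zero
    simpa using h2
  · have := hI0 m
    positivity
  · intro r t hr ht x hx
    refine (core m hm (Metric.ball 0 r) (r ^ ε) measurableSet_ball (by positivity) ?_ t ht x hx).trans ?_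
    · intro y hy hy0
      have hy' : 0 < ‖y‖ := norm_pos_iff.2 hy0
      have : ‖y‖ < r := by simpa using hy
      rw [Real.rpow_neg hy'.le, ← div_eq_mul_inv, one_le_div (by positivity)]
      exact Real.rpow_le_rpow hy'.le this.le hε0
    · have := Real.exp_pos (-m)
      gcongr
      linarith
  · intro h0 t ht x hx
    have h := core m hm Set.univ 1 MeasurableSet.univ (by norm_num) (by simp [h0]) t ht x hx
    rw [Measure.restrict_univ, mul_one] at h
    refine h.trans ?_
    have := Real.exp_pos (-m)
    gcongr
    linarith

end
end

section
/- Suppose K : (0,∞)×ℝ^N×ℝ^N → ℝ is measurable and there exist constants A, a > 0 such that 0 < K(τ,x,y) ≤ A τ^{−N/2} exp(−|x−y|²/(aτ)) h(τ,x) h(τ,y) for all τ>0 and x,y≠0. Let δ > 0, set a_j = 2^{−j}δ for j ≥ 0, and let χ_j be the indicator function of {x ∈ ℝ^N : |x| > a_j}. Then there exists a constant C > 0 such that for every integer j ≥ 0, every 0 < t ≤ 1 and every x ≠ 0, ∫_{ℝ^N} K(t,x,y) χ_j(y) dy ≤ C h(t,x) ( exp(−a_{j+1}²/(2at)) + χ_{j+1}(x)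 ). -/
open MeasureTheory Filter

noncomputable section

lemma aux_gauss (N : ℕ) (a : ℝ) (ha : 0 < a) :
    Integrable (fun w : Euc N => Real.exp (-‖w‖ ^ 2 / (2 * a))) := by
  have h := GaussianFourier.integrable_cexp_neg_mul_sq_norm_add (V := Euc N)
    (b := ((1 / (2 * a) : ℝ) : ℂ)) (by rw [Complex.ofReal_re]; positivity) 0 0
  have h2 := h.re
  refine h2.congr (Filter.Eventually.of_forall fun w => ?_)
  have : (-((1 / (2 * a) : ℝ) : ℂ) * (‖w‖ : ℂ) ^ 2 + 0 * ((inner ℝ (0 : Euc N) w : ℝ) : ℂ))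
      = ((-‖w‖ ^ 2 / (2 * a) : ℝ) : ℂ) := by
    push_cast; ring
  simp only [this]
  exact Complex.exp_ofReal_re _

lemma aux_sing (N : ℕ) (hN : 3 ≤ N) (M : ℝ) (hM : M < N) :
    Integrable ((Metric.ball (0 : Euc N) 1).indicator (fun w : Euc N => ‖w‖ ^ (-M))) := by
  rw [integrable_indicator_iff measurableSet_ball]
  refine integrableOn_ball_of_norm_le_rpow (C := 1) (α := M) ?_ ?_ ?_ ?_
  · simp; omega
  · simpa using hM
  · refine Filter.Eventually.of_forall fun w => ?_
    rw [one_mul, Real.norm_of_nonneg (by positivity)]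
  · exact (measurable_norm.pow_const _).aestronglyMeasurable

lemma aux_pt (u η M : ℝ) (hu : 0 < u) (hη : η ≤ M) (hM : 0 ≤ M) :
    (1 + u⁻¹) ^ η ≤ 2 ^ M * (1 + if u < 1 then u ^ (-M) else 0) := by
  have hui : 0 < u⁻¹ := inv_pos.2 hu
  refine (Real.rpow_le_rpow_of_exponent_le (by linarith) hη).trans ?_
  split_ifs with h
  · have h1 : 1 ≤ u⁻¹ := (one_le_inv₀ hu).2 h.le
    calc (1 + u⁻¹) ^ M ≤ (2 * u⁻¹) ^ M := Real.rpow_le_rpow (by linarith) (by linarith) hM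
      _ = 2 ^ M * u ^ (-M) := by
        rw [Real.mul_rpow (by norm_num) hui.le, Real.inv_rpow hu.le, Real.rpow_neg hu.le]
      _ ≤ _ := by
        gcongr; linarith
  · have h1 : u⁻¹ ≤ 1 := inv_le_one_of_one_le₀ (not_lt.1 h)
    rw [add_zero, mul_one]
    exact Real.rpow_le_rpow (by linarith) (by linarith) hM

theorem stmt_8 (N : ℕ) (hN : 3 ≤ N) (α α₀ β η : ℝ)
    (hα₀ : α₀ = 4 / ((N : ℝ) - 4 + 2 * Real.sqrt ((N : ℝ) - 1)))
    (hα1 : 2 / ((N : ℝ) - 2) < α) (hα2 : α < α₀)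
    (hβ : β = 2 / α * ((N : ℝ) - 2 - 2 / α))
    (hη : η = ((N : ℝ) - 2) / 2 - Real.sqrt (((N : ℝ) - 2) ^ 2 / 4 - β * (α + 1)))
    -- the kernel K with its Gaussian-type upper bound
    (K : ℝ → Euc N → Euc N → ℝ)
    (hKmeas : Measurable (fun p : ℝ × Euc N × Euc N => K p.1 p.2.1 p.2.2))
    (A a : ℝ) (hA : 0 < A) (ha : 0 < a)
    (hK : ∀ τ : ℝ, 0 < τ → ∀ x y : Euc N, x ≠ 0 → y ≠ 0 →
      0 < K τ x y ∧
      K τ x y ≤ A * τ ^ (-(N : ℝ) / 2) * Real.exp (-‖x - y‖ ^ 2 / (a * τ)) *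
        (1 + Real.sqrt τ / ‖x‖) ^ η * (1 + Real.sqrt τ / ‖y‖) ^ η)
    (δ : ℝ) (hδ : 0 < δ) :
    ∃ C : ℝ, 0 < C ∧ ∀ j : ℕ, ∀ t : ℝ, 0 < t → t ≤ 1 → ∀ x : Euc N, x ≠ 0 →
      (∫ y in {y : Euc N | δ / 2 ^ j < ‖y‖}, K t x y)
        ≤ C * (1 + Real.sqrt t / ‖x‖) ^ η *
            (Real.exp (-(δ / 2 ^ (j + 1)) ^ 2 / (2 * a * t)) +
              (if δ / 2 ^ (j + 1) < ‖x‖ then (1 : ℝ) else 0)) := by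
  set M : ℝ := ((N : ℝ) - 2) / 2 with hMdef
  have hN' : (3 : ℝ) ≤ N := by exact_mod_cast hN
  have hM0 : 0 ≤ M := by rw [hMdef]; linarith
  have hMN : M < N := by rw [hMdef]; linarith
  have hηM : η ≤ M := by
    rw [hη]; linarith [Real.sqrt_nonneg (((N : ℝ) - 2) ^ 2 / 4 - β * (α + 1))]
  set γ : Euc N → ℝ := fun w => Real.exp (-‖w‖ ^ 2 / (2 * a)) with hγ
  set φ : Euc N → ℝ := (Metric.ball (0 : Euc N) 1).indicator (fun w : Euc N => ‖w‖ ^ (-M)) with hφ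
  have hγi : Integrable γ := aux_gauss N a ha
  have hφi : Integrable φ := aux_sing N hN M hMN
  have hγ0 : ∀ w, 0 ≤ γ w := fun w => (Real.exp_pos _).le
  have hφ0 : ∀ w, 0 ≤ φ w := fun w => Set.indicator_nonneg (fun w _ => by positivity) w
  have hIγ : 0 ≤ ∫ w, γ w := integral_nonneg hγ0
  have hIφ : 0 ≤ ∫ w, φ w := integral_nonneg hφ0
  refine ⟨A * 2 ^ M * ((∫ w, γ w) + ∫ w, φ w) + 1, by positivity, ?_⟩
  intro j t ht ht1 x hx
  set s := Real.sqrt t with hs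
  have hs0 : 0 < s := Real.sqrt_pos.2 ht
  have hss : s ^ 2 = t := Real.sq_sqrt ht.le
  set H : ℝ := (1 + s / ‖x‖) ^ η with hH
  have hH0 : 0 < H := by positivity
  set b : ℝ := δ / 2 ^ (j + 1) with hb
  have hb0 : 0 < b := by positivity
  have hbj : δ / 2 ^ j = 2 * b := by rw [hb, pow_succ]; field_simp
  set E : ℝ := Real.exp (-b ^ 2 / (2 * a * t)) + (if b < ‖x‖ then (1 : ℝ) else 0) with hE
  have hE0 : 0 < E := by
    rw [hE]; split_ifs <;> positivity
  rw [hbj]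
  set T : ℝ := t ^ (-(N : ℝ) / 2) with hT
  have hT0 : 0 < T := by positivity
  have hTs : T * s ^ N = 1 := by
    have : s ^ N = t ^ ((N : ℝ) / 2) := by
      rw [hs, Real.sqrt_eq_rpow, ← Real.rpow_natCast, ← Real.rpow_mul ht.le]; congr 1; ring
    rw [this, hT, ← Real.rpow_add ht, neg_div, neg_add_cancel, Real.rpow_zero]
  -- the dominating function
  set g : Euc N → ℝ := fun y => A * T * H * E * 2 ^ M * (γ (s⁻¹ • (y - x)) + φ (s⁻¹ • y)) with hg
  have hg1 : Integrable (fun y => γ (s⁻¹ • (y - x))) :=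
    (hγi.comp_smul (inv_ne_zero hs0.ne')).comp_sub_right x
  have hg2 : Integrable (fun y => φ (s⁻¹ • y)) := hφi.comp_smul (inv_ne_zero hs0.ne')
  have hgi : Integrable g := (hg1.add hg2).const_mul _
  have hg0 : ∀ y, 0 ≤ g y := fun y => by
    have := hγ0 (s⁻¹ • (y - x)); have := hφ0 (s⁻¹ • y)
    simp only [hg]; positivity
  have hgint : ∫ y, g y = A * H * E * 2 ^ M * ((∫ w, γ w) + ∫ w, φ w) := by
    have e1 : ∫ y, γ (s⁻¹ • (y - x)) = s ^ N * ∫ w, γ w := by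
      rw [integral_sub_right_eq_self (fun y => γ (s⁻¹ • y)) x,
        Measure.integral_comp_inv_smul_of_nonneg _ _ hs0.le]
      simp
    have e2 : ∫ y, φ (s⁻¹ • y) = s ^ N * ∫ w, φ w := by
      rw [Measure.integral_comp_inv_smul_of_nonneg _ _ hs0.le]
      simp
    rw [hg, integral_const_mul, integral_add hg1 hg2, e1, e2]
    linear_combination (A * H * E * 2 ^ M * ((∫ w, γ w) + ∫ w, φ w)) * hTs
  have hS : MeasurableSet {y : Euc N | 2 * b < ‖y‖} :=
    measurableSet_lt measurable_const measurable_norm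
  have key : ∀ y : Euc N, 2 * b < ‖y‖ → 0 ≤ K t x y ∧ K t x y ≤ g y := by
    intro y hy
    have hy0 : 0 < ‖y‖ := by linarith
    have hyne : y ≠ 0 := norm_pos_iff.1 hy0
    obtain ⟨k0, k1⟩ := hK t ht x y hx hyne
    refine ⟨k0.le, k1.trans ?_⟩
    have hγe : γ (s⁻¹ • (y - x)) = Real.exp (-‖x - y‖ ^ 2 / (2 * a * t)) := by
      simp only [hγ]
      rw [norm_smul, norm_sub_rev y x, Real.norm_of_nonneg (inv_pos.2 hs0).le, mul_pow, inv_pow, hss]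
      congr 1
      field_simp
    have hexp : Real.exp (-‖x - y‖ ^ 2 / (a * t)) ≤ E * γ (s⁻¹ • (y - x)) := by
      have hsplit : Real.exp (-‖x - y‖ ^ 2 / (a * t)) =
          Real.exp (-‖x - y‖ ^ 2 / (2 * a * t)) * Real.exp (-‖x - y‖ ^ 2 / (2 * a * t)) := by
        rw [← Real.exp_add]; congr 1; field_simp; ring
      rw [hsplit, hγe]
      refine mul_le_mul_of_nonneg_right ?_ (Real.exp_pos _).le
      rw [hE]
      split_ifs with hxb
      · have : Real.exp (-‖x - y‖ ^ 2 / (2 * a * t)) ≤ 1 := by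
          rw [Real.exp_le_one_iff, neg_div, neg_nonpos]; positivity
        linarith [Real.exp_pos (-b ^ 2 / (2 * a * t))]
      · rw [add_zero, Real.exp_le_exp]
        have h1 : ‖y‖ - ‖x‖ ≤ ‖x - y‖ := by
          rw [norm_sub_rev]; exact norm_sub_norm_le y x
        have h2 : b ≤ ‖x - y‖ := by linarith [not_lt.1 hxb]
        have h3 : b ^ 2 ≤ ‖x - y‖ ^ 2 := by gcongr
        gcongr
    have hu : 0 < ‖s⁻¹ • y‖ := by
      exact norm_pos_iff.2 (smul_ne_zero (inv_ne_zero hs0.ne') hyne)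
    have hpt := aux_pt ‖s⁻¹ • y‖ η M hu hηM hM0
    have hsu : s / ‖y‖ = ‖s⁻¹ • y‖⁻¹ := by
      rw [norm_smul, Real.norm_of_nonneg (inv_pos.2 hs0).le]; field_simp
    have hφe : (if ‖s⁻¹ • y‖ < 1 then ‖s⁻¹ • y‖ ^ (-M) else 0) = φ (s⁻¹ • y) := by
      rw [hφ, Set.indicator]
      simp only [mem_ball_zero_iff]
    rw [hφe, ← hsu] at hpt
    have hγ1 : γ (s⁻¹ • (y - x)) ≤ 1 := by
      rw [hγe, Real.exp_le_one_iff, neg_div, neg_nonpos]; positivity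
    have hγp := hγ0 (s⁻¹ • (y - x))
    have hφp := hφ0 (s⁻¹ • y)
    have h2M : (0 : ℝ) < 2 ^ M := by positivity
    calc A * T * Real.exp (-‖x - y‖ ^ 2 / (a * t)) * H * (1 + s / ‖y‖) ^ η
        ≤ A * T * (E * γ (s⁻¹ • (y - x))) * H * (2 ^ M * (1 + φ (s⁻¹ • y))) := by gcongr
      _ = A * T * H * E * 2 ^ M * (γ (s⁻¹ • (y - x)) + γ (s⁻¹ • (y - x)) * φ (s⁻¹ • y)) := by ring
      _ ≤ A * T * H * E * 2 ^ M * (γ (s⁻¹ • (y - x)) + φ (s⁻¹ • y)) := by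
        gcongr
        exact mul_le_of_le_one_left hφp hγ1
  calc (∫ y in {y : Euc N | 2 * b < ‖y‖}, K t x y)
      ≤ ∫ y in {y : Euc N | 2 * b < ‖y‖}, g y := by
        refine integral_mono_of_nonneg ?_ hgi.integrableOn ?_
        · exact (ae_restrict_iff' hS).2 (Filter.Eventually.of_forall fun y hy => (key y hy).1)
        · exact (ae_restrict_iff' hS).2 (Filter.Eventually.of_forall fun y hy => (key y hy).2)
    _ ≤ ∫ y, g y := setIntegral_le_integral hgi (Filter.Eventually.of_forall hg0)
    _ = A * H * E * 2 ^ M * ((∫ w, γ w) + ∫ w, φ w) := hgint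
    _ ≤ (A * 2 ^ M * ((∫ w, γ w) + ∫ w, φ w) + 1) * H * E := by
        nlinarith [mul_pos hH0 hE0]

end
end

section
/- Define the four triplets (b₁,c₁,κ₁) = (2, 1, ρ), (b₂,c₂,κ₂) = (0, 1+α, 0), (b₃,c₃,κ₃) = (2(α−1)/α, 2, 0), and (b₄,c₄,κ₄) = (2, 1, αρ). Then b₃ < 2, and for each j ∈ {1,2,3,4} the inequality b_j + (c_j − 1)η − κ_j < 2 holds. -/
theorem stmt_9 (N : ℕ) (hN : 3 ≤ N) (α α₀ β ρ η : ℝ)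
    (hα₀ : α₀ = 4 / ((N : ℝ) - 4 + 2 * Real.sqrt ((N : ℝ) - 1)))
    (hα1 : 2 / ((N : ℝ) - 2) < α) (hα2 : α < α₀)
    (hβ : β = 2 / α * ((N : ℝ) - 2 - 2 / α))
    (hρ : ρ = 2 / α - ((N : ℝ) - 2) / 2 - Real.sqrt (((N : ℝ) - 2) ^ 2 / 4 - β * (α + 1)))
    (hη : η = ((N : ℝ) - 2) / 2 - Real.sqrt (((N : ℝ) - 2) ^ 2 / 4 - β * (α + 1))) :
    2 * (α - 1) / α < 2 ∧
    2 + (1 - 1) * η - ρ < 2 ∧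
    0 + (1 + α - 1) * η - 0 < 2 ∧
    2 * (α - 1) / α + (2 - 1) * η - 0 < 2 ∧
    2 + (1 - 1) * η - α * ρ < 2 := by
  have hn : (1:ℝ) ≤ (N:ℝ) - 2 := by
    have : (3:ℝ) ≤ N := by exact_mod_cast hN
    linarith
  have hs : 1 < Real.sqrt ((N:ℝ) - 1) := by
    rw [Real.lt_sqrt (by norm_num)]
    linarith
  have hα : 0 < α := lt_trans (by positivity) hα1
  obtain ⟨t, ht⟩ : ∃ t, t = 2 / α := ⟨_, rfl⟩
  have htα : α * t = 2 := by rw [ht]; field_simp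
  have htp : 0 < t := by rw [ht]; positivity
  have ht1 : t < (N:ℝ) - 2 := by
    rw [ht, div_lt_comm₀ hα (by linarith)]
    exact hα1
  have ht2 : ((N:ℝ) - 2) / 2 < t := by
    rw [hα₀, lt_div_iff₀ (by linarith)] at hα2
    rw [ht, lt_div_iff₀ hα]
    nlinarith
  have hb : β * (α + 1) = ((N:ℝ) - 2 - t) * (2 + t) := by
    rw [hβ, ← ht]
    linear_combination ((N:ℝ) - 2 - t) * htα
  have hsq : Real.sqrt (((N : ℝ) - 2) ^ 2 / 4 - β * (α + 1)) < t - ((N:ℝ) - 2) / 2 := by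
    rw [Real.sqrt_lt' (by linarith), hb]
    nlinarith
  have h0 := Real.sqrt_nonneg (((N : ℝ) - 2) ^ 2 / 4 - β * (α + 1))
  have hρp : 0 < ρ := by rw [hρ, ← ht]; linarith
  have hηt : η < t := by rw [hη]; linarith
  have h3 : 2 * (α - 1) / α = 2 - t := by rw [ht]; field_simp
  have h4 := mul_pos hα hρp
  have h5 := mul_lt_mul_of_pos_left hηt hα
  refine ⟨?_, ?_, ?_, ?_, ?_⟩
  · linarith
  · linarith
  · linarith
  · linarith
  · linarith
end

section
/- Let K₀ ≥ 0, set κ̂ = ρ·min{1,α}, and for t>0, x≠0 define g(t,x) = (|x|/(|x|+√t))^{κ̂} |x|^{−2} + (K₀ h(t,x))^α + K₀ g̃(t,x), where g̃(t,x) = 0 if α ≤ 1 and g̃(t,x) = |x|^{−2(α−1)/α} h(t,x) if α > 1. Set ϑ = (N−2)/2 − η; then ϑ > 0, and there exists a constant C₁ (depending on N, α, K₀) such that for all t, s, σ ∈ (0,1) and all x ≠ 0: (1) g(t,x) ≤ C₁(1 + |x|^{−2}); (2) g(t,x) h(s,x) ≤ C₁(1 + |x|^{−(N+2)/2}); (3)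 g(t,x) h(s,x) h(σ,x) ≤ C₁(1 + |x|^{−N+ϑ}). -/
open MeasureTheory Filter

noncomputable section

lemma aux_pow (n : ℝ) (r p : ℝ) (hr : 0 < r) (hp : 0 ≤ p) (hpn : p ≤ n) :
    (1 + 1 / r) ^ p ≤ (2 : ℝ) ^ n * (1 + r ^ (-p)) := by
  have h2 : (2 : ℝ) ^ p ≤ (2 : ℝ) ^ n := Real.rpow_le_rpow_of_exponent_le (by norm_num) hpn
  have hrp : 0 < r ^ (-p) := Real.rpow_pos_of_pos hr _
  have h2p : (0 : ℝ) < 2 ^ p := Real.rpow_pos_of_pos (by norm_num) _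
  have hir : 0 < 1 / r := by positivity
  rcases le_total 1 r with h | h
  · have h1 : 1 / r ≤ 1 := by rw [div_le_one hr]; exact h
    have : (1 + 1 / r) ^ p ≤ 2 ^ p := Real.rpow_le_rpow (by positivity) (by linarith) hp
    nlinarith
  · have h1 : 1 ≤ 1 / r := by rw [le_div_iff₀ hr]; linarith
    have h3 : (1 + 1 / r) ^ p ≤ (2 * (1 / r)) ^ p :=
      Real.rpow_le_rpow (by positivity) (by linarith) hp
    rw [Real.mul_rpow (by norm_num) hir.le] at h3
    have h4 : (1 / r) ^ p = r ^ (-p) := by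
      rw [one_div, Real.inv_rpow hr.le, Real.rpow_neg hr.le]
    rw [h4] at h3
    nlinarith

lemma aux_inv (r p : ℝ) (hr : 0 < r) (hp : 0 ≤ p) : r ^ (-p) ≤ (1 + 1 / r) ^ p := by
  have h4 : (1 / r) ^ p = r ^ (-p) := by
    rw [one_div, Real.inv_rpow hr.le, Real.rpow_neg hr.le]
  rw [← h4]
  exact Real.rpow_le_rpow (by positivity) (by linarith) hp

lemma aux_h (r t η : ℝ) (hr : 0 < r) (ht : t ∈ Set.Ioo (0 : ℝ) 1) (hη : 0 ≤ η) :
    0 ≤ (1 + Real.sqrt t / r) ^ η ∧ (1 + Real.sqrt t / r) ^ η ≤ (1 + 1 / r) ^ η := by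
  have h1 : Real.sqrt t ≤ 1 := Real.sqrt_le_one.mpr ht.2.le
  refine ⟨by positivity, Real.rpow_le_rpow (by positivity) ?_ hη⟩
  gcongr

set_option maxHeartbeats 4000000

theorem stmt_10 (N : ℕ) (hN : 3 ≤ N) (α α₀ β ρ η : ℝ)
    (hα₀ : α₀ = 4 / ((N : ℝ) - 4 + 2 * Real.sqrt ((N : ℝ) - 1)))
    (hα1 : 2 / ((N : ℝ) - 2) < α) (hα2 : α < α₀)
    (hβ : β = 2 / α * ((N : ℝ) - 2 - 2 / α))
    (hρ : ρ = 2 / α - ((N : ℝ) - 2) / 2 - Real.sqrt (((N : ℝ) - 2) ^ 2 / 4 - β * (α + 1)))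
    (hη : η = ((N : ℝ) - 2) / 2 - Real.sqrt (((N : ℝ) - 2) ^ 2 / 4 - β * (α + 1)))
    (K₀ : ℝ) (hK₀ : 0 ≤ K₀)
    -- the function g of the statement
    (g : ℝ → Euc N → ℝ)
    (hg : ∀ t : ℝ, ∀ x : Euc N, g t x =
      (‖x‖ / (‖x‖ + Real.sqrt t)) ^ (ρ * min 1 α) * ‖x‖ ^ (-2 : ℝ) +
        (K₀ * (1 + Real.sqrt t / ‖x‖) ^ η) ^ α +
        K₀ * (if α ≤ 1 then 0 else
          ‖x‖ ^ (-(2 * (α - 1) / α)) * (1 + Real.sqrt t / ‖x‖) ^ η)) :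
    0 < ((N : ℝ) - 2) / 2 - η ∧
    ∃ C₁ : ℝ, ∀ t s σ : ℝ, t ∈ Set.Ioo (0 : ℝ) 1 → s ∈ Set.Ioo (0 : ℝ) 1 →
      σ ∈ Set.Ioo (0 : ℝ) 1 → ∀ x : Euc N, x ≠ 0 →
      g t x ≤ C₁ * (1 + ‖x‖ ^ (-2 : ℝ)) ∧
      g t x * (1 + Real.sqrt s / ‖x‖) ^ η ≤ C₁ * (1 + ‖x‖ ^ (-(((N : ℝ) + 2) / 2))) ∧
      g t x * (1 + Real.sqrt s / ‖x‖) ^ η * (1 + Real.sqrt σ / ‖x‖) ^ η ≤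
        C₁ * (1 + ‖x‖ ^ (-(N : ℝ) + (((N : ℝ) - 2) / 2 - η))) := by
  have hNr : (3 : ℝ) ≤ N := by exact_mod_cast hN
  have hα : 0 < α := lt_trans (div_pos two_pos (by linarith)) hα1
  set S := Real.sqrt ((N : ℝ) - 1) with hS
  have hS2 : S ^ 2 = (N : ℝ) - 1 := Real.sq_sqrt (by linarith)
  have hS0 : 0 ≤ S := Real.sqrt_nonneg _
  have hS1 : 1 < S := by nlinarith
  set m := 2 / α with hm
  have hαm : m * α = 2 := by rw [hm]; field_simp
  have hm0 : 0 < m := by positivity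
  have hm1 : m < (N : ℝ) - 2 := by
    rw [div_lt_iff₀ (by linarith)] at hα1
    rw [hm, div_lt_iff₀ hα]; linarith
  have hm2 : ((N : ℝ) - 4 + 2 * S) / 2 < m := by
    rw [hα₀, lt_div_iff₀ (by linarith)] at hα2
    rw [hm, lt_div_iff₀ hα]; linarith
  have hD : ((N : ℝ) - 2) ^ 2 / 4 - β * (α + 1)
      = ((N : ℝ) - 2) ^ 2 / 4 - ((N : ℝ) - 2 - m) * (m + 2) := by
    rw [hβ]; linear_combination (-((N : ℝ) - 2 - m)) * hαm
  rw [hD] at hρ hη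
  have hDpos : 0 < ((N : ℝ) - 2) ^ 2 / 4 - ((N : ℝ) - 2 - m) * (m + 2) := by
    nlinarith [mul_pos (sub_pos.mpr hm2) (show 0 < m - ((N : ℝ) - 4) / 2 + S by linarith)]
  set Q := Real.sqrt (((N : ℝ) - 2) ^ 2 / 4 - ((N : ℝ) - 2 - m) * (m + 2)) with hQ
  have hQ0 : 0 < Q := Real.sqrt_pos.mpr hDpos
  have hQ2 : Q ^ 2 = ((N : ℝ) - 2) ^ 2 / 4 - ((N : ℝ) - 2 - m) * (m + 2) := Real.sq_sqrt hDpos.le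
  have hma : ((N : ℝ) - 2) / 2 < m := by linarith
  have hη0 : 0 < η := by
    have := mul_pos (sub_pos.mpr hm1) (show 0 < m + 2 by linarith)
    rw [hη]; nlinarith
  have hρ0 : 0 < ρ := by
    rw [hρ]; nlinarith
  have hηm : η < m := by linarith
  have hηa : η < ((N : ℝ) - 2) / 2 := by linarith
  refine ⟨by linarith, (1 + K₀ ^ α + K₀) * 2 ^ (N : ℝ), ?_⟩
  intro t s σ ht hs hσ x hx
  have hr : 0 < ‖x‖ := norm_pos_iff.mpr hx
  generalize hrr : ‖x‖ = r at hr
  obtain ⟨ht0, ht1⟩ := aux_h r t η hr ht hη0.le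
  obtain ⟨hs0, hs1⟩ := aux_h r s η hr hs hη0.le
  obtain ⟨hσ0, hσ1⟩ := aux_h r σ η hr hσ hη0.le
  have hA : 0 ≤ 1 + K₀ ^ α + K₀ := by positivity
  have hg1 : g t x ≤ (1 + K₀ ^ α + K₀) * (1 + 1 / r) ^ (2 : ℝ) := by
    rw [hg, hrr]
    have hy : 1 ≤ 1 + 1 / r := by
      have : 0 < 1 / r := by positivity
      linarith
    have e1 : (r / (r + Real.sqrt t)) ^ (ρ * min 1 α) * r ^ (-2 : ℝ)
        ≤ (1 + 1 / r) ^ (2 : ℝ) := by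
      have h1 : (r / (r + Real.sqrt t)) ^ (ρ * min 1 α) ≤ 1 := by
        apply Real.rpow_le_one (by positivity)
        · rw [div_le_one (by positivity)]
          linarith [Real.sqrt_nonneg t]
        · exact mul_nonneg hρ0.le (le_min zero_le_one hα.le)
      have h2 := aux_inv r 2 hr (by norm_num)
      have h3 : 0 < r ^ (-2 : ℝ) := Real.rpow_pos_of_pos hr _
      nlinarith
    have e2 : (K₀ * (1 + Real.sqrt t / r) ^ η) ^ α ≤ K₀ ^ α * (1 + 1 / r) ^ (2 : ℝ) := by
      rw [Real.mul_rpow hK₀ ht0]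
      apply mul_le_mul_of_nonneg_left _ (by positivity)
      calc ((1 + Real.sqrt t / r) ^ η) ^ α ≤ ((1 + 1 / r) ^ η) ^ α :=
            Real.rpow_le_rpow ht0 ht1 hα.le
        _ = (1 + 1 / r) ^ (η * α) := by rw [← Real.rpow_mul (by linarith)]
        _ ≤ _ := Real.rpow_le_rpow_of_exponent_le hy (by
              rw [← hαm]; exact mul_le_mul_of_nonneg_right hηm.le hα.le)
    have e3 : K₀ * (if α ≤ 1 then 0 else
          r ^ (-(2 * (α - 1) / α)) * (1 + Real.sqrt t / r) ^ η)
        ≤ K₀ * (1 + 1 / r) ^ (2 : ℝ) := by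
      apply mul_le_mul_of_nonneg_left _ hK₀
      split_ifs with h
      · positivity
      · push Not at h
        have hp : 2 * (α - 1) / α = 2 - m := by rw [hm]; field_simp
        have hp0 : 0 ≤ 2 - m := by
          rw [← hp]; exact div_nonneg (by linarith) hα.le
        rw [hp]
        calc r ^ (-(2 - m)) * (1 + Real.sqrt t / r) ^ η
            ≤ (1 + 1 / r) ^ (2 - m) * (1 + 1 / r) ^ η :=
              mul_le_mul (aux_inv r _ hr hp0) ht1 ht0 (by positivity)
          _ = (1 + 1 / r) ^ (2 - m + η) := by rw [← Real.rpow_add (by linarith)]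
          _ ≤ _ := Real.rpow_le_rpow_of_exponent_le hy (by linarith)
    linarith
  have hy : 1 ≤ 1 + 1 / r := by
    have : 0 < 1 / r := by positivity
    linarith
  have hg2 : g t x * (1 + Real.sqrt s / r) ^ η
      ≤ (1 + K₀ ^ α + K₀) * (1 + 1 / r) ^ (2 + η) := by
    rw [Real.rpow_add (by linarith), ← mul_assoc]
    exact mul_le_mul hg1 hs1 hs0 (by positivity)
  have hg3 : g t x * (1 + Real.sqrt s / r) ^ η * (1 + Real.sqrt σ / r) ^ η
      ≤ (1 + K₀ ^ α + K₀) * (1 + 1 / r) ^ (2 + η + η) := by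
    rw [Real.rpow_add (by linarith) (2 + η), ← mul_assoc]
    exact mul_le_mul hg2 hσ1 hσ0 (by positivity)
  refine ⟨?_, ?_, ?_⟩
  · refine hg1.trans ?_
    rw [mul_assoc]
    exact mul_le_mul_of_nonneg_left (aux_pow N r 2 hr (by norm_num) (by linarith)) hA
  · refine hg2.trans ?_
    rw [mul_assoc]
    refine mul_le_mul_of_nonneg_left (le_trans ?_
      (aux_pow N r (((N : ℝ) + 2) / 2) hr (by linarith) (by linarith))) hA
    exact Real.rpow_le_rpow_of_exponent_le hy (by linarith)
  · refine hg3.trans ?_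
    rw [mul_assoc]
    have h := aux_pow N r ((N : ℝ) - (((N : ℝ) - 2) / 2 - η)) hr (by linarith) (by linarith)
    rw [neg_sub, sub_eq_neg_add _ (N : ℝ)] at h
    refine mul_le_mul_of_nonneg_left (le_trans ?_ h) hA
    exact Real.rpow_le_rpow_of_exponent_le hy (by linarith)

end
end

section
/- Let u ∈ C²((0,∞)), u ≢ 0, be a solution of u'' + ((N−1)/r)u' + |u|^α u = 0 on (0,∞). Then: (1) there exists a constant C such that |u(r)| ≤ C r^{−(N−2−2/α)} for all r > 1; (2) either u(r) converges to a finite limit as r→0 and in that case u'(r) → 0 as r→0, or there exists ε ∈ {+1,−1} such that r^{2/α} u(r) → ε β^{1/α} as r→0, and in that case r^{2/α+1} u'(r) → −ε (2/α) β^{1/α} as r→0. -/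
open Filter

/-- potential -/
noncomputable def potF (α β x : ℝ) : ℝ := |x| ^ (α + 2) / (α + 2) - β * x ^ 2 / 2

theorem potF_deriv (α β : ℝ) (hα : 0 < α) (x : ℝ) :
    HasDerivAt (potF α β) (|x| ^ α * x - β * x) x := by
  have h1 := (hasDerivAt_abs_rpow x (p := α + 2) (by linarith)).div_const (α + 2)
  have h2 := (((hasDerivAt_id x).pow 2).const_mul β).div_const 2
  have h3 := h1.sub h2
  refine (h3.congr_deriv ?_)
  have : α + 2 ≠ 0 := by linarith
  simp only [add_sub_cancel_right, id]
  field_simp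
  simp
  ring

theorem potF_coercive (α β : ℝ) (hα : 0 < α) (hβ : 0 < β) :
    ∃ K : ℝ, 0 ≤ K ∧ ∀ x, x ^ 2 - K ≤ potF α β x := by
  set A := (α + 2) * (β / 2 + 1) with hA
  have hA0 : 0 < A := by positivity
  refine ⟨(1 + β / 2) * (A ^ (1 / α)) ^ 2, by positivity, fun x => ?_⟩
  unfold potF
  have hpow : |x| ^ (α + 2) = |x| ^ α * x ^ 2 := by
    rw [Real.rpow_add_of_nonneg (abs_nonneg x) hα.le (by norm_num)]
    norm_num
  rw [hpow]
  by_cases h : A ≤ |x| ^ α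
  · have h1 : (β / 2 + 1) * x ^ 2 ≤ |x| ^ α * x ^ 2 / (α + 2) := by
      rw [le_div_iff₀ (by linarith)]
      nlinarith [mul_le_mul_of_nonneg_right h (sq_nonneg x)]
    have : 0 ≤ (1 + β / 2) * (A ^ (1 / α)) ^ 2 := by positivity
    linarith
  · push Not at h
    have hx : |x| ≤ A ^ (1 / α) := by
      have := Real.rpow_le_rpow (by positivity) h.le (z := 1 / α) (by positivity)
      rwa [← Real.rpow_mul (abs_nonneg x), mul_one_div_cancel hα.ne', Real.rpow_one] at this
    have hx2 : x ^ 2 ≤ (A ^ (1 / α)) ^ 2 := by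
      rw [← sq_abs x]; gcongr
    have : 0 ≤ |x| ^ α * x ^ 2 / (α + 2) := by positivity
    nlinarith [mul_le_mul_of_nonneg_left hx2 (by positivity : 0 ≤ 1 + β / 2)]

/-- zeros of the restoring force -/
theorem force_zero (α β x : ℝ) (hα : 0 < α) (h : |x| ^ α * x - β * x = 0) :
    x = 0 ∨ x = β ^ (1 / α) ∨ x = -β ^ (1 / α) := by
  by_cases hx : x = 0
  · exact Or.inl hx
  right
  have h1 : |x| ^ α = β := by
    have : (|x| ^ α - β) * x = 0 := by linarith
    rcases mul_eq_zero.1 this with h | h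
    · linarith
    · exact absurd h hx
  have h2 : |x| = β ^ (1 / α) := by
    rw [← h1, ← Real.rpow_mul (abs_nonneg x), mul_one_div_cancel hα.ne', Real.rpow_one]
  rcases abs_choice x with h | h <;> rw [h] at h2
  · left; exact h2
  · right; linarith

/-- monotone from eventually nonneg derivative -/
theorem mono_of_deriv (T : ℝ) (f f' : ℝ → ℝ) (hf : ∀ t, HasDerivAt f (f' t) t)
    (h : ∀ t, T ≤ t → 0 ≤ f' t) : MonotoneOn f (Set.Ici T) := by
  refine monotoneOn_of_deriv_nonneg (convex_Ici T)
    (fun t _ => (hf t).continuousAt.continuousWithinAt)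
    (fun t _ => (hf t).differentiableAt.differentiableWithinAt) ?_
  intro t ht
  rw [(hf t).deriv]
  exact h t (interior_subset ht)

theorem exp_deriv (k t : ℝ) : HasDerivAt (fun t : ℝ => Real.exp (k * t)) (k * Real.exp (k * t)) t := by
  have := ((hasDerivAt_id t).const_mul k).exp
  refine this.congr_deriv ?_
  simp [mul_comm]

theorem exp_tendsto (k : ℝ) (hk : 0 < k) : Tendsto (fun t : ℝ => Real.exp (-k * t)) atTop (nhds 0) := by
  apply Real.tendsto_exp_atBot.comp
  exact (tendsto_const_mul_atBot_of_neg (by linarith)).2 tendsto_id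

/-- exponentially small derivative gives a limit -/
theorem lim_of_deriv (T C δ : ℝ) (hδ : 0 < δ) (hC : 0 ≤ C) (f f' : ℝ → ℝ)
    (hf : ∀ t, HasDerivAt f (f' t) t)
    (h : ∀ t, T ≤ t → |f' t| ≤ C * Real.exp (-δ * t)) :
    ∃ L, Tendsto f atTop (nhds L) ∧ ∀ t, T ≤ t → |f t - L| ≤ C / δ * Real.exp (-δ * t) := by
  have hd1 : ∀ t, HasDerivAt (fun t => f t - C / δ * Real.exp (-δ * t))
      (f' t + C * Real.exp (-δ * t)) t := by
    intro t
    refine ((hf t).sub ((exp_deriv (-δ) t).const_mul (C / δ))).congr_deriv ?_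
    field_simp; ring
  have hd2 : ∀ t, HasDerivAt (fun t => -f t - C / δ * Real.exp (-δ * t))
      (-f' t + C * Real.exp (-δ * t)) t := by
    intro t
    refine ((hf t).neg.sub ((exp_deriv (-δ) t).const_mul (C / δ))).congr_deriv ?_
    field_simp; ring
  have m1 := mono_of_deriv T _ _ hd1 (fun t ht => by linarith [(abs_le.1 (h t ht)).1])
  have m2 := mono_of_deriv T _ _ hd2 (fun t ht => by linarith [(abs_le.1 (h t ht)).2])
  have e0 : Tendsto (fun t : ℝ => C / δ * Real.exp (-δ * t)) atTop (nhds 0) := by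
    simpa using (exp_tendsto δ hδ).const_mul (C / δ)
  have hbd : ∀ t, T ≤ t → f t - C / δ * Real.exp (-δ * t) ≤ f T + C / δ * Real.exp (-δ * T) := by
    intro t ht
    have := m2 (Set.self_mem_Ici) ht ht
    simp only at this
    have : 0 ≤ C / δ * Real.exp (-δ * t) := by positivity
    linarith
  obtain ⟨L, hL⟩ : ∃ L, Tendsto (fun t => f t - C / δ * Real.exp (-δ * t)) atTop (nhds L) := by
    have hm : Monotone (fun t => (fun t => f t - C / δ * Real.exp (-δ * t)) (max T t)) := by
      intro a b hab
      exact m1 (Set.mem_Ici.2 (le_max_left _ _)) (Set.mem_Ici.2 (le_max_left _ _)) (max_le_max le_rfl hab)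
    have hl := tendsto_atTop_ciSup hm ⟨f T + C / δ * Real.exp (-δ * T), by
      rintro _ ⟨t, rfl⟩
      exact hbd _ (le_max_left _ _)⟩
    refine ⟨_, hl.congr' ?_⟩
    filter_upwards [eventually_ge_atTop T] with t ht
    simp [max_eq_right ht]
  have hfL : Tendsto f atTop (nhds L) := by
    have := hL.add e0
    simpa using this
  refine ⟨L, hfL, fun t ht => ?_⟩
  have hL2 : Tendsto (fun t => -f t - C / δ * Real.exp (-δ * t)) atTop (nhds (-L)) := by
    simpa using hfL.neg.sub e0
  have i1 : f t - C / δ * Real.exp (-δ * t) ≤ L := ge_of_tendsto hL (by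
    filter_upwards [eventually_ge_atTop t] with s hs
    exact m1 ht (ht.trans hs) hs)
  have i2 : -f t - C / δ * Real.exp (-δ * t) ≤ -L := ge_of_tendsto hL2 (by
    filter_upwards [eventually_ge_atTop t] with s hs
    exact m2 ht (ht.trans hs) hs)
  rw [abs_le]; constructor <;> linarith

theorem energy_deriv (α : ℝ) (w v : ℝ → ℝ) (β a : ℝ) (hα : 0 < α)
    (hw : ∀ t, HasDerivAt w (v t) t)
    (hv : ∀ t, HasDerivAt v (-a * v t + β * w t - |w t| ^ α * w t) t) (t : ℝ) :
    HasDerivAt (fun t => v t ^ 2 / 2 + potF α β (w t)) (-a * v t ^ 2) t := by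
  have h := (((hv t).pow 2).div_const 2).add ((potF_deriv α β hα (w t)).comp t (hw t))
  refine h.congr_deriv ?_
  simp; ring

theorem growth_bound (α : ℝ) (w v : ℝ → ℝ) (β a : ℝ) (hα : 0 < α) (hβ : 0 < β) (ha : 0 < a)
    (hw : ∀ t, HasDerivAt w (v t) t)
    (hv : ∀ t, HasDerivAt v (-a * v t + β * w t - |w t| ^ α * w t) t) :
    ∃ C : ℝ, ∀ t, t ≤ 0 → |w t| ≤ C * Real.exp (-a * t) := by
  obtain ⟨K, hK, hF⟩ := potF_coercive α β hα hβ
  set E := fun t => v t ^ 2 / 2 + potF α β (w t) with hE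
  have hEd := energy_deriv α w v β a hα hw hv
  have hd : ∀ t, HasDerivAt (fun t => (E t + K) * Real.exp (2 * a * t))
      ((-a * v t ^ 2 + 2 * a * (E t + K)) * Real.exp (2 * a * t)) t := by
    intro t
    refine (((hEd t).add_const K).mul (exp_deriv (2 * a) t)).congr_deriv ?_
    simp only [hE]; ring
  have hm : Monotone (fun t => (E t + K) * Real.exp (2 * a * t)) := by
    refine monotone_of_deriv_nonneg (fun t => (hd t).differentiableAt) fun t => ?_
    rw [(hd t).deriv]
    refine mul_nonneg ?_ (Real.exp_pos _).le
    have := hF (w t)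
    have : v t ^ 2 ≤ 2 * (E t + K) := by simp only [hE]; nlinarith [sq_nonneg (w t)]
    nlinarith
  refine ⟨Real.sqrt (E 0 + K), fun t ht => ?_⟩
  have h1 := hm ht
  simp only [mul_zero, Real.exp_zero, mul_one] at h1
  have h2 : w t ^ 2 ≤ E t + K := by
    have := hF (w t); simp only [hE]; nlinarith [sq_nonneg (v t)]
  have h3 : E t + K ≤ (E 0 + K) * Real.exp (-a * t) ^ 2 := by
    have e : Real.exp (2 * a * t) * Real.exp (-a * t) ^ 2 = 1 := by
      rw [← Real.exp_nat_mul, ← Real.exp_add]; simp; ring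
    calc E t + K = ((E t + K) * Real.exp (2 * a * t)) * Real.exp (-a * t) ^ 2 := by
          rw [mul_assoc, e, mul_one]
      _ ≤ _ := by gcongr
  have h0 : 0 ≤ E 0 + K := by
    have := hF (w 0); simp only [hE]; nlinarith [sq_nonneg (v 0), sq_nonneg (w 0)]
  apply abs_le_of_sq_le_sq _ (by positivity)
  rw [mul_pow, Real.sq_sqrt h0]
  linarith

theorem converge (α : ℝ) (w v : ℝ → ℝ) (β a : ℝ) (hα : 0 < α) (hβ : 0 < β) (ha : 0 < a)
    (hw : ∀ t, HasDerivAt w (v t) t)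
    (hv : ∀ t, HasDerivAt v (-a * v t + β * w t - |w t| ^ α * w t) t) :
    ∃ l, (l = 0 ∨ l = β ^ (1 / α) ∨ l = -β ^ (1 / α)) ∧ Tendsto w atTop (nhds l) ∧
      Tendsto v atTop (nhds 0) := by
  obtain ⟨K, hK, hF⟩ := potF_coercive α β hα hβ
  set E := fun t => v t ^ 2 / 2 + potF α β (w t) with hE
  have hEd := energy_deriv α w v β a hα hw hv
  have hanti : Antitone E := by
    refine antitone_of_deriv_nonpos (fun t => (hEd t).differentiableAt) fun t => ?_
    rw [(hEd t).deriv]; nlinarith [sq_nonneg (v t)]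
  have hEb : ∀ t, w t ^ 2 + v t ^ 2 / 2 - K ≤ E t := by
    intro t; have := hF (w t); simp only [hE]; linarith
  have hElim : ∃ e, Tendsto E atTop (nhds e) := by
    refine ⟨_, tendsto_atTop_ciInf hanti ⟨-K, ?_⟩⟩
    rintro _ ⟨t, rfl⟩
    nlinarith [hEb t, sq_nonneg (w t), sq_nonneg (v t)]
  obtain ⟨e, he⟩ := hElim
  -- bounds
  obtain ⟨R, hR0, hR⟩ : ∃ R, 0 < R ∧ ∀ t, 0 ≤ t → |w t| ≤ R ∧ |v t| ≤ R := by
    have h0 : 0 ≤ E 0 + K := by nlinarith [hEb 0, sq_nonneg (w 0), sq_nonneg (v 0)]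
    refine ⟨2 * (E 0 + K) + 1, by linarith, fun t ht => ?_⟩
    have h1 := hanti ht
    have h2 := hEb t
    constructor <;> apply abs_le_of_sq_le_sq _ (by linarith) <;>
      nlinarith [sq_nonneg (w t), sq_nonneg (v t)]
  set M := a * R + β * R + R ^ α * R with hM
  have hM0 : 0 < M := by positivity
  have hv'b : ∀ t, 0 ≤ t → |-a * v t + β * w t - |w t| ^ α * w t| ≤ M := by
    intro t ht
    obtain ⟨h1, h2⟩ := hR t ht
    have h3 : |w t| ^ α ≤ R ^ α := Real.rpow_le_rpow (abs_nonneg _) h1 hα.le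
    calc |-a * v t + β * w t - |w t| ^ α * w t|
        ≤ |-a * v t| + |β * w t| + |(|w t| ^ α * w t)| := by
          refine (abs_sub _ _).trans ?_
          gcongr
          exact abs_add_le _ _
      _ = a * |v t| + β * |w t| + |w t| ^ α * |w t| := by
          rw [abs_mul, abs_mul, abs_mul, abs_neg, abs_of_pos ha, abs_of_pos hβ,
            abs_of_nonneg (Real.rpow_nonneg (abs_nonneg _) _)]
      _ ≤ M := by rw [hM]; gcongr
  -- v → 0
  have hv0 : Tendsto v atTop (nhds 0) := by
    rw [Metric.tendsto_nhds]
    intro ε hε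
    set h := ε / (2 * M) with hh
    have hhp : 0 < h := by positivity
    have hMh : M * h = ε / 2 := by rw [hh]; field_simp
    have hdiff : Tendsto (fun t => E t - E (t + h)) atTop (nhds 0) := by
      have := he.sub (he.comp (tendsto_atTop_add_const_right atTop h tendsto_id))
      simpa using this
    have hev := hdiff.eventually (gt_mem_nhds (show 0 < a * h * (ε / 2) ^ 2 by positivity))
    filter_upwards [hev, eventually_ge_atTop 0] with t ht ht0
    obtain ⟨ξ, hξ, hξe⟩ := exists_hasDerivAt_eq_slope E _ (show t < t + h by linarith)
      (fun s _ => (hEd s).continuousAt.continuousWithinAt) (fun s _ => hEd s)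
    obtain ⟨ζ, hζ, hζe⟩ := exists_hasDerivAt_eq_slope v _ hξ.1
      (fun s _ => (hv s).continuousAt.continuousWithinAt) (fun s _ => hv s)
    rw [add_sub_cancel_left, eq_div_iff hhp.ne'] at hξe
    rw [eq_div_iff (by linarith [hξ.1])] at hζe
    have h1 : v ξ ^ 2 < (ε / 2) ^ 2 := by
      by_contra! hcon
      have : a * h * (ε / 2) ^ 2 ≤ a * h * v ξ ^ 2 := by gcongr
      linarith
    have h2 : |v ξ| < ε / 2 := abs_lt_of_sq_lt_sq h1 (by positivity)
    have h3 : |v ξ - v t| ≤ M * h := by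
      rw [← hζe, abs_mul, abs_of_pos (show 0 < ξ - t by linarith [hξ.1])]
      exact mul_le_mul (hv'b ζ (by linarith [hζ.1])) (by linarith [hξ.2])
        (by linarith [hξ.1]) hM0.le
    rw [Real.dist_eq, sub_zero]
    have h4 := abs_sub_abs_le_abs_sub (v t) (v ξ)
    rw [abs_sub_comm] at h4
    linarith
  have hFw : Tendsto (fun t => potF α β (w t)) atTop (nhds e) := by
    have := he.sub ((hv0.pow 2).div_const 2)
    simpa [hE] using this
  have hwc : Continuous w := continuous_iff_continuousAt.2 fun t => (hw t).continuousAt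
  obtain ⟨l, hl⟩ : ∃ l, Tendsto w atTop (nhds l) := by
    refine tendsto_of_no_upcrossings dense_univ ?_ ?_ ?_
    · rintro p - q - hpq ⟨hp, hq⟩
      have hy : ∀ y ∈ Set.Ioo p q, potF α β y = e := by
        intro y hy
        by_contra hne
        have hev := hFw.eventually (isOpen_ne.mem_nhds (Ne.symm hne) : {z | z ≠ potF α β y} ∈ nhds e)
        obtain ⟨T, hT⟩ := eventually_atTop.1 hev
        obtain ⟨t1, ht1, h1⟩ := (frequently_atTop.1 hp) T
        obtain ⟨t2, ht2, h2⟩ := (frequently_atTop.1 hq) T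
        obtain ⟨s, hs, hse⟩ := intermediate_value_uIcc (a := t1) (b := t2) hwc.continuousOn
          (show y ∈ Set.uIcc (w t1) (w t2) from Set.mem_uIcc_of_le (h1.le.trans hy.1.le) (hy.2.le.trans h2.le))
        have hsT : T ≤ s := (le_min ht1 ht2).trans hs.1
        exact hT s hsT (by rw [hse])
      have hsub : Set.Ioo p q ⊆ {0, β ^ (1 / α), -β ^ (1 / α)} := by
        intro y hyI
        have hd := potF_deriv α β hα y
        have hc : HasDerivAt (potF α β) 0 y := by
          refine (hasDerivAt_const y e).congr_of_eventuallyEq ?_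
          filter_upwards [isOpen_Ioo.mem_nhds hyI] with z hz using hy z hz
        simpa using force_zero α β y hα (hd.unique hc)
      exact Set.Ioo_infinite hpq ((Set.toFinite _).subset hsub)
    · refine ⟨R, ?_⟩
      rw [eventually_map]
      filter_upwards [eventually_ge_atTop 0] with t ht using (abs_le.1 (hR t ht).1).2
    · refine ⟨-R, ?_⟩
      rw [eventually_map]
      filter_upwards [eventually_ge_atTop 0] with t ht using (abs_le.1 (hR t ht).1).1
  refine ⟨l, ?_, hl, hv0⟩
  apply force_zero α β l hα
  have hlim : Tendsto (fun t => -a * v t + β * w t - |w t| ^ α * w t) atTop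
      (nhds (-a * 0 + β * l - |l| ^ α * l)) :=
    ((hv0.const_mul _).add (hl.const_mul _)).sub
      ((hl.abs.rpow_const (Or.inr hα.le)).mul hl)
  have hx : ∀ t, ∃ ξ ∈ Set.Ioo t (t + 1), -a * v ξ + β * w ξ - |w ξ| ^ α * w ξ = v (t + 1) - v t := by
    intro t
    obtain ⟨ζ, hζ, hζe⟩ := exists_hasDerivAt_eq_slope v _ (show t < t + 1 by linarith)
      (fun s _ => (hv s).continuousAt.continuousWithinAt) (fun s _ => hv s)
    exact ⟨ζ, hζ, by simpa using hζe⟩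
  choose ξ hξ hξe using hx
  have hξt : Tendsto ξ atTop atTop := tendsto_atTop_mono (fun t => (hξ t).1.le) tendsto_id
  have h1 := hlim.comp hξt
  have h2 : Tendsto (fun t => v (t + 1) - v t) atTop (nhds 0) := by
    simpa using (hv0.comp (tendsto_atTop_add_const_right atTop 1 tendsto_id)).sub hv0
  have h3 := tendsto_nhds_unique h1 (h2.congr fun t => (hξe t).symm)
  linarith

theorem decay (γ μ α : ℝ) (hα : 0 < α) (hμ : 0 < μ) (hμγ : μ < γ) (hαγ : α * γ = 2)
    (w Q : ℝ → ℝ) (hw : ∀ t, HasDerivAt w (Q t - γ * w t) t)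
    (hQ : ∀ t, HasDerivAt Q (μ * Q t - |w t| ^ α * w t) t)
    (hw0 : Tendsto w atTop (nhds 0)) (hQ0 : Tendsto Q atTop (nhds 0)) :
    (∃ L, Tendsto (fun t => Real.exp (γ * t) * w t) atTop (nhds L)) ∧
      Tendsto (fun t => Real.exp ((γ + 1) * t) * Q t) atTop (nhds 0) := by
  set m := γ + μ with hm
  have hm0 : 0 < m := by linarith
  set P := fun t => Q t - m * w t with hP
  have hPd : ∀ t, HasDerivAt P (-γ * P t - |w t| ^ α * w t) t := by
    intro t
    refine ((hQ t).sub ((hw t).const_mul m)).congr_deriv ?_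
    simp only [hP, hm]; ring
  have hP0 : Tendsto P atTop (nhds 0) := by simpa using hQ0.sub (hw0.const_mul m)
  set ε := 1 / (2 * (α + 1)) with hε
  have hεp : 0 < ε := by positivity
  have hwα : Tendsto (fun t => |w t| ^ α) atTop (nhds 0) := by
    have := hw0.abs.rpow_const (p := α) (Or.inr hα.le)
    simpa [Real.zero_rpow hα.ne'] using this
  obtain ⟨T, hT⟩ := eventually_atTop.1
    ((hwα.eventually (gt_mem_nhds (show 0 < m * μ / 2 by positivity))).and
     (hwα.eventually (gt_mem_nhds (show 0 < m * ε / 2 by positivity))))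
  have hDd : ∀ t, HasDerivAt (fun t => Q t ^ 2 - P t ^ 2)
      (2 * μ * Q t ^ 2 + 2 * γ * P t ^ 2 - 2 * m * (|w t| ^ α * w t ^ 2)) t := by
    intro t
    refine (((hQ t).pow 2).sub ((hPd t).pow 2)).congr_deriv ?_
    simp only [hP]; push_cast; ring
  have hDm := mono_of_deriv T _ _ hDd (by
    intro t ht
    have h1 := (hT t ht).1
    have h2 : m ^ 2 * w t ^ 2 ≤ 2 * (P t ^ 2 + Q t ^ 2) := by
      have : m * w t = Q t - P t := by simp only [hP]; ring
      rw [← mul_pow, this]; nlinarith [sq_nonneg (Q t + P t)]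
    have h3 : |w t| ^ α * w t ^ 2 ≤ m * μ / 2 * w t ^ 2 := by gcongr
    have h4 : 2 * m * (|w t| ^ α * w t ^ 2) ≤ 2 * m * (m * μ / 2 * w t ^ 2) := by gcongr
    have h5 : 2 * m * (m * μ / 2 * w t ^ 2) ≤ μ * (2 * (P t ^ 2 + Q t ^ 2)) := by
      calc 2 * m * (m * μ / 2 * w t ^ 2) = μ * (m ^ 2 * w t ^ 2) := by ring
        _ ≤ _ := by gcongr
    nlinarith [mul_nonneg (sub_nonneg.2 hμγ.le) (sq_nonneg (P t))])
  have hQP : ∀ t, T ≤ t → |Q t| ≤ |P t| := by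
    intro t ht
    have hlim : Tendsto (fun t => Q t ^ 2 - P t ^ 2) atTop (nhds 0) := by
      simpa using (hQ0.pow 2).sub (hP0.pow 2)
    have : Q t ^ 2 - P t ^ 2 ≤ 0 := ge_of_tendsto hlim (by
      filter_upwards [eventually_ge_atTop t] with s hs
      exact hDm ht (ht.trans hs) hs)
    exact sq_le_sq.1 (by linarith)
  have hwP : ∀ t, T ≤ t → m * |w t| ≤ 2 * |P t| := by
    intro t ht
    have : m * w t = Q t - P t := by simp only [hP]; ring
    rw [← abs_of_pos hm0, ← abs_mul, this]
    linarith [abs_sub (Q t) (P t), hQP t ht]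
  -- first decay
  set κ := γ - ε with hκ
  have hBd : ∀ t, HasDerivAt (fun t => -(P t ^ 2 * Real.exp (2 * κ * t)))
      ((2 * ε * P t ^ 2 + 2 * P t * (|w t| ^ α * w t)) * Real.exp (2 * κ * t)) t := by
    intro t
    refine (((hPd t).pow 2).mul (exp_deriv (2 * κ) t)).neg.congr_deriv ?_
    simp only [hκ]; push_cast; simp; ring
  have hBm := mono_of_deriv T _ _ hBd (by
    intro t ht
    refine mul_nonneg ?_ (Real.exp_pos _).le
    have h1 : |P t * (|w t| ^ α * w t)| ≤ ε * P t ^ 2 := by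
      rw [abs_mul, abs_mul, abs_of_nonneg (Real.rpow_nonneg (abs_nonneg _) _), ← sq_abs (P t)]
      have h2 : |w t| ^ α * |w t| ≤ m * ε / 2 * |w t| :=
        mul_le_mul_of_nonneg_right (hT t ht).2.le (abs_nonneg _)
      have h3 := mul_le_mul_of_nonneg_left (hwP t ht) (by positivity : 0 ≤ ε / 2)
      have h4 : |w t| ^ α * |w t| ≤ ε * |P t| := by linarith
      calc |P t| * (|w t| ^ α * |w t|) ≤ |P t| * (ε * |P t|) := by gcongr
        _ = _ := by ring
    have := (abs_le.1 h1).1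
    linarith)
  obtain ⟨C1, hC1, hPb⟩ : ∃ C1, 0 ≤ C1 ∧ ∀ t, T ≤ t → |P t| ≤ C1 * Real.exp (-κ * t) := by
    refine ⟨|P T| * Real.exp (κ * T), by positivity, fun t ht => ?_⟩
    have h1 := hBm Set.self_mem_Ici ht ht
    simp only [neg_le_neg_iff] at h1
    have e1 : ∀ s, Real.exp (2 * κ * s) = Real.exp (κ * s) ^ 2 := by
      intro s; rw [← Real.exp_nat_mul]; push_cast; ring_nf
    rw [e1, e1, ← mul_pow, ← mul_pow] at h1
    have h2 := sq_le_sq.1 h1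
    rw [abs_mul, abs_mul, Real.abs_exp, Real.abs_exp] at h2
    have e2 : Real.exp (κ * t) * Real.exp (-κ * t) = 1 := by rw [← Real.exp_add]; simp
    calc |P t| = |P t| * Real.exp (κ * t) * Real.exp (-κ * t) := by rw [mul_assoc, e2, mul_one]
      _ ≤ _ := by gcongr
  obtain ⟨C2, hC2, hg⟩ : ∃ C2, 0 ≤ C2 ∧ ∀ t, T ≤ t →
      |(|w t| ^ α * w t)| ≤ C2 * Real.exp (-(γ + 3 / 2) * t) := by
    refine ⟨(2 * C1 / m) ^ α * (2 * C1 / m), by positivity, fun t ht => ?_⟩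
    have h1 : |w t| ≤ 2 * C1 / m * Real.exp (-κ * t) := by
      rw [div_mul_eq_mul_div, le_div_iff₀ hm0]
      linarith [hwP t ht, hPb t ht]
    rw [abs_mul, abs_of_nonneg (Real.rpow_nonneg (abs_nonneg _) _)]
    have h2 : |w t| ^ α ≤ (2 * C1 / m * Real.exp (-κ * t)) ^ α :=
      Real.rpow_le_rpow (abs_nonneg _) h1 hα.le
    rw [Real.mul_rpow (by positivity) (Real.exp_pos _).le, ← Real.exp_mul] at h2
    have e1 : Real.exp (-κ * t * α) * Real.exp (-κ * t) = Real.exp (-(γ + 3 / 2) * t) := by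
      rw [← Real.exp_add]
      congr 1
      have : (α + 1) * κ = γ + 3 / 2 := by
        rw [hκ, hε]; field_simp; linarith
      rw [← this]; ring
    calc |w t| ^ α * |w t|
        ≤ ((2 * C1 / m) ^ α * Real.exp (-κ * t * α)) * (2 * C1 / m * Real.exp (-κ * t)) := by gcongr
      _ = _ := by rw [← e1]; ring
  obtain ⟨LP, hLP, -⟩ := lim_of_deriv T C2 (3 / 2) (by norm_num) hC2
    (fun t => Real.exp (γ * t) * P t) (fun t => -(Real.exp (γ * t) * (|w t| ^ α * w t)))
    (fun t => ((exp_deriv γ t).mul (hPd t)).congr_deriv (by ring))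
    (by
      intro t ht
      rw [abs_neg, abs_mul, Real.abs_exp]
      calc _ ≤ Real.exp (γ * t) * (C2 * Real.exp (-(γ + 3 / 2) * t)) := by gcongr; exact hg t ht
        _ = C2 * (Real.exp (γ * t) * Real.exp (-(γ + 3 / 2) * t)) := by ring
        _ = _ := by rw [← Real.exp_add]; ring_nf)
  set δ := μ + γ + 3 / 2 with hδ
  have hδ0 : 0 < δ := by linarith
  obtain ⟨LQ, hLQ, hQb⟩ := lim_of_deriv T C2 δ hδ0 hC2
    (fun t => Real.exp (-μ * t) * Q t) (fun t => -(Real.exp (-μ * t) * (|w t| ^ α * w t)))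
    (fun t => ((exp_deriv (-μ) t).mul (hQ t)).congr_deriv (by ring))
    (by
      intro t ht
      rw [abs_neg, abs_mul, Real.abs_exp]
      calc _ ≤ Real.exp (-μ * t) * (C2 * Real.exp (-(γ + 3 / 2) * t)) := by gcongr; exact hg t ht
        _ = C2 * (Real.exp (-μ * t) * Real.exp (-(γ + 3 / 2) * t)) := by ring
        _ = _ := by rw [← Real.exp_add, hδ]; ring_nf)
  have hLQ0 : LQ = 0 := by
    refine tendsto_nhds_unique hLQ ?_
    simpa using (exp_tendsto μ hμ).mul hQ0
  subst hLQ0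
  have hQlim : Tendsto (fun t => Real.exp ((γ + 1) * t) * Q t) atTop (nhds 0) := by
    have h0 : Tendsto (fun t : ℝ => C2 / δ * Real.exp (-(1 / 2) * t)) atTop (nhds 0) := by
      simpa using (exp_tendsto (1 / 2) (by norm_num)).const_mul (C2 / δ)
    refine squeeze_zero_norm' ?_ h0
    filter_upwards [eventually_ge_atTop T] with t ht
    have h1 := hQb t ht
    rw [sub_zero, abs_mul, Real.abs_exp] at h1
    rw [Real.norm_eq_abs, abs_mul, Real.abs_exp]
    calc Real.exp ((γ + 1) * t) * |Q t|
        = Real.exp ((γ + 1 + μ) * t) * (Real.exp (-μ * t) * |Q t|) := by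
          rw [← mul_assoc, ← Real.exp_add]; ring_nf
      _ ≤ Real.exp ((γ + 1 + μ) * t) * (C2 / δ * Real.exp (-δ * t)) := by gcongr
      _ = C2 / δ * (Real.exp ((γ + 1 + μ) * t) * Real.exp (-δ * t)) := by ring
      _ = _ := by rw [← Real.exp_add, hδ]; ring_nf
  refine ⟨⟨(0 * 0 - LP) / m, ?_⟩, hQlim⟩
  have h1 := ((((exp_tendsto 1 one_pos).mul hQlim).sub hLP).div_const m)
  refine h1.congr fun t => ?_
  have : Real.exp (-1 * t) * (Real.exp ((γ + 1) * t) * Q t) = Real.exp (γ * t) * Q t := by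
    rw [← mul_assoc, ← Real.exp_add]; ring_nf
  rw [this]
  simp only [hP]
  field_simp
  ring

theorem stmt_13 (N : ℕ) (hN : 3 ≤ N) (α β : ℝ)
    (hα1 : 2 / ((N : ℝ) - 2) < α) (hα2 : α < 4 / ((N : ℝ) - 2))
    (hβ : β = 2 / α * ((N : ℝ) - 2 - 2 / α))
    (u : ℝ → ℝ) (huC2 : ContDiffOn ℝ 2 u (Set.Ioi 0))
    (hune : ∃ r : ℝ, 0 < r ∧ u r ≠ 0)
    (huode : ∀ r : ℝ, 0 < r →
      deriv (deriv u) r + (((N : ℝ) - 1) / r) * deriv u r + |u r| ^ α * u r = 0) :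
    -- (1) |u(r)| ≤ C r^{-(N-2-2/α)} for r > 1
    (∃ C : ℝ, ∀ r : ℝ, 1 < r → |u r| ≤ C * r ^ (-((N : ℝ) - 2 - 2 / α))) ∧
    -- (2) dichotomy as r → 0
    (((∃ L : ℝ, Tendsto u (nhdsWithin 0 (Set.Ioi 0)) (nhds L)) ∧
        Tendsto (deriv u) (nhdsWithin 0 (Set.Ioi 0)) (nhds 0)) ∨
      (∃ ε : ℝ, (ε = 1 ∨ ε = -1) ∧
        Tendsto (fun r : ℝ => r ^ (2 / α) * u r)
          (nhdsWithin 0 (Set.Ioi 0)) (nhds (ε * β ^ (1 / α))) ∧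
        Tendsto (fun r : ℝ => r ^ (2 / α + 1) * deriv u r)
          (nhdsWithin 0 (Set.Ioi 0)) (nhds (-ε * (2 / α) * β ^ (1 / α))))) := by
  have hN2 : (0 : ℝ) < (N : ℝ) - 2 := by
    have : (3 : ℝ) ≤ N := by exact_mod_cast hN
    linarith
  have hα : 0 < α := lt_trans (by positivity) hα1
  set γ := 2 / α with hγ
  have hαγ : α * γ = 2 := by rw [hγ]; field_simp
  have hγ0 : 0 < γ := by positivity
  set μ := (N : ℝ) - 2 - γ with hμd
  have hμ : 0 < μ := by
    rw [div_lt_iff₀ hN2] at hα1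
    have : α * γ < α * ((N : ℝ) - 2) := by rw [hαγ]; linarith
    have := lt_of_mul_lt_mul_left this hα.le
    linarith
  have hμγ : μ < γ := by
    rw [lt_div_iff₀ hN2] at hα2
    have : α * ((N : ℝ) - 2) < α * (2 * γ) := by linarith
    have := lt_of_mul_lt_mul_left this hα.le
    linarith
  have hβ0 : 0 < β := by rw [hβ]; positivity
  have hu1 : ∀ r : ℝ, 0 < r → HasDerivAt u (deriv u r) r := by
    intro r hr
    exact ((huC2.contDiffAt (Ioi_mem_nhds hr)).differentiableAt (by norm_num)).hasDerivAt
  have hu2 : ∀ r : ℝ, 0 < r → HasDerivAt (deriv u) (deriv (deriv u) r) r := by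
    intro r hr
    have h1 : ContDiffOn ℝ 1 (deriv u) (Set.Ioi 0) :=
      huC2.deriv_of_isOpen isOpen_Ioi (by norm_num)
    exact ((h1.contDiffAt (Ioi_mem_nhds hr)).differentiableAt (by norm_num)).hasDerivAt
  set w : ℝ → ℝ := fun t => Real.exp (-γ * t) * u (Real.exp (-1 * t)) with hwdef
  set Q : ℝ → ℝ := fun t => -(Real.exp (-(γ + 1) * t) * deriv u (Real.exp (-1 * t))) with hQdef
  have hw : ∀ t, HasDerivAt w (Q t - γ * w t) t := by
    intro t
    have h1 := (hu1 _ (Real.exp_pos (-1 * t))).comp t (exp_deriv (-1) t)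
    refine ((exp_deriv (-γ) t).mul h1).congr_deriv ?_
    have e : Real.exp (-(γ + 1) * t) = Real.exp (-γ * t) * Real.exp (-1 * t) := by
      rw [← Real.exp_add]; ring_nf
    simp only [hwdef, hQdef, Function.comp, e]; ring
  have hg : ∀ t, |w t| ^ α * w t = Real.exp (-(γ + 2) * t) *
      (|u (Real.exp (-1 * t))| ^ α * u (Real.exp (-1 * t))) := by
    intro t
    have e : Real.exp (-(γ + 2) * t) = Real.exp (-γ * t * α) * Real.exp (-γ * t) := by
      rw [← Real.exp_add, ← hαγ]; ring_nf
    simp only [hwdef]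
    rw [abs_mul, Real.abs_exp, Real.mul_rpow (Real.exp_pos _).le (abs_nonneg _), ← Real.exp_mul, e]
    ring
  have hQ : ∀ t, HasDerivAt Q (μ * Q t - |w t| ^ α * w t) t := by
    intro t
    have h1 := (hu2 _ (Real.exp_pos (-1 * t))).comp t (exp_deriv (-1) t)
    refine ((exp_deriv (-(γ + 1)) t).mul h1).neg.congr_deriv ?_
    have ho := huode _ (Real.exp_pos (-1 * t))
    rw [hg t]
    have e1 : Real.exp (-(γ + 1) * t) = Real.exp (-γ * t) * Real.exp (-1 * t) := by
      rw [← Real.exp_add]; ring_nf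
    have e2 : Real.exp (-(γ + 2) * t) = Real.exp (-γ * t) * Real.exp (-1 * t) ^ 2 := by
      rw [← Real.exp_nat_mul, ← Real.exp_add]; push_cast; ring_nf
    simp only [hQdef, Function.comp, e1, e2, hμd]
    have hr := Real.exp_pos (-1 * t)
    generalize Real.exp (-1 * t) = r at *
    have ho' : deriv (deriv u) r = -(((N : ℝ) - 1) / r * deriv u r) - |u r| ^ α * u r := by linarith
    rw [ho']
    field_simp
    ring
  set a := γ - μ with ha
  have ha0 : 0 < a := by linarith
  have hv : ∀ t, HasDerivAt (fun t => Q t - γ * w t)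
      (-a * (Q t - γ * w t) + β * w t - |w t| ^ α * w t) t := by
    intro t
    refine ((hQ t).sub ((hw t).const_mul γ)).congr_deriv ?_
    rw [hβ, ha]; ring
  have hlog : Tendsto (fun r : ℝ => -Real.log r) (nhdsWithin 0 (Set.Ioi 0)) atTop :=
    tendsto_neg_atBot_atTop.comp Real.tendsto_log_nhdsGT_zero
  have hexp : ∀ r : ℝ, 0 < r → ∀ k : ℝ, Real.exp (k * -Real.log r) = r ^ (-k) := by
    intro r hr k
    rw [Real.rpow_def_of_pos hr]; ring_nf
  have hwr : ∀ r : ℝ, 0 < r → w (-Real.log r) = r ^ γ * u r := by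
    intro r hr
    simp only [hwdef]
    rw [hexp r hr, hexp r hr]; simp
  have hQr : ∀ r : ℝ, 0 < r → Q (-Real.log r) = -(r ^ (γ + 1) * deriv u r) := by
    intro r hr
    simp only [hQdef]
    rw [hexp r hr, hexp r hr, neg_neg, neg_neg, Real.rpow_one]
  constructor
  · obtain ⟨C, hC⟩ := growth_bound α w _ β a hα hβ0 ha0 hw hv
    refine ⟨C, fun r hr => ?_⟩
    have hr0 : 0 < r := by linarith
    have h1 := hC (-Real.log r) (by linarith [Real.log_pos hr])
    rw [hwr r hr0, hexp r hr0, neg_neg, abs_mul, abs_of_pos (Real.rpow_pos_of_pos hr0 _)] at h1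
    have e : r ^ a = r ^ γ * r ^ (-μ) := by rw [← Real.rpow_add hr0]; rfl
    rw [e] at h1
    have hp := Real.rpow_pos_of_pos hr0 γ
    refine le_of_mul_le_mul_left ?_ hp
    linarith
  · obtain ⟨l, hl, hwl, hvl⟩ := converge α w _ β a hα hβ0 ha0 hw hv
    have hQl : Tendsto Q atTop (nhds (γ * l)) := by
      have := hvl.add (hwl.const_mul γ)
      simpa using this
    have key : ∀ ε : ℝ, l = ε * β ^ (1 / α) →
        Tendsto (fun r : ℝ => r ^ γ * u r)
          (nhdsWithin 0 (Set.Ioi 0)) (nhds (ε * β ^ (1 / α))) ∧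
        Tendsto (fun r : ℝ => r ^ (γ + 1) * deriv u r)
          (nhdsWithin 0 (Set.Ioi 0)) (nhds (-ε * γ * β ^ (1 / α))) := by
      intro ε hε
      constructor
      · rw [← hε]
        refine (hwl.comp hlog).congr' ?_
        filter_upwards [self_mem_nhdsWithin] with r hr using hwr r hr
      · have : -ε * γ * β ^ (1 / α) = -(γ * l) := by rw [hε]; ring
        rw [this]
        refine (hQl.comp hlog).neg.congr' ?_
        filter_upwards [self_mem_nhdsWithin] with r hr
        simp only [Function.comp]
        rw [hQr r hr, neg_neg]
    rcases hl with hl | hl | hl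
    · left
      subst hl
      rw [mul_zero] at hQl
      obtain ⟨⟨L, hL⟩, h2⟩ := decay γ μ α hα hμ hμγ hαγ w Q hw hQ hwl hQl
      refine ⟨⟨L, (hL.comp hlog).congr' ?_⟩, ?_⟩
      · filter_upwards [self_mem_nhdsWithin] with r hr
        simp only [Function.comp]
        rw [hwr r hr, hexp r hr, ← mul_assoc, ← Real.rpow_add hr]
        simp
      · have h3 := (h2.comp hlog).neg
        rw [neg_zero] at h3
        refine h3.congr' ?_
        filter_upwards [self_mem_nhdsWithin] with r hr
        simp only [Function.comp]
        rw [hQr r hr, hexp r hr, mul_neg, neg_neg, ← mul_assoc, ← Real.rpow_add hr]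
        simp
    · right
      exact ⟨1, Or.inl rfl, key 1 (by rw [hl]; ring)⟩
    · right
      exact ⟨-1, Or.inr rfl, key (-1) (by rw [hl]; ring)⟩
end

section
/- Let u ∈ C²((0,∞)), u ≢ 0, be a solution of u'' + ((N−1)/r)u' + |u|^α u = 0 on (0,∞). Then the following two statements are equivalent: (1) u is a singular sign-changing solution, i.e. u takes both strictly positive and strictly negative values on (0,∞) and there exists ε ∈ {+1,−1} with r^{2/α} u(r) → ε β^{1/α} as r→0; (2) there exists r₀ > 0 such that (r₀²/2)|u'(r₀)|² + (2/α) r₀ u(r₀) u'(r₀) + (r₀²/(α+2))|u(r₀)|^{α+2} + ((4−(N−2)α)/α²)|u(r₀)|² = 0. Moreover, in this case u oscillates indefinitely as r → ∞, i.e. for every R > 0 there exists r > R with u(r) = 0. -/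
open Filter

/-- energy -/
noncomputable def EE (α β : ℝ) (w p : ℝ → ℝ) (t : ℝ) : ℝ :=
  (p t) ^ 2 / 2 - β * (w t) ^ 2 / 2 + |w t| ^ (α + 2) / (α + 2)

/-- the autonomous system -/
structure Sys (α β c : ℝ) (w p : ℝ → ℝ) : Prop where
  hα : 0 < α
  hw : ∀ t, HasDerivAt w (p t) t
  hp : ∀ t, HasDerivAt p (c * p t + β * w t - |w t| ^ α * w t) t

theorem Sys.neg {α β c : ℝ} {w p : ℝ → ℝ} (S : Sys α β c w p) :
    Sys α β c (fun t => - w t) (fun t => - p t) where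
  hα := S.hα
  hw t := (S.hw t).neg
  hp t := by
    have := (S.hp t).neg
    refine this.congr_deriv ?_
    simp only [abs_neg]; ring

theorem EE_neg (α β : ℝ) (w p : ℝ → ℝ) (t : ℝ) :
    EE α β (fun t => - w t) (fun t => - p t) t = EE α β w p t := by
  simp [EE]

theorem abs_rpow_add_two {α : ℝ} (hα : 0 < α) (x : ℝ) : |x| ^ (α + 2) = |x| ^ α * x ^ 2 := by
  rw [Real.rpow_add' (abs_nonneg x) (by positivity)]
  norm_num [sq_abs]

theorem EE_eq {α β c : ℝ} {w p : ℝ → ℝ} (S : Sys α β c w p) (t : ℝ) :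
    EE α β w p t = (p t) ^ 2 / 2 + (w t) ^ 2 * (|w t| ^ α / (α + 2) - β / 2) := by
  rw [EE, abs_rpow_add_two S.hα]; ring

theorem Sys.hE {α β c : ℝ} {w p : ℝ → ℝ} (S : Sys α β c w p) (t : ℝ) :
    HasDerivAt (EE α β w p) (c * (p t) ^ 2) t := by
  have h0 := S.hα
  have h1 := (hasDerivAt_abs_rpow (w t) (p := α + 2) (by linarith)).comp t (S.hw t)
  have h2 := ((((S.hp t).pow 2).div_const 2).sub ((((S.hw t).pow 2).const_mul β).div_const 2)).add
    (h1.div_const (α + 2))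
  refine h2.congr_deriv ?_
  rw [show α + 2 - 2 = α by ring]
  field_simp
  push_cast
  ring

theorem Sys.cw {α β c : ℝ} {w p : ℝ → ℝ} (S : Sys α β c w p) : Continuous w :=
  continuous_iff_continuousAt.2 fun t => (S.hw t).continuousAt
theorem Sys.cp {α β c : ℝ} {w p : ℝ → ℝ} (S : Sys α β c w p) : Continuous p :=
  continuous_iff_continuousAt.2 fun t => (S.hp t).continuousAt
theorem Sys.cE {α β c : ℝ} {w p : ℝ → ℝ} (S : Sys α β c w p) : Continuous (EE α β w p) :=
  continuous_iff_continuousAt.2 fun t => (S.hE t).continuousAt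

theorem Sys.monoE {α β c : ℝ} {w p : ℝ → ℝ} (S : Sys α β c w p) (hc : 0 ≤ c) :
    Monotone (EE α β w p) := by
  apply monotone_of_deriv_nonneg
  · exact fun t => (S.hE t).differentiableAt
  · intro t; rw [(S.hE t).deriv]; positivity

/-- linear decay from a derivative bound -/
theorem decay_s14 {g g' : ℝ → ℝ} {a δ : ℝ} (hg : ∀ t, a ≤ t → HasDerivAt g (g' t) t)
    (hd : ∀ t, a ≤ t → g' t ≤ δ) {s t : ℝ} (has : a ≤ s) (hst : s ≤ t) :
    g t ≤ g s + δ * (t - s) := by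
  have := (convex_Icc s t).image_sub_le_mul_sub_of_deriv_le (f := g) (C := δ)
    (fun x hx => (hg x (has.trans hx.1)).continuousAt.continuousWithinAt)
    (fun x hx => by
      rw [interior_Icc] at hx
      exact (hg x (has.trans hx.1.le)).differentiableAt.differentiableWithinAt)
    (fun x hx => by
      rw [interior_Icc] at hx
      rw [(hg x (has.trans hx.1.le)).deriv]; exact hd x (has.trans hx.1.le))
    s (Set.left_mem_Icc.2 hst) t (Set.right_mem_Icc.2 hst) hst
  linarith

theorem uniq_fwd {α β c : ℝ} {w p : ℝ → ℝ} (S : Sys α β c w p) {t0 : ℝ}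
    (h1 : w t0 = 0) (h2 : p t0 = 0) {t : ℝ} (ht : t0 ≤ t) : w t = 0 := by
  have hcont : ContinuousOn (fun s => |w s| ^ α) (Set.Icc t0 t) :=
    (S.cw.abs.rpow_const (fun _ => Or.inr S.hα.le)).continuousOn
  obtain ⟨M, hM⟩ := (isCompact_Icc.bddAbove_image hcont)
  have hM' : ∀ s ∈ Set.Icc t0 t, |w s| ^ α ≤ M := fun s hs => hM ⟨s, hs, rfl⟩
  set K := 1 + 2 * |c| + |β| + M with hK
  have hder : ∀ s, HasDerivAt (fun s => ((w s) ^ 2 + (p s) ^ 2) * Real.exp (-K * s))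
      ((2 * w s * p s + 2 * p s * (c * p s + β * w s - |w s| ^ α * w s)
        - K * ((w s) ^ 2 + (p s) ^ 2)) * Real.exp (-K * s)) s := by
    intro s
    have := (((S.hw s).pow 2).add ((S.hp s).pow 2)).mul
      (((hasDerivAt_id s).const_mul (-K)).exp)
    refine this.congr_deriv ?_
    simp
    ring
  have hanti : AntitoneOn (fun s => ((w s) ^ 2 + (p s) ^ 2) * Real.exp (-K * s))
      (Set.Icc t0 t) := by
    apply antitoneOn_of_deriv_nonpos (convex_Icc _ _)
    · exact fun s _ => (hder s).continuousAt.continuousWithinAt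
    · exact fun s _ => (hder s).differentiableAt.differentiableWithinAt
    · intro s hs
      rw [interior_Icc] at hs
      rw [(hder s).deriv]
      apply mul_nonpos_of_nonpos_of_nonneg _ (Real.exp_pos _).le
      have hA := hM' s ⟨hs.1.le, hs.2.le⟩
      have hA0 : 0 ≤ |w s| ^ α := by positivity
      set A := |w s| ^ α
      have hwp : |2 * w s * p s| ≤ (w s) ^ 2 + (p s) ^ 2 := by
        rw [abs_le]; constructor <;> nlinarith [sq_nonneg (w s + p s), sq_nonneg (w s - p s)]
      set Q := (w s) ^ 2 + (p s) ^ 2 with hQ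
      have hQ0 : 0 ≤ Q := by positivity
      have e1 : 2 * w s * p s ≤ Q := (le_abs_self _).trans hwp
      have e2 : c * (p s) ^ 2 ≤ |c| * Q :=
        mul_le_mul (le_abs_self c) (by rw [hQ]; nlinarith [sq_nonneg (w s)]) (sq_nonneg _)
          (abs_nonneg _)
      have e3 : β * (2 * w s * p s) ≤ |β| * Q := by
        refine (le_abs_self _).trans ?_
        rw [abs_mul]; gcongr
      have e4 : - (A * (2 * w s * p s)) ≤ M * Q := by
        refine (neg_le_abs _).trans ?_
        rw [abs_mul, abs_of_nonneg hA0]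
        exact mul_le_mul hA hwp (abs_nonneg _) (hA0.trans hA)
      rw [hK]
      nlinarith
  have := hanti (Set.left_mem_Icc.2 ht) (Set.right_mem_Icc.2 ht) ht
  simp only [h1, h2] at this
  have h3 := Real.exp_pos (-K * t)
  have h4 : (w t) ^ 2 + (p t) ^ 2 ≤ 0 := by
    by_contra hcon
    push Not at hcon
    have := mul_pos hcon h3
    norm_num at *
    linarith
  nlinarith [sq_nonneg (w t), sq_nonneg (p t), pow_eq_zero_iff (two_ne_zero) (a := w t)]

theorem uniq {α β c : ℝ} {w p : ℝ → ℝ} (S : Sys α β c w p) {t0 : ℝ}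
    (h1 : w t0 = 0) (h2 : p t0 = 0) (t : ℝ) : w t = 0 := by
  rcases le_total t0 t with h | h
  · exact uniq_fwd S h1 h2 h
  · have S' : Sys α β (-c) (fun s => w (-s)) (fun s => - p (-s)) :=
      { hα := S.hα
        hw := fun s => by
          have := (S.hw (-s)).comp s (hasDerivAt_neg s)
          exact this.congr_deriv (by simp; try ring)
        hp := fun s => by
          have := ((S.hp (-s)).comp s (hasDerivAt_neg s)).neg
          exact this.congr_deriv (by simp; try ring) }
    have := uniq_fwd S' (t0 := -t0) (t := -t) (by simpa using h1) (by simpa using h2) (by linarith)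
    simpa using this

theorem E_const_zero {α β c : ℝ} {w p : ℝ → ℝ} (S : Sys α β c w p) (hc : 0 < c)
    (hβ : 0 < β) (hne : ∃ t, w t ≠ 0) {a b : ℝ} (hab : a < b)
    (ha : EE α β w p a = 0) (hb : EE α β w p b = 0) : False := by
  have hE : ∀ t ∈ Set.Icc a b, EE α β w p t = 0 := fun t ht =>
    le_antisymm (hb ▸ S.monoE hc.le ht.2) (ha ▸ S.monoE hc.le ht.1)
  have hp0 : ∀ t ∈ Set.Ioo a b, p t = 0 := by
    intro t ht
    have h1 : EE α β w p =ᶠ[nhds t] fun _ => 0 := by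
      filter_upwards [Ioo_mem_nhds ht.1 ht.2] with s hs using hE s ⟨hs.1.le, hs.2.le⟩
    have h2 := (S.hE t).unique ((hasDerivAt_const t (0:ℝ)).congr_of_eventuallyEq h1)
    have h3 : (p t) ^ 2 = 0 := by
      rcases mul_eq_zero.1 h2 with h | h
      · linarith
      · exact h
    exact pow_eq_zero_iff (two_ne_zero) |>.1 h3
  set m := (a + b) / 2
  have hm : m ∈ Set.Ioo a b := ⟨by simp only [m]; linarith, by simp only [m]; linarith⟩
  have h1 : p =ᶠ[nhds m] fun _ => 0 := by
    filter_upwards [Ioo_mem_nhds hm.1 hm.2] with s hs using hp0 s hs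
  have h2 := (S.hp m).unique ((hasDerivAt_const m (0:ℝ)).congr_of_eventuallyEq h1)
  have h3 := hE m ⟨hm.1.le, hm.2.le⟩
  rw [EE_eq S, hp0 m hm] at h3
  rw [hp0 m hm] at h2
  have hw0 : w m = 0 := by
    by_contra hw
    have h4 : |w m| ^ α = β := by
      have : w m * (β - |w m| ^ α) = 0 := by linarith
      rcases mul_eq_zero.1 this with h | h
      · exact absurd h hw
      · linarith
    rw [h4] at h3
    have h5 : 0 < (w m) ^ 2 := by positivity
    have h6 : β / (α + 2) - β / 2 < 0 := by
      have := S.hα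
      have : β / (α + 2) < β / 2 := by
        apply div_lt_div_of_pos_left hβ <;> linarith
      linarith
    nlinarith
  obtain ⟨t, ht⟩ := hne
  exact ht (uniq S hw0 (hp0 m hm) t)

theorem E_pos {α β c : ℝ} {w p : ℝ → ℝ} (S : Sys α β c w p) (hc : 0 < c)
    (hβ : 0 < β) (hne : ∃ t, w t ≠ 0) {a b : ℝ} (hab : a < b)
    (ha : EE α β w p a = 0) : 0 < EE α β w p b :=
  lt_of_le_of_ne (ha ▸ S.monoE hc.le hab.le) fun h => E_const_zero S hc hβ hne hab ha h.symm

theorem E_neg {α β c : ℝ} {w p : ℝ → ℝ} (S : Sys α β c w p) (hc : 0 < c)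
    (hβ : 0 < β) (hne : ∃ t, w t ≠ 0) {a b : ℝ} (hab : a < b)
    (hb : EE α β w p b = 0) : EE α β w p a < 0 :=
  lt_of_le_of_ne (hb ▸ S.monoE hc.le hab.le) fun h => E_const_zero S hc hβ hne hab h hb

/-- Barbalat-type lemma -/
theorem barbalat {g h k : ℝ → ℝ} {t1 K L : ℝ} (hg : ∀ t ≤ t1, HasDerivAt g (h t) t)
    (hh : ∀ t ≤ t1, HasDerivAt h (k t) t) (hk : ∀ t ≤ t1, |k t| ≤ K)
    (hL : Tendsto g atBot (nhds L)) : Tendsto h atBot (nhds 0) := by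
  have hK : 0 ≤ K := (abs_nonneg _).trans (hk t1 le_rfl)
  rw [Metric.tendsto_nhds]
  intro ε hε
  set δ := ε / (2 * (K + 1)) with hδ
  have hδ0 : 0 < δ := by positivity
  have hδK : δ * K < ε / 2 := by
    rw [hδ, div_mul_eq_mul_div, div_lt_div_iff₀ (by positivity) (by positivity)]
    nlinarith
  have hlim : Tendsto (fun t => g t - g (t - δ)) atBot (nhds 0) := by
    have : Tendsto (fun t : ℝ => t - δ) atBot atBot := tendsto_atBot_add_const_right _ (-δ) tendsto_id
    simpa using hL.sub (hL.comp this)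
  have hev := (Metric.tendsto_nhds.1 hlim) (δ * (ε / 2)) (by positivity)
  filter_upwards [hev, eventually_le_atBot t1] with t ht htt
  obtain ⟨s, hs, hs'⟩ := exists_hasDerivAt_eq_slope g h (show t - δ < t by linarith)
    (fun x hx => (hg x (hx.2.trans htt)).continuousAt.continuousWithinAt)
    (fun x hx => hg x (hx.2.le.trans htt))
  have hhs : |h s| < ε / 2 := by
    rw [hs', show t - (t - δ) = δ by ring, abs_div, abs_of_pos hδ0, div_lt_iff₀ hδ0]
    rw [Real.dist_eq, sub_zero] at ht
    linarith
  have hdiff : |h t - h s| ≤ K * (t - s) := by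
    have := (convex_Icc s t).norm_image_sub_le_of_norm_hasDerivWithin_le (f := h) (f' := k) (C := K)
      (fun x hx => (hh x (hx.2.trans htt)).hasDerivWithinAt)
      (fun x hx => hk x (hx.2.trans htt)) (Set.left_mem_Icc.2 hs.2.le)
      (Set.right_mem_Icc.2 hs.2.le)
    simpa [abs_of_pos (sub_pos.2 hs.2)] using this
  have : K * (t - s) ≤ δ * K := by nlinarith [hs.1]
  rw [Real.dist_eq, sub_zero]
  calc |h t| = |(h t - h s) + h s| := by ring_nf
    _ ≤ |h t - h s| + |h s| := abs_add_le _ _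
    _ < ε := by linarith

theorem bound_of_E_neg {α β c : ℝ} {w p : ℝ → ℝ} (S : Sys α β c w p) {t : ℝ}
    (h : EE α β w p t < 0) : w t ≠ 0 ∧ |w t| ^ α ≤ β * (α + 2) / 2 ∧
      (p t) ^ 2 ≤ β * (w t) ^ 2 ∧ -2 * EE α β w p t ≤ β * (w t) ^ 2 := by
  have h0 := S.hα
  have hA : 0 ≤ |w t| ^ α := by positivity
  rw [EE_eq S] at h ⊢
  have hA' : 0 ≤ (w t) ^ 2 * (|w t| ^ α / (α + 2)) := by positivity
  have hw : w t ≠ 0 := by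
    intro hw; rw [hw] at h; nlinarith [sq_nonneg (p t)]
  refine ⟨hw, ?_, ?_, ?_⟩
  · have hw2 : 0 < (w t) ^ 2 := by positivity
    have : |w t| ^ α / (α + 2) - β / 2 < 0 := by
      by_contra hcon
      push Not at hcon
      nlinarith [mul_nonneg hw2.le hcon, sq_nonneg (p t)]
    have : |w t| ^ α / (α + 2) ≤ β / 2 := by linarith
    rw [div_le_iff₀ (by linarith)] at this
    linarith
  · nlinarith
  · nlinarith [sq_nonneg (p t)]

theorem mvt_fun {w p : ℝ → ℝ} (hw : ∀ t, HasDerivAt w (p t) t) :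
    ∃ s : ℝ → ℝ, (∀ t, t ≤ s t) ∧ (∀ t, s t ≤ t + 1) ∧ ∀ t, p (s t) = w (t + 1) - w t := by
  have : ∀ t : ℝ, ∃ s, t ≤ s ∧ s ≤ t + 1 ∧ p s = w (t + 1) - w t := by
    intro t
    obtain ⟨s, hs, hs'⟩ := exists_hasDerivAt_eq_slope w p (show t < t + 1 by linarith)
      (fun x _ => (hw x).continuousAt.continuousWithinAt) (fun x _ => hw x)
    exact ⟨s, hs.1.le, hs.2.le, by rw [hs']; simp⟩
  choose s h1 h2 h3 using this
  exact ⟨s, h1, h2, h3⟩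

theorem E_lim {α β c : ℝ} {w p : ℝ → ℝ} (S : Sys α β c w p) {l : Filter ℝ} {s : ℝ → ℝ} {L : ℝ}
    (h1 : Tendsto (fun t => w (s t)) l (nhds L)) (h2 : Tendsto (fun t => p (s t)) l (nhds 0)) :
    Tendsto (fun t => EE α β w p (s t)) l (nhds (L ^ 2 * (|L| ^ α / (α + 2) - β / 2))) := by
  have h3 : Tendsto (fun t => |w (s t)| ^ α) l (nhds (|L| ^ α)) :=
    h1.abs.rpow_const (Or.inr S.hα.le)
  have := ((h2.pow 2).div_const 2).add ((h1.pow 2).mul ((h3.div_const (α + 2)).sub_const (β / 2)))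
  simp only [EE_eq S]
  simpa using this

theorem dir1 {α β c : ℝ} {w p : ℝ → ℝ} (S : Sys α β c w p) (hβ : 0 < β) {L : ℝ}
    (hL : |L| = β ^ (1 / α)) (hlim : Tendsto w atBot (nhds L)) {t1 : ℝ} (ht1 : w t1 = 0) :
    ∃ t, EE α β w p t = 0 := by
  have h0 := S.hα
  obtain ⟨s, hs1, hs2, hs3⟩ := mvt_fun S.hw
  have hs : Tendsto s atBot atBot :=
    tendsto_atBot_mono hs2 (tendsto_atBot_add_const_right _ 1 tendsto_id)
  have hp : Tendsto (fun t => p (s t)) atBot (nhds 0) := by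
    simp only [hs3]
    have : Tendsto (fun t : ℝ => t + 1) atBot atBot := tendsto_atBot_add_const_right _ 1 tendsto_id
    simpa using (hlim.comp this).sub hlim
  have hE := E_lim S (hlim.comp hs) hp
  have hLα : |L| ^ α = β := by
    rw [hL, ← Real.rpow_mul hβ.le]; field_simp; simp
  have hL0 : L ≠ 0 := by
    intro h; rw [h, abs_zero, Real.zero_rpow h0.ne'] at hLα; linarith
  have hneg : L ^ 2 * (|L| ^ α / (α + 2) - β / 2) < 0 := by
    rw [hLα]
    apply mul_neg_of_pos_of_neg (by positivity)
    have : β / (α + 2) < β / 2 := by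
      apply div_lt_div_of_pos_left hβ <;> linarith
    linarith
  obtain ⟨t, ht⟩ := (hE.eventually_lt_const hneg).exists
  have h1 : 0 ≤ EE α β w p t1 := by
    rw [EE_eq S, ht1]; simp; positivity
  obtain ⟨x, hx⟩ := mem_range_of_exists_le_of_exists_ge S.cE ⟨_, ht.le⟩ ⟨_, h1⟩
  exact ⟨x, hx⟩

theorem lim_atBot {α β c : ℝ} {w p : ℝ → ℝ} (S : Sys α β c w p) (hc : 0 < c) (hβ : 0 < β)
    {t1 : ℝ} (hE1 : EE α β w p t1 < 0) (hpos : ∀ t ≤ t1, 0 < w t) :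
    Tendsto w atBot (nhds (β ^ (1 / α))) := by
  have h0 := S.hα
  have hEn : ∀ t ≤ t1, EE α β w p t ≤ EE α β w p t1 := fun t ht => S.monoE hc.le ht
  set A := β * (α + 2) / 2 with hA
  have hA0 : 0 < A := by positivity
  have bA : ∀ t ≤ t1, |w t| ^ α ≤ A := fun t ht =>
    (bound_of_E_neg S ((hEn t ht).trans_lt hE1)).2.1
  set W := A ^ (1 / α) with hW
  have hW0 : 0 < W := by positivity
  have bW : ∀ t ≤ t1, |w t| ≤ W := by
    intro t ht
    have h := Real.rpow_le_rpow (by positivity) (bA t ht) (show 0 ≤ 1 / α by positivity)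
    rwa [← Real.rpow_mul (abs_nonneg _), mul_one_div_cancel h0.ne', Real.rpow_one] at h
  have bW2 : ∀ t ≤ t1, (w t) ^ 2 ≤ W ^ 2 := fun t ht => by
    rw [← sq_abs]; exact pow_le_pow_left₀ (abs_nonneg _) (bW t ht) 2
  set P := Real.sqrt (β * W ^ 2) with hP
  have hP0 : 0 ≤ P := Real.sqrt_nonneg _
  have bP : ∀ t ≤ t1, |p t| ≤ P := by
    intro t ht
    apply Real.abs_le_sqrt
    refine (bound_of_E_neg S ((hEn t ht).trans_lt hE1)).2.2.1.trans ?_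
    exact mul_le_mul_of_nonneg_left (bW2 t ht) hβ.le
  obtain ⟨m, hm0, hm⟩ : ∃ m : ℝ, 0 < m ∧ ∀ t ≤ t1, m ≤ w t := by
    refine ⟨Real.sqrt (-2 * EE α β w p t1 / β), Real.sqrt_pos.2 (div_pos (by linarith) hβ), ?_⟩
    intro t ht
    apply Real.sqrt_le_iff.2 ⟨(hpos t ht).le, ?_⟩
    rw [div_le_iff₀ hβ]
    have := (bound_of_E_neg S ((hEn t ht).trans_lt hE1)).2.2.2
    have := hEn t ht
    linarith
  set h : ℝ → ℝ := fun t => c * p t + β * w t - |w t| ^ α * w t with hh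
  set H := c * P + β * W + A * W with hH
  have bH : ∀ t ≤ t1, |h t| ≤ H := by
    intro t ht
    have e1 : |c * p t| ≤ c * P := by
      rw [abs_mul, abs_of_pos hc]; gcongr; exact bP t ht
    have e2 : |β * w t| ≤ β * W := by
      rw [abs_mul, abs_of_pos hβ]; gcongr; exact bW t ht
    have e3 : |(|w t| ^ α * w t)| ≤ A * W := by
      rw [abs_mul, abs_of_nonneg (by positivity : 0 ≤ |w t| ^ α)]
      exact mul_le_mul (bA t ht) (bW t ht) (abs_nonneg _) hA0.le
    calc |h t| ≤ |c * p t + β * w t| + |(|w t| ^ α * w t)| := abs_sub _ _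
      _ ≤ |c * p t| + |β * w t| + |(|w t| ^ α * w t)| := by gcongr; exact abs_add_le _ _
      _ ≤ H := by rw [hH]; linarith
  have hH0 : 0 ≤ H := (abs_nonneg _).trans (bH t1 le_rfl)
  -- E converges
  have hbdd : BddBelow (Set.range (EE α β w p)) := by
    refine ⟨- (β * W ^ 2 / 2), ?_⟩
    have key : ∀ t ≤ t1, - (β * W ^ 2 / 2) ≤ EE α β w p t := by
      intro t ht
      have e1 : 0 ≤ |w t| ^ (α + 2) / (α + 2) := by positivity
      have e2 := mul_le_mul_of_nonneg_left (bW2 t ht) hβ.le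
      have e3 := sq_nonneg (p t)
      rw [EE]; linarith
    rintro _ ⟨t, rfl⟩
    rcases le_total t t1 with ht | ht
    · exact key t ht
    · exact (key t1 le_rfl).trans (S.monoE hc.le ht)
  have hElim := tendsto_atBot_ciInf (S.monoE hc.le) hbdd
  have hp2 : Tendsto (fun t => c * (p t) ^ 2) atBot (nhds 0) := by
    refine barbalat (t1 := t1) (k := fun t => c * (2 * p t * h t)) (K := c * (2 * P * H))
      (fun t _ => S.hE t) ?_ ?_ hElim
    · intro t _
      have := ((S.hp t).pow 2).const_mul c
      refine this.congr_deriv ?_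
      simp [hh]
    · intro t ht
      rw [abs_mul, abs_mul, abs_mul, abs_of_pos hc, abs_two]
      have := bP t ht
      have := bH t ht
      gcongr
  have hp0 : Tendsto p atBot (nhds 0) := by
    have e1 : Tendsto (fun t => (p t) ^ 2) atBot (nhds 0) := by
      have := hp2.const_mul c⁻¹
      simpa [hc.ne'] using this
    have e2 := e1.sqrt
    simp only [Real.sqrt_sq_eq_abs, Real.sqrt_zero] at e2
    exact (tendsto_zero_iff_abs_tendsto_zero _).2 e2
  have hh0 : Tendsto h atBot (nhds 0) := by
    refine barbalat (t1 := t1) (k := fun t => c * h t + β * p t - (α + 1) * |w t| ^ α * p t)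
      (K := c * H + β * P + (α + 1) * A * P)
      (fun t _ => S.hp t) ?_ ?_ hp0
    · intro t ht
      have hwp := hpos t ht
      have e1 : HasDerivAt (fun t => (w t) ^ (α + 1)) (p t * (α + 1) * (w t) ^ (α + 1 - 1)) t :=
        (S.hw t).rpow_const (Or.inl hwp.ne')
      have e2 : (fun t => |w t| ^ α * w t) =ᶠ[nhds t] fun t => (w t) ^ (α + 1) := by
        filter_upwards [S.cw.continuousAt.eventually (lt_mem_nhds hwp)] with x hx
        rw [abs_of_pos hx, Real.rpow_add_one hx.ne']
      have e3 := (((S.hp t).const_mul c).add ((S.hw t).const_mul β)).sub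
        (e1.congr_of_eventuallyEq e2)
      refine e3.congr_deriv ?_
      rw [add_sub_cancel_right, abs_of_pos hwp]
      simp only [hh, abs_of_pos hwp]
      ring
    · intro t ht
      have e1 : |c * h t| ≤ c * H := by
        rw [abs_mul, abs_of_pos hc]; gcongr; exact bH t ht
      have e2 : |β * p t| ≤ β * P := by
        rw [abs_mul, abs_of_pos hβ]; gcongr; exact bP t ht
      have e3 : |(α + 1) * |w t| ^ α * p t| ≤ (α + 1) * A * P := by
        rw [abs_mul, abs_of_nonneg (by positivity : 0 ≤ (α + 1) * |w t| ^ α)]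
        have := bA t ht
        have := bP t ht
        gcongr
      calc |c * h t + β * p t - (α + 1) * |w t| ^ α * p t|
          ≤ |c * h t + β * p t| + |(α + 1) * |w t| ^ α * p t| := abs_sub _ _
        _ ≤ |c * h t| + |β * p t| + |(α + 1) * |w t| ^ α * p t| := by
          gcongr; exact abs_add_le _ _
        _ ≤ _ := by linarith
  have hf0 : Tendsto (fun t => |h t - c * p t| / m) atBot (nhds 0) := by
    have := ((hh0.sub (hp0.const_mul c)).abs).div_const m
    simpa using this
  have hfin : Tendsto (fun t => (w t) ^ α - β) atBot (nhds 0) := by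
    apply squeeze_zero_norm' _ hf0
    filter_upwards [eventually_le_atBot t1] with t ht
    have hwp := hpos t ht
    rw [le_div_iff₀ hm0, Real.norm_eq_abs]
    have : h t - c * p t = - (((w t) ^ α - β) * w t) := by
      simp only [hh, abs_of_pos hwp]; ring
    rw [this, abs_neg, abs_mul, abs_of_pos hwp]
    gcongr
    exact hm t ht
  have hfin2 : Tendsto (fun t => (w t) ^ α) atBot (nhds β) := by
    have := hfin.add_const β
    simpa using this
  have hfin3 := hfin2.rpow_const (p := 1 / α) (Or.inl hβ.ne')
  refine hfin3.congr' ?_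
  filter_upwards [eventually_le_atBot t1] with t ht
  rw [← Real.rpow_mul (hpos t ht).le, mul_one_div_cancel h0.ne', Real.rpow_one]

theorem big_of_F_pos {α β x : ℝ} (hα : 0 < α) (hβ : 0 < β)
    (h : 0 < x ^ 2 * (|x| ^ α / (α + 2) - β / 2)) : x ≠ 0 ∧ β < |x| ^ α := by
  have hx : x ≠ 0 := by rintro rfl; simp at h
  refine ⟨hx, ?_⟩
  have h1 : 0 < |x| ^ α / (α + 2) - β / 2 := pos_of_mul_pos_right h (sq_nonneg x)
  have h2 : β / 2 < |x| ^ α / (α + 2) := by linarith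
  rw [lt_div_iff₀ (by linarith)] at h2
  nlinarith

theorem no_conv {α β c : ℝ} {w p : ℝ → ℝ} (S : Sys α β c w p) (hβ : 0 < β)
    {T e : ℝ} (he : 0 < e) (hE : ∀ t, T ≤ t → e ≤ EE α β w p t) (hpos : ∀ t, T ≤ t → 0 < w t)
    {L : ℝ} (hL : Tendsto w atTop (nhds L)) : False := by
  have h0 := S.hα
  obtain ⟨s, hs1, hs2, hs3⟩ := mvt_fun S.hw
  have hs : Tendsto s atTop atTop := tendsto_atTop_mono hs1 tendsto_id
  have hp : Tendsto (fun t => p (s t)) atTop (nhds 0) := by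
    simp only [hs3]
    have : Tendsto (fun t : ℝ => t + 1) atTop atTop := tendsto_atTop_add_const_right _ 1 tendsto_id
    simpa using (hL.comp this).sub hL
  have hws : Tendsto (fun t => w (s t)) atTop (nhds L) := hL.comp hs
  have hElim := E_lim S hws hp
  have hLe : e ≤ L ^ 2 * (|L| ^ α / (α + 2) - β / 2) := by
    apply ge_of_tendsto hElim
    filter_upwards [eventually_ge_atTop T] with t ht using hE _ (ht.trans (hs1 t))
  obtain ⟨hL0, hLβ⟩ := big_of_F_pos h0 hβ (he.trans_le hLe)
  have hLnn : 0 ≤ L := by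
    apply ge_of_tendsto hL
    filter_upwards [eventually_ge_atTop T] with t ht using (hpos t ht).le
  have hLp : 0 < L := lt_of_le_of_ne hLnn hL0.symm
  have hd : Tendsto (fun t => β * w t - |w t| ^ α * w t) atTop (nhds (β * L - |L| ^ α * L)) :=
    (hL.const_mul β).sub ((hL.abs.rpow_const (Or.inr h0.le)).mul hL)
  have hκ : β * L - |L| ^ α * L < 0 := by nlinarith
  set κ := β * L - |L| ^ α * L
  obtain ⟨a, ha⟩ := eventually_atTop.1 (hd.eventually_le_const (show κ < κ / 2 by linarith))
  have hy : ∀ t, a ≤ t → HasDerivAt (fun t => p t - c * w t)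
      (β * w t - |w t| ^ α * w t) t := by
    intro t _
    exact ((S.hp t).sub ((S.hw t).const_mul c)).congr_deriv (by ring)
  have hdec : ∀ t, a ≤ t → p t - c * w t ≤ p a - c * w a + κ / 2 * (t - a) := fun t ht =>
    decay_s14 hy ha le_rfl ht
  have hylim : Tendsto (fun t => p (s t) - c * w (s t)) atTop (nhds (0 - c * L)) :=
    hp.sub (hws.const_mul c)
  have hbot : Tendsto (fun t => p a - c * w a + κ / 2 * (s t - a)) atTop atBot := by
    apply tendsto_atBot_add_const_left
    apply Tendsto.const_mul_atTop_of_neg (by linarith)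
    exact tendsto_atTop_add_const_right _ (-a) hs
  have hbot2 : Tendsto (fun t => p (s t) - c * w (s t)) atTop atBot := by
    apply tendsto_atBot_mono' _ _ hbot
    filter_upwards [eventually_ge_atTop a] with t ht using hdec _ (ht.trans (hs1 t))
  exact not_tendsto_nhds_of_tendsto_atBot hbot2 _ hylim

theorem no_pos {α β c : ℝ} {w p : ℝ → ℝ} (S : Sys α β c w p) (hβ : 0 < β)
    {T e : ℝ} (he : 0 < e) (hE : ∀ t, T ≤ t → e ≤ EE α β w p t) (hpos : ∀ t, T ≤ t → 0 < w t) :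
    False := by
  have h0 := S.hα
  have hcrit : ∀ t, T ≤ t → p t = 0 → c * p t + β * w t - |w t| ^ α * w t < 0 := by
    intro t ht hp
    have h1 := hE t ht
    rw [EE_eq S, hp] at h1
    have h2 := (big_of_F_pos (x := w t) h0 hβ (by linarith)).2
    have := hpos t ht
    rw [hp]; nlinarith
  by_cases hcase : ∃ t1, T ≤ t1 ∧ p t1 ≤ 0
  · obtain ⟨t1, ht1, hp1⟩ := hcase
    have hple : ∀ t, t1 ≤ t → p t ≤ 0 := by
      intro t ht
      exact image_le_of_deriv_right_lt_deriv_boundary (f := p) (B := fun _ => 0) (B' := fun _ => 0)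
        S.cp.continuousOn (fun x _ => (S.hp x).hasDerivWithinAt) hp1
        (fun x => hasDerivAt_const x 0)
        (fun x hx hx0 => hcrit x (ht1.trans hx.1) hx0) (Set.right_mem_Icc.2 ht)
    have hanti : AntitoneOn w (Set.Ici t1) := by
      apply antitoneOn_of_deriv_nonpos (convex_Ici _) S.cw.continuousOn
      · exact fun s _ => (S.hw s).differentiableAt.differentiableWithinAt
      · intro s hs
        rw [interior_Ici] at hs
        rw [(S.hw s).deriv]; exact hple s (le_of_lt hs)
    have hA : Antitone (fun t => w (max t1 t)) := fun x y hxy =>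
      hanti (Set.mem_Ici.2 (le_max_left _ _)) (Set.mem_Ici.2 (le_max_left _ _)) (max_le_max le_rfl hxy)
    have hbd : BddBelow (Set.range fun t => w (max t1 t)) := by
      refine ⟨0, ?_⟩
      rintro _ ⟨t, rfl⟩
      exact (hpos _ (ht1.trans (le_max_left _ _))).le
    have hlim := tendsto_atTop_ciInf hA hbd
    refine no_conv S hβ he hE hpos (hlim.congr' ?_)
    filter_upwards [eventually_ge_atTop t1] with t ht
    rw [max_eq_right ht]
  · push Not at hcase
    have hmono : MonotoneOn w (Set.Ici T) := by
      apply monotoneOn_of_deriv_nonneg (convex_Ici _) S.cw.continuousOn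
      · exact fun s _ => (S.hw s).differentiableAt.differentiableWithinAt
      · intro s hs
        rw [interior_Ici] at hs
        rw [(S.hw s).deriv]; exact (hcase s (le_of_lt hs)).le
    have hA : Monotone (fun t => w (max T t)) := fun x y hxy =>
      hmono (Set.mem_Ici.2 (le_max_left _ _)) (Set.mem_Ici.2 (le_max_left _ _)) (max_le_max le_rfl hxy)
    have hev : (fun t => w (max T t)) =ᶠ[atTop] w := by
      filter_upwards [eventually_ge_atTop T] with t ht
      rw [max_eq_right ht]
    rcases tendsto_atTop_of_monotone hA with hlim | ⟨L, hlim⟩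
    · have hlim' : Tendsto w atTop atTop := hlim.congr' hev
      have hwα := (tendsto_rpow_atTop h0).comp hlim'
      obtain ⟨a, ha⟩ := eventually_atTop.1
        ((hwα.eventually_ge_atTop (c ^ 2 / 4 + β + 1)).and (eventually_ge_atTop T))
      have hv : ∀ t, a ≤ t → HasDerivAt (fun t => p t / w t)
          (((c * p t + β * w t - |w t| ^ α * w t) * w t - p t * p t) / (w t) ^ 2) t := by
        intro t ht
        exact (S.hp t).div (S.hw t) (hpos t (ha t ht).2).ne'
      have hvd : ∀ t, a ≤ t →
          ((c * p t + β * w t - |w t| ^ α * w t) * w t - p t * p t) / (w t) ^ 2 ≤ -1 := by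
        intro t ht
        have hwp := hpos t (ha t ht).2
        have h1 : c ^ 2 / 4 + β + 1 ≤ (w t) ^ α := (ha t ht).1
        rw [div_le_iff₀ (by positivity), abs_of_pos hwp]
        have h2 := mul_le_mul_of_nonneg_right h1 (sq_nonneg (w t))
        nlinarith [sq_nonneg (p t - c / 2 * w t)]
      have haT := (ha a le_rfl).2
      have hva : 0 < p a / w a := div_pos (hcase a haT) (hpos a haT)
      have hle : a ≤ a + p a / w a + 1 := by linarith
      have h3 := decay_s14 hv hvd le_rfl hle
      have h4 : 0 < p (a + p a / w a + 1) / w (a + p a / w a + 1) :=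
        div_pos (hcase _ (haT.trans hle)) (hpos _ (haT.trans hle))
      linarith
    · exact no_conv S hβ he hE hpos (hlim.congr' hev)

theorem const_sign {w : ℝ → ℝ} (hw : Continuous w) {s : Set ℝ} (hs : s.OrdConnected)
    (h : ∀ t ∈ s, w t ≠ 0) : (∀ t ∈ s, 0 < w t) ∨ (∀ t ∈ s, w t < 0) := by
  by_contra hcon
  push Not at hcon
  obtain ⟨⟨a, ha, ha'⟩, b, hb, hb'⟩ := hcon
  obtain ⟨x, hx, hx'⟩ := hs.isPreconnected.intermediate_value ha hb hw.continuousOn ⟨ha', hb'⟩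
  exact h x hx hx'

theorem osc {α β c : ℝ} {w p : ℝ → ℝ} (S : Sys α β c w p) (hc : 0 < c) (hβ : 0 < β)
    (hne : ∃ t, w t ≠ 0) {t0 : ℝ} (h0 : EE α β w p t0 = 0) (T : ℝ) : ∃ t, T < t ∧ w t = 0 := by
  by_contra hcon
  push Not at hcon
  set T' := max T t0 + 1
  have h1 : T < T' := by have := le_max_left T t0; simp only [T']; linarith
  have h2 : t0 < T' := by have := le_max_right T t0; simp only [T']; linarith
  have he : 0 < EE α β w p T' := E_pos S hc hβ hne h2 h0
  have hE : ∀ t, T' ≤ t → EE α β w p T' ≤ EE α β w p t := fun t ht => S.monoE hc.le ht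
  rcases const_sign S.cw (s := Set.Ici T') Set.ordConnected_Ici
    (fun t ht => hcon t (h1.trans_le ht)) with h | h
  · exact no_pos S hβ he hE h
  · refine no_pos S.neg hβ he (T := T') ?_ (fun t ht => neg_pos.2 (h t ht))
    intro t ht; rw [EE_neg]; exact hE t ht

theorem dir2_lim {α β c : ℝ} {w p : ℝ → ℝ} (S : Sys α β c w p) (hc : 0 < c) (hβ : 0 < β)
    (hne : ∃ t, w t ≠ 0) {t0 : ℝ} (h0 : EE α β w p t0 = 0) :
    ∃ ε : ℝ, (ε = 1 ∨ ε = -1) ∧ Tendsto w atBot (nhds (ε * β ^ (1 / α))) := by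
  have hE : ∀ t ≤ t0 - 1, EE α β w p t < 0 := fun t ht =>
    E_neg S hc hβ hne (by linarith) h0
  rcases const_sign S.cw (s := Set.Iic (t0 - 1)) Set.ordConnected_Iic
    (fun t ht => (bound_of_E_neg S (hE t ht)).1) with h | h
  · exact ⟨1, Or.inl rfl, by rw [one_mul]; exact lim_atBot S hc hβ (hE _ le_rfl) h⟩
  · refine ⟨-1, Or.inr rfl, ?_⟩
    have := lim_atBot S.neg hc hβ (t1 := t0 - 1) (by rw [EE_neg]; exact hE _ le_rfl)
      (fun t ht => neg_pos.2 (h t ht))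
    simpa using this.neg

theorem sign_of_zero {w : ℝ → ℝ} {d t : ℝ} (hw : HasDerivAt w d t) (h0 : w t = 0) (hd : 0 < d) :
    (∃ s, 0 < w s) ∧ ∃ s, w s < 0 := by
  constructor
  · by_contra hcon
    push Not at hcon
    have : IsLocalMax w t := Eventually.of_forall fun s => by rw [h0]; exact hcon s
    exact hd.ne' (this.hasDerivAt_eq_zero hw)
  · by_contra hcon
    push Not at hcon
    have : IsLocalMin w t := Eventually.of_forall fun s => by rw [h0]; exact hcon s
    exact hd.ne' (this.hasDerivAt_eq_zero hw)

theorem dir2_sign {α β c : ℝ} {w p : ℝ → ℝ} (S : Sys α β c w p) (hc : 0 < c) (hβ : 0 < β)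
    (hne : ∃ t, w t ≠ 0) {t0 : ℝ} (h0 : EE α β w p t0 = 0) :
    (∃ s, 0 < w s) ∧ ∃ s, w s < 0 := by
  obtain ⟨t, _, ht⟩ := osc S hc hβ hne h0 t0
  have hp : p t ≠ 0 := fun hp => by
    obtain ⟨s, hs⟩ := hne
    exact hs (uniq S ht hp s)
  constructor
  · by_contra hcon
    push Not at hcon
    have : IsLocalMax w t := Eventually.of_forall fun s => by rw [ht]; exact hcon s
    exact hp (this.hasDerivAt_eq_zero (S.hw t))
  · by_contra hcon
    push Not at hcon
    have : IsLocalMin w t := Eventually.of_forall fun s => by rw [ht]; exact hcon s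
    exact hp (this.hasDerivAt_eq_zero (S.hw t))

theorem stmt_14 (N : ℕ) (hN : 3 ≤ N) (α β : ℝ)
    (hα1 : 2 / ((N : ℝ) - 2) < α) (hα2 : α < 4 / ((N : ℝ) - 2))
    (hβ : β = 2 / α * ((N : ℝ) - 2 - 2 / α))
    (u : ℝ → ℝ) (huC2 : ContDiffOn ℝ 2 u (Set.Ioi 0))
    (hune : ∃ r : ℝ, 0 < r ∧ u r ≠ 0)
    (huode : ∀ r : ℝ, 0 < r →
      deriv (deriv u) r + (((N : ℝ) - 1) / r) * deriv u r + |u r| ^ α * u r = 0) :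
    -- (1) ↔ (2)
    ((((∃ r : ℝ, 0 < r ∧ 0 < u r) ∧ (∃ r : ℝ, 0 < r ∧ u r < 0)) ∧
      (∃ ε : ℝ, (ε = 1 ∨ ε = -1) ∧
        Tendsto (fun r : ℝ => r ^ (2 / α) * u r)
          (nhdsWithin 0 (Set.Ioi 0)) (nhds (ε * β ^ (1 / α))))) ↔
      (∃ r₀ : ℝ, 0 < r₀ ∧
        r₀ ^ 2 / 2 * (deriv u r₀) ^ 2 + 2 / α * r₀ * u r₀ * deriv u r₀ +
          r₀ ^ 2 / (α + 2) * |u r₀| ^ (α + 2) +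
          (4 - ((N : ℝ) - 2) * α) / α ^ 2 * |u r₀| ^ 2 = 0)) ∧
    -- moreover, in this case u oscillates indefinitely as r → ∞
    ((((∃ r : ℝ, 0 < r ∧ 0 < u r) ∧ (∃ r : ℝ, 0 < r ∧ u r < 0)) ∧
      (∃ ε : ℝ, (ε = 1 ∨ ε = -1) ∧
        Tendsto (fun r : ℝ => r ^ (2 / α) * u r)
          (nhdsWithin 0 (Set.Ioi 0)) (nhds (ε * β ^ (1 / α))))) →
      ∀ R : ℝ, 0 < R → ∃ r : ℝ, R < r ∧ u r = 0) := by
  have hN2 : (0:ℝ) < (N:ℝ) - 2 := by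
    have : (3:ℝ) ≤ N := by exact_mod_cast hN
    linarith
  have hα : 0 < α := lt_trans (by positivity) hα1
  have hβ0 : 0 < β := by
    rw [div_lt_iff₀ hN2] at hα1
    have : 2 / α < (N:ℝ) - 2 := by rw [div_lt_iff₀ hα]; linarith
    rw [hβ]; apply mul_pos (by positivity); linarith
  set c : ℝ := 4 / α - ((N:ℝ) - 2) with hcdef
  have hc : 0 < c := by
    rw [lt_div_iff₀ hN2] at hα2
    have : (N:ℝ) - 2 < 4 / α := by rw [lt_div_iff₀ hα]; linarith
    linarith
  have hd1 : ∀ r, 0 < r → HasDerivAt u (deriv u r) r := fun r hr =>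
    ((huC2.differentiableOn (by norm_num)).differentiableAt (Ioi_mem_nhds hr)).hasDerivAt
  have hd2 : ∀ r, 0 < r → HasDerivAt (deriv u) (deriv (deriv u) r) r := by
    intro r hr
    have h1 : ContDiffOn ℝ 1 (deriv u) (Set.Ioi 0) :=
      huC2.deriv_of_isOpen isOpen_Ioi (by norm_num)
    exact ((h1.differentiableOn (by norm_num)).differentiableAt (Ioi_mem_nhds hr)).hasDerivAt
  set w : ℝ → ℝ := fun t => Real.exp (2 / α * t) * u (Real.exp t) with hwdef
  set p : ℝ → ℝ := fun t => Real.exp (2 / α * t) *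
    (Real.exp t * deriv u (Real.exp t) + 2 / α * u (Real.exp t)) with hpdef
  have hexp : ∀ t, HasDerivAt (fun t : ℝ => Real.exp (2 / α * t))
      (Real.exp (2 / α * t) * (2 / α)) t := fun t => by
    have := ((hasDerivAt_id t).const_mul (2 / α)).exp
    exact this.congr_deriv (by simp)
  have hwα : ∀ t, |w t| ^ α = (Real.exp t) ^ 2 * |u (Real.exp t)| ^ α := by
    intro t
    simp only [hwdef]
    rw [abs_mul, Real.abs_exp, Real.mul_rpow (Real.exp_pos _).le (abs_nonneg _), ← Real.exp_mul,
      show 2 / α * t * α = t + t by field_simp; ring, Real.exp_add]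
    ring
  have S : Sys α β c w p :=
    { hα := hα
      hw := fun t => by
        have := (hexp t).mul ((hd1 _ (Real.exp_pos t)).comp t (Real.hasDerivAt_exp t))
        refine this.congr_deriv ?_
        simp only [hpdef, Function.comp]; ring
      hp := fun t => by
        have hr := Real.exp_pos t
        have hu := (hd1 _ hr).comp t (Real.hasDerivAt_exp t)
        have hu' := (hd2 _ hr).comp t (Real.hasDerivAt_exp t)
        have := (hexp t).mul (((Real.hasDerivAt_exp t).mul hu').add (hu.const_mul (2 / α)))
        refine this.congr_deriv ?_
        rw [hwα]
        have hode := huode _ hr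
        have hode' : deriv (deriv u) (Real.exp t) =
          - ((((N : ℝ) - 1) / Real.exp t) * deriv u (Real.exp t)
            + |u (Real.exp t)| ^ α * u (Real.exp t)) := by linarith
        simp only [hpdef, hwdef, Function.comp, Pi.mul_apply, Pi.add_apply]
        rw [hode', hcdef, hβ]
        field_simp
        ring }
  have hEE : ∀ t, EE α β w p t = (Real.exp (2 / α * t)) ^ 2 *
      ((Real.exp t) ^ 2 / 2 * (deriv u (Real.exp t)) ^ 2
        + 2 / α * (Real.exp t) * u (Real.exp t) * deriv u (Real.exp t) +
          (Real.exp t) ^ 2 / (α + 2) * |u (Real.exp t)| ^ (α + 2) +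
          (4 - ((N : ℝ) - 2) * α) / α ^ 2 * |u (Real.exp t)| ^ 2) := by
    intro t
    rw [EE_eq S, hwα, abs_rpow_add_two hα, sq_abs, hβ]
    simp only [hpdef, hwdef]
    field_simp
    ring
  have hne : ∃ t, w t ≠ 0 := by
    obtain ⟨r, hr, hur⟩ := hune
    refine ⟨Real.log r, ?_⟩
    simp only [hwdef, Real.exp_log hr]
    exact mul_ne_zero (Real.exp_pos _).ne' hur
  have hlim1 : ∀ L : ℝ, Tendsto (fun r : ℝ => r ^ (2 / α) * u r)
      (nhdsWithin 0 (Set.Ioi 0)) (nhds L) → Tendsto w atBot (nhds L) := by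
    intro L h
    refine (h.comp Real.tendsto_exp_atBot_nhdsGT).congr fun t => ?_
    simp only [hwdef, Function.comp]
    rw [← Real.exp_mul, mul_comm t]
  have hlim2 : ∀ L : ℝ, Tendsto w atBot (nhds L) → Tendsto (fun r : ℝ => r ^ (2 / α) * u r)
      (nhdsWithin 0 (Set.Ioi 0)) (nhds L) := by
    intro L h
    refine (h.comp Real.tendsto_log_nhdsGT_zero).congr' ?_
    filter_upwards [self_mem_nhdsWithin] with r hr
    simp only [hwdef, Function.comp]
    rw [Real.exp_log hr, Real.rpow_def_of_pos hr, mul_comm (2 / α)]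
  have key : (((∃ r : ℝ, 0 < r ∧ 0 < u r) ∧ (∃ r : ℝ, 0 < r ∧ u r < 0)) ∧
      (∃ ε : ℝ, (ε = 1 ∨ ε = -1) ∧
        Tendsto (fun r : ℝ => r ^ (2 / α) * u r)
          (nhdsWithin 0 (Set.Ioi 0)) (nhds (ε * β ^ (1 / α))))) → ∃ t, EE α β w p t = 0 := by
    rintro ⟨⟨⟨r1, hr1, hu1⟩, ⟨r2, hr2, hu2⟩⟩, ε, hε, hlim⟩
    have e1 : 0 ≤ w (Real.log r1) := by
      simp only [hwdef, Real.exp_log hr1]; positivity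
    have e2 : w (Real.log r2) ≤ 0 := by
      simp only [hwdef, Real.exp_log hr2]
      exact mul_nonpos_of_nonneg_of_nonpos (Real.exp_pos _).le hu2.le
    obtain ⟨t1, ht1⟩ := mem_range_of_exists_le_of_exists_ge S.cw ⟨_, e2⟩ ⟨_, e1⟩
    refine dir1 S hβ0 ?_ (hlim1 _ hlim) ht1
    have : 0 ≤ β ^ (1 / α) := by positivity
    rcases hε with rfl | rfl <;> simp [abs_of_nonneg, Real.rpow_nonneg hβ0.le]
  refine ⟨⟨?_, ?_⟩, ?_⟩
  · intro h
    obtain ⟨t, ht⟩ := key h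
    rw [hEE] at ht
    exact ⟨Real.exp t, Real.exp_pos t, (mul_eq_zero.1 ht).resolve_left (by positivity)⟩
  · rintro ⟨r, hr, h⟩
    have h0 : EE α β w p (Real.log r) = 0 := by
      rw [hEE, Real.exp_log hr, h, mul_zero]
    obtain ⟨⟨s1, hs1⟩, s2, hs2⟩ := dir2_sign S hc hβ0 hne h0
    obtain ⟨ε, hε, hl⟩ := dir2_lim S hc hβ0 hne h0
    refine ⟨⟨⟨Real.exp s1, Real.exp_pos _, ?_⟩, ⟨Real.exp s2, Real.exp_pos _, ?_⟩⟩,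
      ε, hε, hlim2 _ hl⟩
    · exact pos_of_mul_pos_right hs1 (Real.exp_pos _).le
    · exact neg_of_mul_neg_right hs2 (Real.exp_pos _).le
  · intro h R hR
    obtain ⟨t0, ht0⟩ := key h
    obtain ⟨t, ht, hwt⟩ := osc S hc hβ0 hne ht0 (Real.log R)
    refine ⟨Real.exp t, (Real.log_lt_iff_lt_exp hR).1 ht, ?_⟩
    exact (mul_eq_zero.1 hwt).resolve_left (Real.exp_pos _).ne'
end

section
/- Let u ∈ C²((0,∞)), u ≢ 0, be a solution of u'' + ((N−1)/r)u' + |u|^α u = 0 on (0,∞), and define U : ℝ^N∖{0} → ℝ by U(x) = u(|x|). Then U ∈ L^{α+1}_loc(ℝ^N) (i.e. |U|^{α+1} is integrable on every ball), and U is a distributional solution of −ΔU = |U|^α U on ℝ^N: for every φ ∈ C_c^∞(ℝ^N), ∫_{ℝ^N} ( U(x) Δφ(x) + |U(x)|^α U(x) φ(x) ) dx = 0. -/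
open MeasureTheory

noncomputable section

/-- The Laplacian of a function on `ℝ^N`, as the sum of the second partial derivatives. -/
def lapl {N : ℕ} (f : Euc N → ℝ) (x : Euc N) : ℝ :=
  ∑ i : Fin N,
    fderiv ℝ (fderiv ℝ f) x (EuclideanSpace.single i (1 : ℝ)) (EuclideanSpace.single i (1 : ℝ))

lemma fd2_eq {N : ℕ} {f : Euc N → ℝ} (hf : ContDiff ℝ 2 f) (x e : Euc N) :
    fderiv ℝ (fderiv ℝ f) x e e = fderiv ℝ (fun y => fderiv ℝ f y e) x e := by
  have h : DifferentiableAt ℝ (fderiv ℝ f) x :=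
    ((hf.fderiv_right (m := 1) (by norm_num)).differentiable (by norm_num)) x
  have := (h.hasFDerivAt.clm_apply (hasFDerivAt_const e x)).fderiv
  rw [this]; simp

lemma lapl_continuous {N : ℕ} {f : Euc N → ℝ} (hf : ContDiff ℝ 2 f) : Continuous (lapl f) := by
  have h1 : ContDiff ℝ 1 (fderiv ℝ f) := hf.fderiv_right (by norm_num)
  have h2 : Continuous (fderiv ℝ (fderiv ℝ f)) := h1.continuous_fderiv (by norm_num)
  unfold lapl
  fun_prop

lemma ibp_dir {N : ℕ} {V φ : Euc N → ℝ} (hV : ContDiff ℝ 1 V) (hφ : ContDiff ℝ 1 φ)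
    (hc : HasCompactSupport φ) (e : Euc N) :
    ∫ x, V x * fderiv ℝ φ x e = - ∫ x, fderiv ℝ V x e * φ x := by
  have hV' : Continuous (fun x => fderiv ℝ V x e) := (hV.continuous_fderiv (by norm_num)).clm_apply continuous_const
  have hφ' : Continuous (fun x => fderiv ℝ φ x e) := (hφ.continuous_fderiv (by norm_num)).clm_apply continuous_const
  have hc' : HasCompactSupport (fun x => fderiv ℝ φ x e) := hc.fderiv_apply ℝ e
  apply integral_mul_fderiv_eq_neg_fderiv_mul_of_integrable
  · exact (hV'.mul hφ.continuous).integrable_of_hasCompactSupport hc.mul_left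
  · exact (hV.continuous.mul hφ').integrable_of_hasCompactSupport hc'.mul_left
  · exact (hV.continuous.mul hφ.continuous).integrable_of_hasCompactSupport hc.mul_left
  · exact fun x _ => hV.differentiable (by norm_num) x
  · exact fun x _ => hφ.differentiable (by norm_num) x

lemma fd_apply_contDiff {N : ℕ} {f : Euc N → ℝ} (hf : ContDiff ℝ 2 f) (e : Euc N) :
    ContDiff ℝ 1 (fun y => fderiv ℝ f y e) :=
  (hf.fderiv_right (m := 1) (by norm_num)).clm_apply contDiff_const

lemma lapl_support {N : ℕ} {φ : Euc N → ℝ} (x : Euc N) (hx : x ∉ tsupport φ) :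
    lapl φ x = 0 := by
  unfold lapl
  have : fderiv ℝ (fderiv ℝ φ) x = 0 := by
    have h1 : x ∉ tsupport (fderiv ℝ φ) := fun h => hx (tsupport_fderiv_subset ℝ h)
    have h2 : fderiv ℝ φ =ᶠ[nhds x] fun _ => 0 := notMem_tsupport_iff_eventuallyEq.mp h1
    rw [h2.fderiv_eq]
    simp
  simp [this]

lemma lapl_hasCompactSupport {N : ℕ} {φ : Euc N → ℝ} (hc : HasCompactSupport φ) :
    HasCompactSupport (lapl φ) :=
  HasCompactSupport.intro hc (fun x hx => lapl_support x hx)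

lemma green {N : ℕ} {V φ : Euc N → ℝ} (hV : ContDiff ℝ 2 V) (hφ : ContDiff ℝ 2 φ)
    (hc : HasCompactSupport φ) :
    ∫ x, (V x * lapl φ x - lapl V x * φ x) = 0 := by
  rw [integral_sub, sub_eq_zero]
  · unfold lapl
    simp_rw [Finset.mul_sum, Finset.sum_mul, fd2_eq hV, fd2_eq hφ]
    rw [integral_finsetSum, integral_finsetSum]
    · refine Finset.sum_congr rfl fun i _ => ?_
      set e : Euc N := EuclideanSpace.single i (1 : ℝ)
      rw [ibp_dir (hV.of_le (by norm_num)) (fd_apply_contDiff hφ e) (hc.fderiv_apply ℝ e) e,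
        ibp_dir (fd_apply_contDiff hV e) (hφ.of_le (by norm_num)) hc e, neg_neg]
    · intro i _
      refine Continuous.integrable_of_hasCompactSupport ?_ hc.mul_left
      exact (((fd_apply_contDiff hV _).continuous_fderiv (by norm_num)).clm_apply continuous_const).mul hφ.continuous
    · intro i _
      refine Continuous.integrable_of_hasCompactSupport ?_ ((hc.fderiv_apply ℝ _).fderiv_apply ℝ _).mul_left
      exact hV.continuous.mul (((fd_apply_contDiff hφ _).continuous_fderiv (by norm_num)).clm_apply continuous_const)
  · exact (hV.continuous.mul (lapl_continuous hφ)).integrable_of_hasCompactSupport (lapl_hasCompactSupport hc).mul_left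
  · exact ((lapl_continuous hV).mul hφ.continuous).integrable_of_hasCompactSupport hc.mul_left

lemma hasFDerivAt_nrm {N : ℕ} (x : Euc N) (hx : x ≠ 0) :
    HasFDerivAt (fun y : Euc N => ‖y‖) (‖x‖⁻¹ • innerSL ℝ x) x := by
  have h := (hasStrictFDerivAt_norm_sq x).hasFDerivAt.sqrt (by simpa using hx)
  simp only [Real.sqrt_sq (norm_nonneg _)] at h
  refine h.congr_fderiv ?_
  ext y
  simp
  ring

lemma radial_contDiff {N : ℕ} (v : ℝ → ℝ) (hv : ContDiff ℝ 2 v) (ε : ℝ) (hε : 0 < ε)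
    (h0 : ∀ r, r < ε → v r = 0) : ContDiff ℝ 2 (fun x : Euc N => v ‖x‖) := by
  rw [contDiff_iff_contDiffAt]
  intro x
  by_cases hx : x = 0
  · have : (fun x : Euc N => v ‖x‖) =ᶠ[nhds x] fun _ => 0 := by
      have : ∀ᶠ y : Euc N in nhds x, ‖y‖ < ε := by
        apply (continuous_norm.tendsto x).eventually_lt_const
        simpa [hx]
      filter_upwards [this] with y hy using h0 _ hy
    exact contDiffAt_const.congr_of_eventuallyEq this
  · exact hv.contDiffAt.comp x (contDiffAt_norm ℝ hx)

lemma lapl_radial {N : ℕ} (v p : ℝ → ℝ) (q : ℝ)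
    (hC : ContDiff ℝ 2 (fun x : Euc N => v ‖x‖))
    (hv : ∀ r, 0 < r → HasDerivAt v (p r) r) (x : Euc N) (hx : x ≠ 0)
    (hp : HasDerivAt p q ‖x‖) :
    lapl (fun x : Euc N => v ‖x‖) x = q + (N - 1) / ‖x‖ * p ‖x‖ := by
  have hr : 0 < ‖x‖ := norm_pos_iff.mpr hx
  have h1 : ∀ y : Euc N, y ≠ 0 → HasFDerivAt (fun x : Euc N => v ‖x‖) (p ‖y‖ • (‖y‖⁻¹ • innerSL ℝ y)) y :=
    fun y hy => (hv _ (norm_pos_iff.mpr hy)).comp_hasFDerivAt y (hasFDerivAt_nrm y hy)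
  have h2 : ∀ i : Fin N, fderiv ℝ (fderiv ℝ (fun x : Euc N => v ‖x‖)) x (EuclideanSpace.single i (1 : ℝ))
      (EuclideanSpace.single i (1 : ℝ)) = (q / ‖x‖ - p ‖x‖ / ‖x‖ ^ 2) * ‖x‖⁻¹ * (x i) ^ 2 + p ‖x‖ / ‖x‖ := by
    intro i
    rw [fd2_eq hC]
    have he : (fun y => fderiv ℝ (fun x : Euc N => v ‖x‖) y (EuclideanSpace.single i (1 : ℝ)))
        =ᶠ[nhds x] fun y => (p ‖y‖ / ‖y‖) * y i := by
      filter_upwards [isOpen_ne.mem_nhds hx] with y hy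
      rw [(h1 y hy).fderiv]
      simp [EuclideanSpace.inner_single_right]
      ring
    rw [he.fderiv_eq]
    have h3 : HasDerivAt (fun r => p r / r) ((q * ‖x‖ - p ‖x‖ * 1) / ‖x‖ ^ 2) ‖x‖ :=
      hp.div (hasDerivAt_id _) hr.ne'
    have h4 : HasFDerivAt (fun y : Euc N => p ‖y‖ / ‖y‖) _ x := h3.comp_hasFDerivAt x (hasFDerivAt_nrm x hx)
    have h5 : HasFDerivAt (fun y : Euc N => y i) (EuclideanSpace.proj (𝕜 := ℝ) i) x :=
      (EuclideanSpace.proj (𝕜 := ℝ) i : Euc N →L[ℝ] ℝ).hasFDerivAt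
    have h6 : HasFDerivAt (fun y : Euc N => p ‖y‖ / ‖y‖ * y i) _ x := h4.mul h5
    rw [h6.fderiv]
    simp [EuclideanSpace.inner_single_right]
    field_simp
    ring
  unfold lapl
  simp_rw [h2]
  rw [Finset.sum_add_distrib, ← Finset.mul_sum, ← EuclideanSpace.real_norm_sq_eq]
  simp
  field_simp
  ring

lemma pohozaev_mono (m : ℕ) (α : ℝ) (hα0 : 0 < α) (hα2 : α * m < 4)
    (u p : ℝ → ℝ) (hu : ∀ r, 0 < r → HasDerivAt u (p r) r)
    (hp : ∀ r, 0 < r → HasDerivAt p (-((m + 1) / r * p r) - |u r| ^ α * u r) r) :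
    MonotoneOn (fun r : ℝ => r ^ (m + 2) * (p r ^ 2 / 2 + |u r| ^ (α + 2) / (α + 2))
      + m / 2 * r ^ (m + 1) * (u r * p r)) (Set.Ioi 0) := by
  have hd : ∀ r : ℝ, 0 < r → HasDerivAt (fun r : ℝ => r ^ (m + 2) * (p r ^ 2 / 2 + |u r| ^ (α + 2) / (α + 2))
      + m / 2 * r ^ (m + 1) * (u r * p r))
      (r ^ (m + 1) * |u r| ^ (α + 2) * ((m + 2) / (α + 2) - m / 2)) r := by
    intro r hr
    have h1 : HasDerivAt (fun r => |u r| ^ (α + 2)) ((α + 2) * |u r| ^ (α + 2 - 2) * u r * p r) r :=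
      (hasDerivAt_abs_rpow (u r) (p := α + 2) (by linarith)).comp r (hu r hr)
    have h2 := (((hasDerivAt_pow (m + 2) r).mul ((((hp r hr).pow 2).div_const 2).add (h1.div_const (α + 2)))).add
      (((hasDerivAt_pow (m + 1) r).const_mul ((m : ℝ) / 2)).mul ((hu r hr).mul (hp r hr))))
    refine HasDerivAt.congr_deriv (HasDerivAt.congr_of_eventuallyEq h2 ?_) ?_
    · exact Filter.Eventually.of_forall fun x => by simp
    · have e : |u r| ^ (α + 2) = |u r| ^ α * u r ^ 2 := by
        rw [Real.rpow_add' (abs_nonneg _) (by linarith)]; norm_num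
      have e2 : α + 2 - 2 = α := by ring
      have e3 : α + 2 ≠ 0 := by linarith
      have e4 : m + 2 - 1 = m + 1 := by omega
      simp only [Pi.pow_apply, Pi.add_apply, Pi.mul_apply, e, e2, e4, Nat.add_sub_cancel]
      push_cast
      field_simp
      ring
  apply monotoneOn_of_deriv_nonneg (convex_Ioi 0)
  · exact fun r hr => (hd r hr).continuousAt.continuousWithinAt
  · exact fun r hr => (hd r (by simpa using hr)).differentiableAt.differentiableWithinAt
  · intro r hr
    have hr : 0 < r := by simpa using hr
    rw [(hd r hr).deriv]
    have : 0 ≤ (m + 2) / (α + 2) - (m : ℝ) / 2 := by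
      rw [sub_nonneg, div_le_div_iff₀ (by norm_num) (by linarith)]
      nlinarith
    positivity

set_option maxHeartbeats 1000000 in
lemma ode_bound (m : ℕ) (α : ℝ) (hα0 : 0 < α) (hα2 : α * m < 4)
    (u p : ℝ → ℝ) (hu : ∀ r, 0 < r → HasDerivAt u (p r) r)
    (hp : ∀ r, 0 < r → HasDerivAt p (-((m + 1) / r * p r) - |u r| ^ α * u r) r)
    (R : ℝ) (hR : 0 < R) :
    ∃ C : ℝ, 0 ≤ C ∧ ∀ r, 0 < r → r ≤ R → |u r| * r ^ (2 / α) ≤ C ∧ |p r| * r ^ (2 / α + 1) ≤ C := by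
  have hmono := pohozaev_mono m α hα0 hα2 u p hu hp
  set A := R ^ (m + 2) * (p R ^ 2 / 2 + |u R| ^ (α + 2) / (α + 2))
      + m / 2 * R ^ (m + 1) * (u R * p R) with hA
  set a := 2 / α with ha
  have hma : (m : ℝ) ≤ 2 * a := by
    rw [ha]; rw [← mul_div_assoc, le_div_iff₀ hα0]; linarith
  set B := |A| * R ^ (2 * a - m) with hB
  have hB0 : 0 ≤ B := by positivity
  set Y := max 1 (((α + 2) * (B + m ^ 2 / 4)) ^ (1 / α)) with hY
  have hY1 : 1 ≤ Y := le_max_left _ _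
  refine ⟨max Y (4 * B + m ^ 2 * Y ^ 2 + 1), le_max_of_le_left (by linarith), ?_⟩
  intro r hr hrR
  have h1 : r ^ (m + 2) * (p r ^ 2 / 2 + |u r| ^ (α + 2) / (α + 2))
      + m / 2 * r ^ (m + 1) * (u r * p r) ≤ A := hmono hr hR hrR
  set s := r ^ a with hs
  have hs0 : 0 < s := Real.rpow_pos_of_pos hr _
  have hsr : r ^ (a + 1) = s * r := by rw [Real.rpow_add hr, Real.rpow_one]
  rw [hsr]
  set y := |u r| * s with hy
  have hy0 : 0 ≤ y := by positivity
  set q := |p r| * (s * r) with hq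
  have hq0 : 0 ≤ q := by positivity
  have hF : y ^ (α + 2) = |u r| ^ (α + 2) * (s ^ 2 * r ^ 2) := by
    rw [hy, Real.mul_rpow (abs_nonneg _) hs0.le]
    congr 1
    rw [Real.rpow_add hs0, hs, ← Real.rpow_mul hr.le]
    rw [ha, div_mul_cancel₀ _ hα0.ne']
    norm_cast
    ring
  have hr2 : r ^ (2 * a - m) * r ^ m = s ^ 2 := by
    rw [hs, ← Real.rpow_natCast r m, ← Real.rpow_add hr, ← Real.rpow_natCast (r ^ a), ← Real.rpow_mul hr.le]
    congr 1; push_cast; ring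
  have hAB : A * r ^ (2 * a - m) ≤ B := by
    calc A * r ^ (2 * a - m) ≤ |A| * r ^ (2 * a - m) := by gcongr; exact le_abs_self A
      _ ≤ B := by rw [hB]; gcongr
  have key : q ^ 2 / 2 + y ^ (α + 2) / (α + 2) + m / 2 * (u r * p r) * (s ^ 2 * r) ≤ B := by
    refine le_trans ?_ hAB
    have h2 := mul_le_mul_of_nonneg_right h1 (Real.rpow_nonneg hr.le (2 * a - m))
    refine le_trans (le_of_eq ?_) h2
    rw [hF, hq, mul_pow, sq_abs, mul_pow, ← hr2]
    ring
  have hup : -(y * q) ≤ (u r * p r) * (s ^ 2 * r) := by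
    have : -(|u r| * |p r|) ≤ u r * p r := by rw [← abs_mul]; exact neg_abs_le _
    calc -(y * q) = -(|u r| * |p r|) * (s ^ 2 * r) := by rw [hy, hq]; ring
      _ ≤ _ := by gcongr
  have key2 : q ^ 2 / 4 + y ^ (α + 2) / (α + 2) ≤ B + m ^ 2 / 4 * y ^ 2 := by
    have : (m : ℝ) / 2 * (-(y * q)) ≤ m / 2 * ((u r * p r) * (s ^ 2 * r)) := by gcongr
    nlinarith [sq_nonneg (q - m * y)]
  have hyY : y ≤ Y := by
    by_contra hcon
    push Not at hcon
    have hy1 : 1 < y := by linarith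
    have h3 : y ^ (α + 2) ≤ (α + 2) * (B + m ^ 2 / 4 * y ^ 2) := by
      have : 0 ≤ q ^ 2 / 4 := by positivity
      have h : y ^ (α + 2) / (α + 2) ≤ B + m ^ 2 / 4 * y ^ 2 := by linarith
      rw [div_le_iff₀ (by linarith)] at h
      linarith
    have h4 : y ^ (α + 2) = y ^ α * y ^ 2 := by
      rw [Real.rpow_add (by linarith)]; norm_cast
    have h5 : y ^ α ≤ (α + 2) * (B + m ^ 2 / 4) := by
      have hy2 : 0 < y ^ 2 := by positivity
      refine le_of_mul_le_mul_right ?_ hy2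
      rw [← h4]
      refine h3.trans ?_
      have h7 : B ≤ B * y ^ 2 := le_mul_of_one_le_right hB0 (one_le_pow₀ hy1.le)
      have h8 : 0 < α + 2 := by linarith
      rw [mul_assoc]
      gcongr
      linarith
    have h6 : y ≤ ((α + 2) * (B + m ^ 2 / 4)) ^ (1 / α) := by
      have := Real.rpow_le_rpow (by positivity) h5 (by positivity : 0 ≤ 1 / α)
      rwa [← Real.rpow_mul hy0, mul_one_div_cancel hα0.ne', Real.rpow_one] at this
    exact absurd (h6.trans (le_max_right _ _)) (not_le.mpr hcon)
  refine ⟨le_max_of_le_left hyY, le_max_of_le_right ?_⟩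
  have hF0 : 0 ≤ y ^ (α + 2) / (α + 2) := by positivity
  have hq2 : q ^ 2 ≤ 4 * B + m ^ 2 * Y ^ 2 := by
    have : (m : ℝ) ^ 2 * y ^ 2 ≤ m ^ 2 * Y ^ 2 := by gcongr
    linarith
  nlinarith [sq_nonneg (q - 1)]

lemma rpow_norm_integrableOn (N : ℕ) (hN : 1 ≤ N) (s : ℝ) (hs : s < N) (R : ℝ) :
    IntegrableOn (fun x : Euc N => ‖x‖ ^ (-s)) (Metric.ball 0 R) := by
  have : Nonempty (Fin N) := ⟨⟨0, hN⟩⟩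
  rw [integrableOn_fun_norm_addHaar volume (f := fun r : ℝ => r ^ (-s))]
  rcases le_or_gt R 0 with hR | hR
  · simp [Set.Ioo_eq_empty (not_lt.mpr hR)]
  have h : IntegrableOn (fun y : ℝ => y ^ ((N : ℝ) - 1 - s)) (Set.Ioo 0 R) := by
    rw [intervalIntegral.integrableOn_Ioo_rpow_iff hR]
    linarith
  refine h.congr_fun ?_ measurableSet_Ioo
  intro y hy
  have hy0 : 0 < y := hy.1
  simp only [finrank_euclideanSpace, Fintype.card_fin, smul_eq_mul]
  rw [← Real.rpow_natCast, ← Real.rpow_add hy0, Nat.cast_sub hN]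
  congr 1
  push_cast; ring

lemma exists_cutoff : ∃ (χ χ' χ'' : ℝ → ℝ) (K : ℝ), 0 ≤ K ∧ ContDiff ℝ 2 χ ∧
    (∀ t, HasDerivAt χ (χ' t) t) ∧ (∀ t, HasDerivAt χ' (χ'' t) t) ∧
    (∀ t, t ≤ 1 → χ t = 0) ∧ (∀ t, 2 < t → χ t = 1 ∧ χ' t = 0 ∧ χ'' t = 0) ∧
    (∀ t, |χ t| ≤ K ∧ |t * χ' t| ≤ K ∧ |t ^ 2 * χ'' t| ≤ K) := by
  set χ : ℝ → ℝ := fun t => Real.smoothTransition (t - 1) with hχ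
  have hC : ContDiff ℝ 2 χ := (Real.smoothTransition.contDiff (n := 2)).comp (contDiff_id.sub contDiff_const)
  have h0 : ∀ t, t ≤ 1 → χ t = 0 := fun t ht => Real.smoothTransition.zero_of_nonpos (by linarith)
  have h1 : ∀ t, 2 < t → χ t = 1 := fun t ht => Real.smoothTransition.one_of_one_le (by linarith)
  have hC1 : ContDiff ℝ 1 (deriv χ) := (contDiff_succ_iff_deriv (n := 1).mp (by simpa [one_add_one_eq_two] using hC)).2.2
  have hC2 : Continuous (deriv (deriv χ)) := hC1.continuous_deriv (by norm_num)
  have e1 : ∀ t, 2 < t → deriv χ t = 0 := by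
    intro t ht
    have : χ =ᶠ[nhds t] fun _ => 1 := by
      filter_upwards [Ioi_mem_nhds ht] with s hs using h1 s hs
    rw [this.deriv_eq]; simp
  have e2 : ∀ t, t < 1 → deriv χ t = 0 := by
    intro t ht
    have : χ =ᶠ[nhds t] fun _ => 0 := by
      filter_upwards [Iio_mem_nhds ht] with s hs using h0 s (le_of_lt hs)
    rw [this.deriv_eq]; simp
  have f1 : ∀ t, 2 < t → deriv (deriv χ) t = 0 := by
    intro t ht
    have : deriv χ =ᶠ[nhds t] fun _ => 0 := by
      filter_upwards [Ioi_mem_nhds ht] with s hs using e1 s hs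
    rw [this.deriv_eq]; simp
  have f2 : ∀ t, t < 1 → deriv (deriv χ) t = 0 := by
    intro t ht
    have : deriv χ =ᶠ[nhds t] fun _ => 0 := by
      filter_upwards [Iio_mem_nhds ht] with s hs using e2 s hs
    rw [this.deriv_eq]; simp
  obtain ⟨K1, hK1⟩ := isCompact_Icc.exists_bound_of_continuousOn (s := Set.Icc (1 : ℝ) 2)
    (f := fun t => t * deriv χ t) (continuous_id.mul hC1.continuous).continuousOn
  obtain ⟨K2, hK2⟩ := isCompact_Icc.exists_bound_of_continuousOn (s := Set.Icc (1 : ℝ) 2)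
    (f := fun t => t ^ 2 * deriv (deriv χ) t) ((continuous_pow 2).mul hC2).continuousOn
  refine ⟨χ, deriv χ, deriv (deriv χ), max 1 (max K1 K2), by positivity, hC,
    fun t => (hC.differentiable (by norm_num) t).hasDerivAt,
    fun t => (hC1.differentiable (by norm_num) t).hasDerivAt, h0,
    fun t ht => ⟨h1 t ht, e1 t ht, f1 t ht⟩, fun t => ⟨?_, ?_, ?_⟩⟩
  · refine le_max_of_le_left ?_
    rw [abs_of_nonneg (Real.smoothTransition.nonneg _)]
    exact Real.smoothTransition.le_one _
  · by_cases ht : t ∈ Set.Icc (1 : ℝ) 2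
    · exact le_max_of_le_right (le_max_of_le_left (hK1 t ht))
    · have : deriv χ t = 0 := by
        by_cases h : t < 1
        · exact e2 t h
        · exact e1 t (by by_contra h'; exact ht ⟨not_lt.mp h, not_lt.mp h'⟩)
      rw [this]; simp
  · by_cases ht : t ∈ Set.Icc (1 : ℝ) 2
    · exact le_max_of_le_right (le_max_of_le_right (hK2 t ht))
    · have : deriv (deriv χ) t = 0 := by
        by_cases h : t < 1
        · exact f2 t h
        · exact f1 t (by by_contra h'; exact ht ⟨not_lt.mp h, not_lt.mp h'⟩)
      rw [this]; simp

lemma scalar_bounds (α : ℝ) (hα0 : 0 < α) (r R C u p : ℝ) (hr : 0 < r) (hrR : r ≤ R) (hC : 0 ≤ C)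
    (h1 : |u| * r ^ (2 / α) ≤ C) (h2 : |p| * r ^ (2 / α + 1) ≤ C) :
    |u| ≤ R ^ 2 * C * r ^ (-(2 / α + 2)) ∧ |u| / r ^ 2 ≤ C * r ^ (-(2 / α + 2)) ∧
    |p| / r ≤ C * r ^ (-(2 / α + 2)) ∧ |u| ^ (α + 1) ≤ C ^ (α + 1) * r ^ (-(2 / α + 2)) := by
  have hs0 : 0 < r ^ (2 / α) := Real.rpow_pos_of_pos hr _
  have e : r ^ (-(2 / α + 2)) = (r ^ (2 / α) * r ^ 2)⁻¹ := by
    rw [Real.rpow_neg hr.le, Real.rpow_add hr]; norm_cast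
  have e4 : (r ^ (2 / α)) ^ (α + 1) = r ^ (2 / α) * r ^ 2 := by
    rw [← Real.rpow_mul hr.le, mul_add, div_mul_cancel₀ _ hα0.ne', mul_one, Real.rpow_add hr, mul_comm]
    norm_cast
  rw [Real.rpow_add hr, Real.rpow_one] at h2
  rw [e]
  set s := r ^ (2 / α)
  have hu : |u| / r ^ 2 ≤ C * (s * r ^ 2)⁻¹ := by
    rw [← div_eq_mul_inv, div_le_div_iff₀ (by positivity) (by positivity)]
    calc _ = (|u| * s) * r ^ 2 := by ring
      _ ≤ _ := by gcongr
  refine ⟨?_, hu, ?_, ?_⟩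
  · rw [div_le_iff₀ (by positivity)] at hu
    calc |u| ≤ C * (s * r ^ 2)⁻¹ * r ^ 2 := hu
      _ ≤ C * (s * r ^ 2)⁻¹ * R ^ 2 := by gcongr
      _ = _ := by ring
  · rw [← div_eq_mul_inv, div_le_div_iff₀ (by positivity) (by positivity)]
    calc _ = (|p| * (s * r)) * r := by ring
      _ ≤ _ := by gcongr
  · rw [← div_eq_mul_inv, le_div_iff₀ (by positivity), ← e4, ← Real.mul_rpow (abs_nonneg _) hs0.le]
    exact Real.rpow_le_rpow (by positivity) h1 (by linarith)

lemma cut_contDiff (χ u : ℝ → ℝ) (hχ : ContDiff ℝ 2 χ) (huC2 : ContDiffOn ℝ 2 u (Set.Ioi 0))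
    (h0 : ∀ t, t ≤ 1 → χ t = 0) (ε : ℝ) (hε : 0 < ε) :
    ContDiff ℝ 2 (fun r => χ (r / ε) * u r) := by
  rw [contDiff_iff_contDiffAt]
  intro r
  by_cases hr : r < ε
  · have : (fun r => χ (r / ε) * u r) =ᶠ[nhds r] fun _ => 0 := by
      filter_upwards [Iio_mem_nhds hr] with s hs
      rw [h0 _ ((div_le_one hε).mpr (le_of_lt hs)), zero_mul]
    exact contDiffAt_const.congr_of_eventuallyEq this
  · have hr : 0 < r := by linarith
    exact (hχ.comp (contDiff_id.div_const ε)).contDiffAt.mul (huC2.contDiffAt (Ioi_mem_nhds hr))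

/-- pointwise estimate of the cut-off integrand -/
lemma integrand_bound (n α R C K M T u p r ε c0 c1 c2 f Lf : ℝ) (hn : 0 ≤ n) (hr : 0 < r) (hε : 0 < ε)
    (hT : 0 ≤ T) (hC : 0 ≤ C) (hK : 0 ≤ K) (hα : 0 < α)
    (h0 : |c0| ≤ K) (h1 : |(r / ε) * c1| ≤ K) (h2 : |(r / ε) ^ 2 * c2| ≤ K)
    (hf : |f| ≤ M) (hLf : |Lf| ≤ M)
    (b1 : |u| ≤ R ^ 2 * C * T) (b2 : |u| / r ^ 2 ≤ C * T) (b3 : |p| / r ≤ C * T)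
    (b4 : |u| ^ (α + 1) ≤ C ^ (α + 1) * T) :
    |c0 * u * Lf - (c0 * (-(|u| ^ α * u)) + c2 / ε ^ 2 * u + 2 * (c1 / ε) * p + n / r * (c1 / ε) * u) * f|
      ≤ (K * (R ^ 2 * C) * M + (K * C ^ (α + 1) + K * C + 2 * (K * C) + n * (K * C)) * M) * T := by
  have hM : 0 ≤ M := (abs_nonneg _).trans hf
  have hCa : 0 ≤ C ^ (α + 1) := Real.rpow_nonneg hC _
  have t0 : |c0 * u * Lf| ≤ K * (R ^ 2 * C * T) * M := by
    rw [abs_mul, abs_mul]; gcongr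
  have t1 : |c0 * (-(|u| ^ α * u))| ≤ K * (C ^ (α + 1) * T) := by
    rw [abs_mul, abs_neg, abs_mul, abs_of_nonneg (Real.rpow_nonneg (abs_nonneg u) α)]
    have : |u| ^ α * |u| = |u| ^ (α + 1) := by
      rw [Real.rpow_add' (abs_nonneg _) (by linarith), Real.rpow_one]
    rw [this]; gcongr
  have t2 : |c2 / ε ^ 2 * u| ≤ K * (C * T) := by
    have : c2 / ε ^ 2 * u = ((r / ε) ^ 2 * c2) * (u / r ^ 2) := by field_simp
    rw [this, abs_mul, abs_div u, abs_of_nonneg (sq_nonneg r)]; gcongr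
  have t3 : |2 * (c1 / ε) * p| ≤ 2 * (K * (C * T)) := by
    have : 2 * (c1 / ε) * p = 2 * (((r / ε) * c1) * (p / r)) := by field_simp
    rw [this, abs_mul, abs_mul (r / ε * c1), abs_div p, abs_of_pos hr, abs_two]; gcongr
  have t4 : |n / r * (c1 / ε) * u| ≤ n * (K * (C * T)) := by
    have : n / r * (c1 / ε) * u = n * (((r / ε) * c1) * (u / r ^ 2)) := by field_simp
    rw [this, abs_mul, abs_mul (r / ε * c1), abs_div u, abs_of_nonneg (sq_nonneg r), abs_of_nonneg hn]; gcongr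
  have ts : |c0 * (-(|u| ^ α * u)) + c2 / ε ^ 2 * u + 2 * (c1 / ε) * p + n / r * (c1 / ε) * u|
      ≤ K * (C ^ (α + 1) * T) + K * (C * T) + 2 * (K * (C * T)) + n * (K * (C * T)) := by
    refine (abs_add_le _ _).trans (add_le_add ((abs_add_le _ _).trans (add_le_add ((abs_add_le _ _).trans
      (add_le_add t1 t2)) t3)) t4)
  refine (abs_sub _ _).trans ?_
  rw [abs_mul (_ + _) f]
  calc _ ≤ K * (R ^ 2 * C * T) * M +
      (K * (C ^ (α + 1) * T) + K * (C * T) + 2 * (K * (C * T)) + n * (K * (C * T))) * M := by gcongr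
    _ = _ := by ring

theorem stmt_15 (N : ℕ) (hN : 3 ≤ N) (α : ℝ)
    (hα1 : 2 / ((N : ℝ) - 2) < α) (hα2 : α < 4 / ((N : ℝ) - 2))
    (u : ℝ → ℝ) (huC2 : ContDiffOn ℝ 2 u (Set.Ioi 0))
    (hune : ∃ r : ℝ, 0 < r ∧ u r ≠ 0)
    (huode : ∀ r : ℝ, 0 < r →
      deriv (deriv u) r + (((N : ℝ) - 1) / r) * deriv u r + |u r| ^ α * u r = 0) :
    -- U ∈ L^{α+1}_loc(ℝ^N), where U(x) = u(|x|)
    (∀ R : ℝ, 0 < R →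
      IntegrableOn (fun x : Euc N => |u ‖x‖| ^ (α + 1)) (Metric.ball 0 R)) ∧
    -- U is a distributional solution of −ΔU = |U|^α U on ℝ^N
    (∀ φ : Euc N → ℝ, ContDiff ℝ (⊤ : ℕ∞) φ → HasCompactSupport φ →
      ∫ x : Euc N, (u ‖x‖ * lapl φ x + |u ‖x‖| ^ α * u ‖x‖ * φ x) = 0) := by
  have hN3 : (3 : ℝ) ≤ N := by exact_mod_cast hN
  have hN2 : 0 < (N : ℝ) - 2 := by linarith
  have hα0 : 0 < α := lt_trans (by positivity) hα1
  have hs : 2 / α + 2 < N := by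
    rw [div_lt_iff₀ hN2] at hα1
    have : 2 / α < N - 2 := by rw [div_lt_iff₀ hα0]; linarith
    linarith
  have hm : ((N - 2 : ℕ) : ℝ) = N - 2 := by rw [Nat.cast_sub (by omega)]; norm_num
  have hαm : α * ((N - 2 : ℕ) : ℝ) < 4 := by
    rw [hm]; rwa [lt_div_iff₀ hN2] at hα2
  have hu1 : ∀ r, 0 < r → HasDerivAt u (deriv u r) r := fun r hr =>
    ((huC2.contDiffAt (Ioi_mem_nhds hr)).differentiableAt (by norm_num)).hasDerivAt
  have hdC : ContDiffOn ℝ 1 (deriv u) (Set.Ioi 0) := huC2.deriv_of_isOpen isOpen_Ioi (by norm_num)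
  have hu2 : ∀ r, 0 < r → HasDerivAt (deriv u) (deriv (deriv u) r) r := fun r hr =>
    ((hdC.contDiffAt (Ioi_mem_nhds hr)).differentiableAt (by norm_num)).hasDerivAt
  have hbd := ode_bound (N - 2) α hα0 hαm u (deriv u) hu1 (fun r hr => by
    refine (hu2 r hr).congr_deriv ?_
    have := huode r hr
    have e : (((N - 2 : ℕ) : ℝ) + 1) = N - 1 := by rw [hm]; ring
    rw [e]; linarith)
  have hcont : ContinuousOn (fun x : Euc N => u ‖x‖) {0}ᶜ := by
    refine huC2.continuousOn.comp continuous_norm.continuousOn ?_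
    intro x hx
    exact norm_pos_iff.mpr hx
  have : Nonempty (Fin N) := ⟨⟨0, by omega⟩⟩
  have hne : ∀ᵐ x : Euc N, x ≠ 0 := by
    simp [ae_iff]
  have hmeas : AEStronglyMeasurable (fun x : Euc N => u ‖x‖) volume := by
    have h := hcont.aestronglyMeasurable (μ := (volume : Measure (Euc N))) (measurableSet_singleton 0).compl
    rwa [restrict_compl_singleton] at h
  have hint : ∀ R : ℝ, IntegrableOn (fun x : Euc N => ‖x‖ ^ (-(2 / α + 2))) (Metric.ball 0 R) :=
    fun R => rpow_norm_integrableOn N (by omega) _ hs R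
  refine ⟨?_, ?_⟩
  · intro R hR
    obtain ⟨C, hC0, hC⟩ := hbd R hR
    refine Integrable.mono' ((hint R).const_mul (C ^ (α + 1))) ?_ ?_
    · have : AEStronglyMeasurable (fun x : Euc N => |u ‖x‖| ^ (α + 1)) volume :=
        (Real.continuous_rpow_const (by linarith : 0 ≤ α + 1)).comp_aestronglyMeasurable
          (continuous_abs.comp_aestronglyMeasurable hmeas)
      exact this.restrict
    · filter_upwards [ae_restrict_of_ae hne, ae_restrict_mem measurableSet_ball] with x hx hxR
      have hr : 0 < ‖x‖ := norm_pos_iff.mpr hx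
      have hrR : ‖x‖ ≤ R := (mem_ball_zero_iff.mp hxR).le
      obtain ⟨c1, c2⟩ := hC _ hr hrR
      rw [Real.norm_of_nonneg (by positivity)]
      exact (scalar_bounds α hα0 _ R C _ _ hr hrR hC0 c1 c2).2.2.2
  intro φ hφ hc
  have hφ2 : ContDiff ℝ 2 φ := by exact_mod_cast contDiff_infty.mp hφ 2
  obtain ⟨R0, hR0⟩ := hc.isBounded.subset_ball 0
  set R := max R0 1 with hRdef
  have hR : 0 < R := by positivity
  have hsub : tsupport φ ⊆ Metric.ball 0 R := hR0.trans (Metric.ball_subset_ball (le_max_left _ _))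
  obtain ⟨M1, hM1⟩ := hφ2.continuous.bounded_above_of_compact_support hc
  obtain ⟨M2, hM2⟩ := (lapl_continuous hφ2).bounded_above_of_compact_support (lapl_hasCompactSupport hc)
  set M := max M1 M2
  obtain ⟨C, hC0, hC⟩ := hbd R hR
  obtain ⟨χ, χ', χ'', K, hK, hχ, hd1, hd2, h0, h1, hbK⟩ := exists_cutoff
  set ε : ℕ → ℝ := fun n => 1 / ((n : ℝ) + 1) with hεdef
  have hε : ∀ n, 0 < ε n := fun n => by simp only [hεdef]; positivity
  have hεlim : Filter.Tendsto ε Filter.atTop (nhds 0) := tendsto_one_div_add_atTop_nhds_zero_nat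
  set V : ℕ → Euc N → ℝ := fun n x => χ (‖x‖ / ε n) * u ‖x‖ with hVdef
  have hV : ∀ n, ContDiff ℝ 2 (V n) := fun n =>
    radial_contDiff (fun r => χ (r / ε n) * u r) (cut_contDiff χ u hχ huC2 h0 (ε n) (hε n)) (ε n) (hε n)
      (fun r hr => by rw [h0 _ ((div_le_one (hε n)).mpr hr.le), zero_mul])
  have hVl : ∀ n (x : Euc N), x ≠ 0 → lapl (V n) x =
      χ (‖x‖ / ε n) * (-(|u ‖x‖| ^ α * u ‖x‖)) + χ'' (‖x‖ / ε n) / ε n ^ 2 * u ‖x‖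
        + 2 * (χ' (‖x‖ / ε n) / ε n) * deriv u ‖x‖
        + ((N : ℝ) - 1) / ‖x‖ * (χ' (‖x‖ / ε n) / ε n) * u ‖x‖ := by
    intro n x hx
    have hr : 0 < ‖x‖ := norm_pos_iff.mpr hx
    have d1 : ∀ r, HasDerivAt (fun r => χ (r / ε n)) (χ' (r / ε n) * (1 / ε n)) r := fun r =>
      (hd1 (r / ε n)).comp r ((hasDerivAt_id r).div_const (ε n))
    have d2 : ∀ r, HasDerivAt (fun r => χ' (r / ε n) * (1 / ε n)) (χ'' (r / ε n) * (1 / ε n) * (1 / ε n)) r := fun r =>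
      ((hd2 (r / ε n)).comp r ((hasDerivAt_id r).div_const (ε n))).mul_const _
    have L := lapl_radial (N := N) (fun r => χ (r / ε n) * u r)
      (fun r => χ' (r / ε n) * (1 / ε n) * u r + χ (r / ε n) * deriv u r) _ (hV n)
      (fun r hr => (d1 r).mul (hu1 r hr)) x hx
      (((d2 ‖x‖).mul (hu1 _ hr)).add ((d1 ‖x‖).mul (hu2 _ hr)))
    have L' : lapl (V n) x = _ := L
    rw [L']
    have ho := huode _ hr
    have ho' : -(|u ‖x‖| ^ α * u ‖x‖) = deriv (deriv u) ‖x‖ + (((N : ℝ) - 1) / ‖x‖) * deriv u ‖x‖ := by linarith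
    rw [ho']
    ring
  set D := (K * (R ^ 2 * C) * M + (K * C ^ (α + 1) + K * C + 2 * (K * C) + ((N : ℝ) - 1) * (K * C)) * M) with hD
  have hlim := tendsto_integral_of_dominated_convergence (μ := (volume : Measure (Euc N)))
    (F := fun n x => V n x * lapl φ x - lapl (V n) x * φ x)
    (f := fun x => u ‖x‖ * lapl φ x + |u ‖x‖| ^ α * u ‖x‖ * φ x)
    ((Metric.ball (0 : Euc N) R).indicator (fun x => D * ‖x‖ ^ (-(2 / α + 2)))) ?_ ?_ ?_ ?_
  · have hz : ∀ n, ∫ x, (V n x * lapl φ x - lapl (V n) x * φ x) = 0 := fun n => green (hV n) hφ2 hc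
    simp only [hz] at hlim
    exact (tendsto_nhds_unique hlim tendsto_const_nhds)
  · intro n
    exact (((hV n).continuous.mul (lapl_continuous hφ2)).sub
      ((lapl_continuous (hV n)).mul hφ2.continuous)).aestronglyMeasurable
  · exact IntegrableOn.integrable_indicator ((hint R).const_mul D) measurableSet_ball
  · intro n
    filter_upwards [hne] with x hx
    by_cases hxR : x ∈ Metric.ball (0 : Euc N) R
    · rw [Set.indicator_of_mem hxR, hVl n x hx]
      have hr : 0 < ‖x‖ := norm_pos_iff.mpr hx
      have hrR : ‖x‖ ≤ R := (mem_ball_zero_iff.mp hxR).le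
      obtain ⟨c1, c2⟩ := hC _ hr hrR
      obtain ⟨b1, b2, b3, b4⟩ := scalar_bounds α hα0 _ R C _ _ hr hrR hC0 c1 c2
      obtain ⟨k0, k1, k2⟩ := hbK (‖x‖ / ε n)
      exact integrand_bound ((N : ℝ) - 1) α R C K M _ (u ‖x‖) (deriv u ‖x‖) ‖x‖ (ε n) _ _ _ (φ x) (lapl φ x)
        (by linarith) hr (hε n) (by positivity) hC0 hK hα0 k0 k1 k2
        ((hM1 x).trans (le_max_left _ _)) ((hM2 x).trans (le_max_right _ _)) b1 b2 b3 b4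
    · have hxs : x ∉ tsupport φ := fun h => hxR (hsub h)
      rw [Set.indicator_of_notMem hxR, lapl_support x hxs, image_eq_zero_of_notMem_tsupport hxs]
      simp
  · filter_upwards [hne] with x hx
    have hr : 0 < ‖x‖ := norm_pos_iff.mpr hx
    apply tendsto_const_nhds.congr'
    have : ∀ᶠ n in Filter.atTop, ε n < ‖x‖ / 2 := hεlim.eventually_lt_const (by positivity)
    filter_upwards [this] with n hn
    have ht : 2 < ‖x‖ / ε n := by rw [lt_div_iff₀ (hε n)]; linarith
    obtain ⟨g0, g1, g2⟩ := h1 _ ht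
    rw [hVl n x hx]
    simp only [hVdef, g0, g1, g2]
    ring

end
end
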